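/- arXiv:1808.06513 — 5 statements merged into one kernel-verified Lean document; each statement's English description precedes it below -/
import Mathlib

section
/- Let E ⊆ ℝ⁴ = ℍ×ℝ be precisely monotone with E ≠ ∅ and E ≠ ℝ⁴. Then the topological boundary ∂E is an affine hyperplane: there exist a nonzero ν ∈ ℝ⁴ and c ∈ ℝ with ∂E = {v ∈ ℝ⁴ : ⟨v,ν⟩ = c}. -/
/- The group `ℍ×ℝ`: `ℝ⁴` with coordinates `(x,y,u,t)` and law
`(x,y,u,t)·(x',y',u',t') = (x+x', y+y', u+u', t+t'+2(yx'−y'x))`. -/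

noncomputable section

/-- Group law of `ℍ×ℝ` on `ℝ⁴`. -/
def hmul (p q : Fin 4 → ℝ) : Fin 4 → ℝ :=
  ![p 0 + q 0, p 1 + q 1, p 2 + q 2, p 3 + q 3 + 2 * (p 1 * q 0 - q 1 * p 0)]

/-- Horizontal convexity in `ℍ×ℝ`. -/
def HRConvex (C : Set (Fin 4 → ℝ)) : Prop :=
  ∀ p ∈ C, ∀ a b c : ℝ, hmul p ![a, b, c, 0] ∈ C →
    ∀ s : ℝ, 0 ≤ s → s ≤ 1 → hmul p ![s * a, s * b, s * c, 0] ∈ C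

/-- Precise monotonicity in `ℍ×ℝ`. -/
def PreciselyMonotone (E : Set (Fin 4 → ℝ)) : Prop := HRConvex E ∧ HRConvex Eᶜ

section
set_option linter.all false
open Set Filter Topology

abbrev HH := ℝ × ℝ × ℝ
abbrev XX := ℝ × HH

/-- alignment in the Heisenberg group -/
def al (p q : HH) : Prop := q.2.2 - p.2.2 = 2 * (p.2.1 * q.1 - p.1 * q.2.1)

def HC (C : Set HH) : Prop :=
  ∀ p ∈ C, ∀ q ∈ C, al p q → ∀ s : ℝ, 0 ≤ s → s ≤ 1 → (1 - s) • p + s • q ∈ C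

def HC4 (C : Set XX) : Prop :=
  ∀ p ∈ C, ∀ q ∈ C, al p.2 q.2 → ∀ s : ℝ, 0 ≤ s → s ≤ 1 → (1 - s) • p + s • q ∈ C

theorem al_line {p q : HH} (h : al p q) (a b : ℝ) :
    al ((1 - a) • p + a • q) ((1 - b) • p + b • q) := by
  simp only [al, Prod.smul_fst, Prod.smul_snd, Prod.fst_add, Prod.snd_add, smul_eq_mul] at *
  linear_combination (b - a) * h

theorem al_symm {p q : HH} (h : al p q) : al q p := by
  simp only [al] at *
  linear_combination -h

theorem al_refl (p : HH) : al p p := by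
  simp only [al]; ring

theorem line_sub {V : Type*} [AddCommGroup V] [Module ℝ V] (p q : V) (a b c : ℝ) :
    (1 - c) • ((1 - a) • p + a • q) + c • ((1 - b) • p + b • q)
      = (1 - ((1 - c) * a + c * b)) • p + ((1 - c) * a + c * b) • q := by
  module

/-- solving for an intermediate point -/
theorem solveT (p r : HH) (h : al p r) (hne : p ≠ r) (s : ℝ) (hs : s ≠ 0) :
    ∃ m : HH → HH, ContinuousAt m r ∧ m r = (1 - s) • p + s • r ∧
      ∀ᶠ r' in 𝓝 r, al p (m r') ∧ al (m r') r' := by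
  obtain ⟨px, py, pt⟩ := p
  obtain ⟨rx, ry, rt⟩ := r
  simp only [al] at h
  set d1 := rx - px with hd1
  set d2 := ry - py with hd2
  have hd : d1 ^ 2 + d2 ^ 2 ≠ 0 := by
    intro h0
    have e1 : d1 = 0 := by nlinarith [sq_nonneg d1, sq_nonneg d2]
    have e2 : d2 = 0 := by nlinarith [sq_nonneg d1, sq_nonneg d2]
    apply hne
    have e3 : rx = px := by linarith
    have e4 : ry = py := by linarith
    subst e3 e4
    have : rt = pt := by linarith
    rw [this]
  let D : HH → ℝ := fun r' => 2 * s * (d1 * (r'.1 - px) + d2 * (r'.2.1 - py))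
  let N : HH → ℝ := fun r' => r'.2.2 - pt - 2 * s * (py * d1 - px * d2)
    - 2 * (py + s * d2) * r'.1 + 2 * (px + s * d1) * r'.2.1
  have hDc : Continuous D := by fun_prop
  have hNc : Continuous N := by fun_prop
  have hD : D (rx, ry, rt) ≠ 0 := by
    have : D (rx, ry, rt) = 2 * s * (d1 ^ 2 + d2 ^ 2) := by simp only [D]; ring
    rw [this]; positivity
  have hN : N (rx, ry, rt) = 0 := by
    simp only [N]
    rw [hd1, hd2]; linear_combination h
  let η : HH → ℝ := fun r' => N r' / D r'
  have hη : ContinuousAt η (rx, ry, rt) := hNc.continuousAt.div hDc.continuousAt hD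
  refine ⟨fun r' => (px + s * (d1 - η r' * d2), py + s * (d2 + η r' * d1),
    pt + 2 * s * (py * (d1 - η r' * d2) - px * (d2 + η r' * d1))), ?_, ?_, ?_⟩
  · fun_prop
  · have : η (rx, ry, rt) = 0 := by simp only [η, hN, zero_div]
    simp only [this]
    ext
    · simp; ring
    · simp; ring
    · simp
      rw [hd1, hd2]; linear_combination -s * h
  · filter_upwards [hDc.continuousAt.eventually_ne hD] with r' hr'
    constructor
    · simp only [al]; ring
    · have : η r' * D r' = N r' := by simp only [η]; field_simp
      simp only [al]
      simp only [D, N] at this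
      linear_combination -this

theorem solveT4 (p r : XX) (h : al p.2 r.2) (hne : p.2 ≠ r.2) (s : ℝ) (hs : s ≠ 0) :
    ∃ m : XX → XX, ContinuousAt m r ∧ m r = (1 - s) • p + s • r ∧
      ∀ᶠ r' in 𝓝 r, al p.2 (m r').2 ∧ al (m r').2 r'.2 := by
  obtain ⟨m, hm, hmr, hal⟩ := solveT p.2 r.2 h hne s hs
  refine ⟨fun r' => ((1 - s) * p.1 + s * r.1, m r'.2), ?_, ?_, ?_⟩
  · apply ContinuousAt.prodMk continuousAt_const
    exact ContinuousAt.comp (f := Prod.snd) (g := m) hm continuousAt_snd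
  · ext1
    · simp
    · simp [hmr]
  · exact (continuousAt_snd (p := r)).eventually hal

/-- interior criterion -/
theorem interior_crit (C U : Set HH) (F : HH → ℝ) (hC : HC C) (hU : IsOpen U)
    (hUc : Convex ℝ U) (hF : Continuous F) (hS : ∀ P ∈ U, F P = 0 → P ∈ C)
    (p q : HH) (hp : p ∈ C) (hpq : al p q) (hne : p ≠ q) (hq : q ∈ U) (hFq : F q < 0)
    (l : ℝ) (l0 : 0 < l) (l1 : l < 1)
    (hr : (1 - l) • p + l • q ∈ U) (hFr : 0 < F ((1 - l) • p + l • q))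
    (hm : (1 - l / 2) • p + (l / 2) • q ∈ U) (hFm : 0 < F ((1 - l / 2) • p + (l / 2) • q)) :
    (1 - l) • p + l • q ∈ interior C := by
  have rule : ∀ P Q : HH, P ∈ C → Q ∈ U → al P Q → ∀ k : ℝ, 0 ≤ k → k ≤ 1 →
      (1 - k) • P + k • Q ∈ U → 0 < F ((1 - k) • P + k • Q) → F Q < 0 →
      (1 - k) • P + k • Q ∈ C := by
    intro P Q hP hQ hal k k0 k1 hR hFR hFQ
    let f : ℝ → HH := fun τ => (1 - τ) • P + τ • Q
    have hf : Continuous f := by fun_prop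
    have : (0 : ℝ) ∈ (fun τ => F (f τ)) '' Icc k 1 := by
      apply intermediate_value_Icc' k1 (by fun_prop)
      constructor
      · simp [f]; exact hFQ.le
      · exact hFR.le
    obtain ⟨τ, ⟨hτ1, hτ2⟩, hτ⟩ := this
    have hfU : f τ ∈ U := by
      have hk1 : k < 1 := by
        rcases k1.lt_or_eq with h | h
        · exact h
        · subst h; simp at hFR; linarith
      have := hUc hR hQ (a := (1 - τ) / (1 - k)) (b := (τ - k) / (1 - k))
        (div_nonneg (by linarith) (by linarith)) (div_nonneg (by linarith) (by linarith))
        (by have : 1 - k ≠ 0 := by linarith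
            field_simp; ring)
      convert this using 1
      have h' : 1 - k ≠ 0 := by linarith
      simp only [f]
      have e : τ = (1 - τ) / (1 - k) * k + (τ - k) / (1 - k) := by field_simp; ring
      have e2 : (1 - τ) = (1 - τ) / (1 - k) * (1 - k) := by field_simp
      rw [smul_add, smul_smul, smul_smul, ← e2, add_assoc, ← add_smul, ← e]
    have hfC : f τ ∈ C := hS _ hfU hτ
    rcases eq_or_lt_of_le (k0.trans hτ1) with h0 | h0
    · have : k = 0 := by linarith
      subst this; simpa using hP
    · have := hC P hP (f τ) hfC (by simpa using al_line hal 0 τ) (k / τ) (by positivity)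
        (by rw [div_le_one h0]; exact hτ1)
      convert this using 1
      simp only [f]
      have e : k = k / τ * τ := by field_simp
      rw [smul_add, smul_smul, smul_smul, ← e, ← add_assoc, ← add_smul]
      congr 2
      linear_combination -e
  set r := (1 - l) • p + l • q with hrdef
  have halr : al p r := by simpa using al_line hpq 0 l
  have hner : p ≠ r := by
    intro h
    apply hne
    have : l • (q - p) = 0 := by
      have : l • (q - p) = r - p := by rw [hrdef]; module
      rw [this, ← h, sub_self]
    rcases smul_eq_zero.1 this with h | h
    · linarith
    · exact (sub_eq_zero.1 h).symm
  obtain ⟨m, hmc, hmr, hmal⟩ := solveT p r halr hner (1/2) (by norm_num)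
  have hm0 : m r = (1 - l / 2) • p + (l / 2) • q := by
    rw [hmr, hrdef]; module
  let Q1 : HH → HH := fun r' => (1 - 2 / l) • p + (2 / l) • m r'
  let Q2 : HH → HH := fun r' => (1 - (2 - l) / l) • m r' + ((2 - l) / l) • r'
  have hQ1c : ContinuousAt Q1 r := by fun_prop
  have hQ2c : ContinuousAt Q2 r := by fun_prop
  have l0' : l ≠ 0 := l0.ne'
  have hQ1 : Q1 r = q := by
    simp only [Q1, hm0]
    have := line_sub p q 0 (l / 2) (2 / l)
    simp only [sub_zero, one_smul, zero_smul, add_zero] at this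
    rw [this]
    have e : (1 - 2 / l) * 0 + 2 / l * (l / 2) = 1 := by field_simp; ring
    rw [e]; simp
  have hQ2 : Q2 r = q := by
    simp only [Q2, hm0]
    rw [hrdef, line_sub]
    have e : (1 - (2 - l) / l) * (l / 2) + (2 - l) / l * l = 1 := by field_simp; ring
    rw [e]; simp
  have evU : ∀ᶠ x in 𝓝 q, x ∈ U ∧ F x < 0 :=
    (hU.eventually_mem hq).and (hF.continuousAt.eventually_lt continuousAt_const hFq)
  have evM : ∀ᶠ x in 𝓝 ((1 - l / 2) • p + (l / 2) • q), x ∈ U ∧ 0 < F x :=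
    (hU.eventually_mem hm).and (continuousAt_const.eventually_lt hF.continuousAt hFm)
  have evR : ∀ᶠ x in 𝓝 r, x ∈ U ∧ 0 < F x :=
    (hU.eventually_mem hr).and (continuousAt_const.eventually_lt hF.continuousAt hFr)
  rw [mem_interior_iff_mem_nhds]
  have t1 := hQ1c.tendsto; rw [hQ1] at t1
  have t2 := hQ2c.tendsto; rw [hQ2] at t2
  have t3 := hmc.tendsto; rw [hm0] at t3
  filter_upwards [evR, t1.eventually evU, t2.eventually evU, t3.eventually evM, hmal]
    with r' hr' h1 h2 h3 h4
  have hmC : m r' ∈ C := by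
    have e : m r' = (1 - l / 2) • p + (l / 2) • Q1 r' := by
      simp only [Q1]
      rw [smul_add, smul_smul, smul_smul, ← add_assoc, ← add_smul]
      have e1 : (1 - l / 2) + l / 2 * (1 - 2 / l) = 0 := by field_simp; ring
      have e2 : l / 2 * (2 / l) = 1 := by field_simp
      rw [e1, e2]; simp
    have := rule p (Q1 r') hp h1.1 (by simpa using al_line h4.1 0 (2 / l)) (l / 2)
      (by positivity) (by linarith) (by rw [← e]; exact h3.1) (by rw [← e]; exact h3.2) h1.2
    rwa [← e] at this
  have h2l : 2 - l ≠ 0 := by linarith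
  have e : r' = (1 - l / (2 - l)) • m r' + (l / (2 - l)) • Q2 r' := by
    simp only [Q2]
    rw [smul_add, smul_smul, smul_smul, ← add_assoc, ← add_smul]
    have e1 : (1 - l / (2 - l)) + l / (2 - l) * (1 - (2 - l) / l) = 0 := by field_simp; ring
    have e2 : l / (2 - l) * ((2 - l) / l) = 1 := by field_simp
    rw [e1, e2]; simp
  have := rule (m r') (Q2 r') hmC h2.1 (by simpa using al_line h4.2 0 ((2 - l) / l)) (l / (2 - l))
      (div_nonneg l0.le (by linarith)) (by rw [div_le_one (by linarith)]; linarith)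
      (by rw [← e]; exact hr'.1) (by rw [← e]; exact hr'.2) h2.2
  rwa [← e] at this

theorem std_interior (C : Set HH) (hC : HC C) (hC' : HC Cᶜ)
    (h1 : ∀ x : ℝ, -1 ≤ x → x ≤ 1 → ((x, 0, 0) : HH) ∈ C)
    (h2 : ∀ s : ℝ, 0 ≤ s → s ≤ 1 → ((s, 1, 2 * s) : HH) ∈ C) :
    ∃ P ∈ interior C, P ∈ Icc ((-2, -2, -2) : HH) (2, 2, 2) := by
  let F : HH → ℝ := fun P => P.2.2 * (2 * P.2.1 - 1) - 2 * P.1 * P.2.1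
  have hF : Continuous F := by fun_prop
  let U : Set HH := {P | 1 / 2 < P.2.1 ∧ P.2.1 < 1 ∧ 0 < P.1 ∧ P.1 < 2 * P.2.1 - 1}
  have hU : IsOpen U := by
    have e : U = {P : HH | 1 / 2 < P.2.1} ∩ ({P : HH | P.2.1 < 1} ∩ ({P : HH | 0 < P.1} ∩
      {P : HH | P.1 < 2 * P.2.1 - 1})) := rfl
    rw [e]
    refine IsOpen.inter (isOpen_lt ?_ ?_) (IsOpen.inter (isOpen_lt ?_ ?_)
      (IsOpen.inter (isOpen_lt ?_ ?_) (isOpen_lt ?_ ?_))) <;> fun_prop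
  have hUc : Convex ℝ U := by
    rintro ⟨x, y, t⟩ ⟨a1, a2, a3, a4⟩ ⟨x', y', t'⟩ ⟨b1, b2, b3, b4⟩ a b ha hb hab
    simp only at *
    rcases ha.eq_or_lt with h | h
    · have : b = 1 := by linarith
      subst this; subst h
      refine ⟨?_, ?_, ?_, ?_⟩ <;> simp <;> linarith
    · have hb' : b = 1 - a := by linarith
      refine ⟨?_, ?_, ?_, ?_⟩ <;> simp <;> nlinarith
  have hS : ∀ P ∈ U, F P = 0 → P ∈ C := by
    rintro ⟨x, y, t⟩ ⟨a1, a2, a3, a4⟩ h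
    simp only [F] at *
    have hy : 0 < 2 * y - 1 := by linarith
    have s1 : x / (2 * y - 1) ≤ 1 := by rw [div_le_one hy]; linarith
    have s0 : 0 ≤ x / (2 * y - 1) := by positivity
    have := hC _ (h1 (-(x / (2 * y - 1))) (by linarith) (by linarith)) _
      (h2 (x / (2 * y - 1)) s0 s1) (by simp [al]) y (by linarith) (by linarith)
    convert this using 1
    have hy' := hy.ne'
    obtain ⟨s, hs⟩ : ∃ s, s = x / (2 * y - 1) := ⟨_, rfl⟩
    have hx : x = s * (2 * y - 1) := by rw [hs]; field_simp
    have ht : t = y * (2 * s) := by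
      apply mul_right_cancel₀ hy'
      rw [hx] at h; linear_combination h
    rw [← hs]
    ext
    · simp; rw [hx]; ring
    · simp
    · simp [ht]
  have key : ∀ τ : ℝ, -1/4 < τ → τ < 1/4 → ((1/4 + τ, 3/4, 3/4 + 3/2 * τ) : HH) ∈ U := by
    intro τ h h'
    refine ⟨?_, ?_, ?_, ?_⟩ <;> simp <;> linarith
  have keyF : ∀ τ : ℝ, F ((1/4 + τ, 3/4, 3/4 + 3/2 * τ) : HH) = - 3/4 * τ := by
    intro τ; simp only [F]; ring
  have keyl : ∀ a b l : ℝ, (1 - l) • ((1/4 + a, 3/4, 3/4 + 3/2 * a) : HH)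
      + l • ((1/4 + b, 3/4, 3/4 + 3/2 * b) : HH)
      = ((1/4 + ((1-l) * a + l * b), 3/4, 3/4 + 3/2 * ((1-l) * a + l * b)) : HH) := by
    intro a b l
    ext <;> simp <;> ring
  have keyal : ∀ a b : ℝ, al ((1/4 + a, 3/4, 3/4 + 3/2 * a) : HH)
      ((1/4 + b, 3/4, 3/4 + 3/2 * b) : HH) := by
    intro a b; simp only [al]; ring
  have s0 : ((1/4 + 0, 3/4, 3/4 + 3/2 * 0) : HH) ∈ C :=
    hS _ (key 0 (by norm_num) (by norm_num)) (by rw [keyF]; simp)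
  by_cases hp : ((1/4 + (-1/8), 3/4, 3/4 + 3/2 * (-1/8)) : HH) ∈ C
  · refine ⟨(1 - 1/4 : ℝ) • ((1/4 + (-1/8), 3/4, 3/4 + 3/2 * (-1/8)) : HH)
      + (1/4 : ℝ) • ((1/4 + (1/8), 3/4, 3/4 + 3/2 * (1/8)) : HH), ?_, ?_⟩
    · refine interior_crit C U F hC hU hUc hF hS _ _ hp (keyal _ _) ?_ (key _ ?_ ?_) ?_ _ ?_ ?_
        ?_ ?_ ?_ ?_
      · intro h; simp at h; norm_num at h
      all_goals first
        | (rw [keyl, keyF]; norm_num; done) | (rw [keyl]; apply key <;> norm_num) | (rw [keyF]; norm_num; done) | (norm_num; done)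
    · rw [keyl]; constructor <;> refine ⟨?_, ?_, ?_⟩ <;> norm_num
  · have hp' : ((1/4 + (1/8), 3/4, 3/4 + 3/2 * (1/8)) : HH) ∈ C := by
      by_contra hq
      have := hC' _ hp _ hq (keyal _ _) (1/2) (by norm_num) (by norm_num)
      rw [keyl] at this
      apply this
      convert s0 using 3 <;> norm_num
    refine ⟨(1 - 1/4 : ℝ) • ((1/4 + (1/8), 3/4, 3/4 + 3/2 * (1/8)) : HH)
      + (1/4 : ℝ) • ((1/4 + (-1/8), 3/4, 3/4 + 3/2 * (-1/8)) : HH), ?_, ?_⟩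
    · refine interior_crit C U (fun P => - F P) hC hU hUc hF.neg (fun P hP h => hS P hP (neg_eq_zero.1 h))
        _ _ hp' (keyal _ _) ?_ (key _ ?_ ?_) ?_ _ ?_ ?_ ?_ ?_ ?_ ?_
      · intro h; simp at h; norm_num at h
      all_goals first
        | (rw [keyl, keyF]; norm_num; done) | (rw [keyl]; apply key <;> norm_num) | (rw [keyF]; norm_num; done) | (norm_num; done)
    · rw [keyl]; constructor <;> refine ⟨?_, ?_, ?_⟩ <;> norm_num

/-- affine automorphism -/
def Ph (p : HH) (v1 v2 w1 w2 : ℝ) (P : HH) : HH :=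
  (p.1 + P.1 * v1 + P.2.1 * w1, p.2.1 + P.1 * v2 + P.2.1 * w2,
    p.2.2 + 2 * (p.2.1 * (P.1 * v1 + P.2.1 * w1) - p.1 * (P.1 * v2 + P.2.1 * w2))
      + (v1 * w2 - v2 * w1) * P.2.2)

theorem Ph_al (p : HH) (v1 v2 w1 w2 : ℝ) {P Q : HH} (h : al P Q) :
    al (Ph p v1 v2 w1 w2 P) (Ph p v1 v2 w1 w2 Q) := by
  simp only [al, Ph] at *
  linear_combination (v1 * w2 - v2 * w1) * h

theorem Ph_line (p : HH) (v1 v2 w1 w2 : ℝ) (P Q : HH) (s : ℝ) :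
    Ph p v1 v2 w1 w2 ((1 - s) • P + s • Q)
      = (1 - s) • Ph p v1 v2 w1 w2 P + s • Ph p v1 v2 w1 w2 Q := by
  ext <;> simp [Ph] <;> ring

theorem Ph_inv (p : HH) (v1 v2 w1 w2 : ℝ) (hD : v1 * w2 - v2 * w1 ≠ 0) :
    ∃ G : HH → HH, Continuous G ∧ (∀ P, Ph p v1 v2 w1 w2 (G P) = P) ∧
      ∀ P, G (Ph p v1 v2 w1 w2 P) = P := by
  let D := v1 * w2 - v2 * w1
  have hD' : D ≠ 0 := hD
  let X : HH → ℝ := fun P => (w2 * (P.1 - p.1) - w1 * (P.2.1 - p.2.1)) / D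
  let Y : HH → ℝ := fun P => (-v2 * (P.1 - p.1) + v1 * (P.2.1 - p.2.1)) / D
  have hX : Continuous X := by fun_prop
  have hY : Continuous Y := by fun_prop
  refine ⟨fun P => (X P, Y P, (P.2.2 - p.2.2 - 2 * (p.2.1 * (P.1 - p.1)
    - p.1 * (P.2.1 - p.2.1))) / D), ?_, ?_, ?_⟩
  · fun_prop
  · intro P
    have e1 : X P * v1 + Y P * w1 = P.1 - p.1 := by
      simp only [X, Y]; field_simp; simp only [D]; ring
    have e2 : X P * v2 + Y P * w2 = P.2.1 - p.2.1 := by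
      simp only [X, Y]; field_simp; simp only [D]; ring
    ext
    · simp only [Ph]; linarith
    · simp only [Ph]; linarith
    · simp only [Ph]; rw [e1, e2]; change _ + D * _ = _; field_simp; ring
  · intro P
    ext
    · simp only [Ph, X]; field_simp; simp only [D]; ring
    · simp only [Ph, Y]; field_simp; simp only [D]; ring
    · simp only [Ph]; field_simp; simp only [D]; ring

theorem either (C : Set HH) (hC' : HC Cᶜ) (q a b : HH) (hq : q ∈ C) (hab : al a b)
    (h : q = (1 - (1/2 : ℝ)) • a + (1/2 : ℝ) • b) : a ∈ C ∨ b ∈ C := by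
  by_contra hh
  push Not at hh
  have := hC' a hh.1 b hh.2 hab (1/2) (by norm_num) (by norm_num)
  rw [← h] at this
  exact this hq

theorem reg3 (C : Set HH) (hC : HC C) (hC' : HC Cᶜ) : C ⊆ closure (interior C) := by
  intro q hq
  rw [mem_closure_iff]
  intro N hN hqN
  let f : ℝ → (HH × HH) → HH := fun e y =>
    Ph (q.1 + y.1.1 * e, q.2.1, q.2.2 + 2 * (q.2.1 * (y.1.1 * e))) (y.1.2.1 * e) 0 0 (y.1.2.2 * e) y.2
  have hf : Continuous (fun z : ℝ × (HH × HH) => f z.1 z.2) := by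
    simp only [f, Ph]; fun_prop
  have hK : IsCompact (Icc (((-2, -2, -2), (-2, -2, -2)) : HH × HH) ((2, 2, 2), (2, 2, 2))) :=
    isCompact_Icc
  have ev := hK.eventually_forall_of_forall_eventually (x₀ := (0:ℝ))
    (P := fun e y => f e y ∈ N) (by
      intro y _
      have : f (0 : ℝ) y ∈ N := by simpa [f, Ph] using hqN
      exact hf.continuousAt.eventually (hN.mem_nhds this))
  have ev' : ∀ᶠ e in 𝓝[>] (0:ℝ), ∀ y ∈ (Icc (((-2, -2, -2), (-2, -2, -2)) : HH × HH) ((2, 2, 2), (2, 2, 2))), f e y ∈ N :=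
    ev.filter_mono nhdsWithin_le_nhds
  obtain ⟨e, hev, he⟩ := (ev'.and self_mem_nhdsWithin).exists
  have he : 0 < e := he
  -- first step
  have st1 : ∃ σ : ℝ, (σ = 1 ∨ σ = -1) ∧
      ((q.1 + 2 * σ * e, q.2.1, q.2.2 + 2 * (q.2.1 * (2 * σ * e))) : HH) ∈ C := by
    rcases either C hC' q (q.1 + 2 * 1 * e, q.2.1, q.2.2 + 2 * (q.2.1 * (2 * 1 * e)))
      (q.1 + 2 * (-1) * e, q.2.1, q.2.2 + 2 * (q.2.1 * (2 * (-1) * e))) hq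
      (by simp only [al]; ring) (by ext <;> simp <;> ring) with h | h
    · exact ⟨1, Or.inl rfl, h⟩
    · exact ⟨-1, Or.inr rfl, h⟩
  obtain ⟨σ, hσ, hσC⟩ := st1
  set q' : HH := (q.1 + σ * e, q.2.1, q.2.2 + 2 * (q.2.1 * (σ * e))) with hq'
  have seg : ∀ x : ℝ, -1 ≤ x → x ≤ 1 →
      ((q'.1 + x * σ * e, q'.2.1, q'.2.2 + 2 * (q'.2.1 * (x * σ * e))) : HH) ∈ C := by
    intro x h h'
    have := hC q hq _ hσC (by simp only [al]; ring) ((1 + x) / 2) (by linarith) (by linarith)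
    convert this using 1
    ext <;> simp [hq'] <;> ring
  have hq'C : q' ∈ C := by simpa using seg 0 (by norm_num) (by norm_num)
  have st2 : ∃ β : ℝ, (β = 1 ∨ β = -1) ∧
      ((q'.1, q'.2.1 + β * e, q'.2.2 - 2 * (q'.1 * (β * e))) : HH) ∈ C := by
    rcases either C hC' q' (q'.1, q'.2.1 + 1 * e, q'.2.2 - 2 * (q'.1 * (1 * e)))
      (q'.1, q'.2.1 + (-1) * e, q'.2.2 - 2 * (q'.1 * ((-1) * e))) hq'C
      (by simp only [al]; ring) (by ext <;> simp <;> ring) with h | h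
    · exact ⟨1, Or.inl rfl, h⟩
    · exact ⟨-1, Or.inr rfl, h⟩
  obtain ⟨β, hβ, hβC⟩ := st2
  set q2 : HH := (q'.1, q'.2.1 + β * e, q'.2.2 - 2 * (q'.1 * (β * e))) with hq2
  have st3 : ∃ α : ℝ, (α = 1 ∨ α = -1) ∧
      ((q2.1 + α * e, q2.2.1, q2.2.2 + 2 * (q2.2.1 * (α * e))) : HH) ∈ C := by
    rcases either C hC' q2 (q2.1 + 1 * e, q2.2.1, q2.2.2 + 2 * (q2.2.1 * (1 * e)))
      (q2.1 + (-1) * e, q2.2.1, q2.2.2 + 2 * (q2.2.1 * ((-1) * e))) hβC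
      (by simp only [al]; ring) (by ext <;> simp <;> ring) with h | h
    · exact ⟨1, Or.inl rfl, h⟩
    · exact ⟨-1, Or.inr rfl, h⟩
  obtain ⟨α, hα, hαC⟩ := st3
  let Φ := Ph q' (α * e) 0 0 (β * e)
  have hαβ : α ≠ 0 ∧ β ≠ 0 := by
    constructor
    · rcases hα with h | h <;> rw [h] <;> norm_num
    · rcases hβ with h | h <;> rw [h] <;> norm_num
  obtain ⟨G, hG, hG1, hG2⟩ := Ph_inv q' (α * e) 0 0 (β * e) (by
    have := hαβ.1; have := hαβ.2; have := he.ne'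
    simp [*])
  obtain ⟨P, hP, hPb⟩ := std_interior (Φ ⁻¹' C)
    (by
      intro a ha b hb hab s s0 s1
      have := hC _ ha _ hb (Ph_al _ _ _ _ _ hab) s s0 s1
      rw [← Ph_line] at this
      exact this)
    (by
      intro a ha b hb hab s s0 s1
      have := hC' _ ha _ hb (Ph_al _ _ _ _ _ hab) s s0 s1
      rw [← Ph_line] at this
      exact this)
    (by
      intro x h h'
      have hx : ∃ x', -1 ≤ x' ∧ x' ≤ 1 ∧ x' * σ = x * α := by
        rcases hσ with h1 | h1 <;> rcases hα with h2 | h2 <;> rw [h1, h2]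
        · exact ⟨x, h, h', rfl⟩
        · exact ⟨-x, by linarith, by linarith, by ring⟩
        · exact ⟨-x, by linarith, by linarith, by ring⟩
        · exact ⟨x, h, h', rfl⟩
      obtain ⟨x', a, b, c⟩ := hx
      have := seg x' a b
      rw [c] at this
      show Ph _ _ _ _ _ _ ∈ C
      convert this using 1
      ext <;> simp only [Ph] <;> ring)
    (by
      intro s h h'
      have := hC _ hβC _ hαC (by simp only [al]; ring) s h h'
      show Ph _ _ _ _ _ _ ∈ C
      convert this using 1
      ext <;> simp [Ph, hq2] <;> ring)
  refine ⟨Φ P, ?_, ?_⟩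
  · have := hev ((σ, α, β), P) (by
      obtain ⟨hP1, hP2⟩ := hPb
      have b1 : ∀ x : ℝ, (x = 1 ∨ x = -1) → -2 ≤ x ∧ x ≤ 2 := by
        rintro x (h | h) <;> rw [h] <;> norm_num
      exact ⟨⟨⟨(b1 σ hσ).1, (b1 α hα).1, (b1 β hβ).1⟩, hP1⟩,
        ⟨⟨(b1 σ hσ).2, (b1 α hα).2, (b1 β hβ).2⟩, hP2⟩⟩)
    exact this
  · rw [mem_interior_iff_mem_nhds]
    have h1 : Φ ⁻¹' C ∈ 𝓝 (G (Φ P)) := by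
      rw [hG2]; exact mem_interior_iff_mem_nhds.1 hP
    have := hG.continuousAt.preimage_mem_nhds h1
    refine mem_of_superset this ?_
    intro x hx
    have : Φ (G x) ∈ C := hx
    rwa [show Φ (G x) = x from hG1 x] at this

theorem reg4 (E : Set XX) (hC : HC4 E) (hC' : HC4 Eᶜ) : E ⊆ closure (interior E) := by
  have sl : ∀ (E : Set XX), HC4 E → ∀ u : ℝ, HC {p : HH | (u, p) ∈ E} := by
    intro E hE u p hp q hq hal s s0 s1
    have := hE _ hp _ hq hal s s0 s1
    show (u, _) ∈ E
    convert this using 1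
    ext1
    · simp; ring
    · simp
  have r3 : ∀ u : ℝ, {p : HH | (u, p) ∈ E} ⊆ closure (interior {p : HH | (u, p) ∈ E}) :=
    fun u => reg3 _ (sl E hC u) (sl Eᶜ hC' u)
  rintro ⟨u, p⟩ hp
  rw [mem_closure_iff]
  intro N hN hpN
  obtain ⟨I, O, hI, hO, huI, hpO, hhIoo⟩ := isOpen_prod_iff.1 hN u p hpN
  obtain ⟨δ, hδ, hball⟩ := Metric.isOpen_iff.1 hI u huI
  obtain ⟨p1, hp1O, hp1⟩ := mem_closure_iff.1 (r3 u hp) O hO hpO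
  have : ∃ u', (u', p1) ∈ E ∧ u' ≠ u ∧ |u' - u| < δ := by
    by_contra hh
    push Not at hh
    have h1 : (u + δ / 2, p1) ∉ E := fun h => by
      have := hh _ h (by linarith)
      rw [add_sub_cancel_left, abs_of_pos (by linarith)] at this
      linarith
    have h2 : (u - δ / 2, p1) ∉ E := fun h => by
      have := hh _ h (by linarith)
      rw [show u - δ / 2 - u = - (δ / 2) by ring, abs_neg, abs_of_pos (by linarith)] at this
      linarith
    have := hC' _ h1 _ h2 (al_refl p1) (1/2) (by norm_num) (by norm_num)
    apply this
    have h3 : (u, p1) ∈ E := (interior_subset hp1 : p1 ∈ {p : HH | (u, p) ∈ E})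
    convert h3 using 1
    ext1
    · simp; ring
    · simp only [Prod.snd_add, Prod.smul_snd]; module
  obtain ⟨u', hu'E, hu'n, hu'⟩ := this
  obtain ⟨p2, ⟨hp2O, hp2⟩, hp2'⟩ := mem_closure_iff.1 (r3 u' hu'E)
    (O ∩ interior {p : HH | (u, p) ∈ E}) (hO.inter isOpen_interior) ⟨hp1O, hp1⟩
  refine ⟨((u + u') / 2, p2), hhIoo ⟨hball ?_, hp2O⟩, ?_⟩
  · rw [Metric.mem_ball, Real.dist_eq, show (u + u') / 2 - u = (u' - u) / 2 by ring, abs_div]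
    simp; linarith [abs_nonneg (u' - u)]
  · rw [mem_interior]
    refine ⟨{x | 0 < (x - u) / (u' - u) ∧ (x - u) / (u' - u) < 1} ×ˢ
      (interior {p : HH | (u, p) ∈ E} ∩ interior {p : HH | (u', p) ∈ E}), ?_, ?_, ?_⟩
    · rintro ⟨x, r⟩ ⟨⟨hx1, hx2⟩, hr1, hr2⟩
      have a1 : (u, r) ∈ E := (interior_subset hr1 : r ∈ {p : HH | (u, p) ∈ E})
      have a2 : (u', r) ∈ E := (interior_subset hr2 : r ∈ {p : HH | (u', p) ∈ E})
      have := hC _ a1 _ a2 (al_refl r) _ hx1.le hx2.le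
      convert this using 1
      have : u' - u ≠ 0 := sub_ne_zero.2 hu'n
      ext1
      · simp; field_simp; ring
      · simp only [Prod.snd_add, Prod.smul_snd]; module
    · apply IsOpen.prod
      · have hc : Continuous (fun x : ℝ => (x - u) / (u' - u)) := by fun_prop
        exact (isOpen_lt continuous_const hc).inter (isOpen_lt hc continuous_const)
      · exact isOpen_interior.inter isOpen_interior
    · have : u' - u ≠ 0 := sub_ne_zero.2 hu'n
      have e : ((u + u') / 2 - u) / (u' - u) = 1 / 2 := by field_simp; ring
      refine ⟨⟨?_, ?_⟩, hp2, hp2'⟩ <;> simp only [e] <;> norm_num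

def mv (P : XX) (c a b : ℝ) : XX :=
  (P.1 + c, P.2.1 + a, P.2.2.1 + b, P.2.2.2 + 2 * (P.2.2.1 * a - P.2.1 * b))

theorem mv_al (P : XX) (c a b : ℝ) : al P.2 (mv P c a b).2 := by
  simp only [al, mv]; ring

theorem mv_of_al (P Q : XX) (h : al P.2 Q.2) :
    mv P (Q.1 - P.1) (Q.2.1 - P.2.1) (Q.2.2.1 - P.2.2.1) = Q := by
  simp only [al] at h
  ext <;> simp only [mv]
  · ring
  · ring
  · ring
  · linear_combination -h

theorem al_line0 {p q : HH} (h : al p q) (b : ℝ) : al p ((1 - b) • p + b • q) := by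
  simpa using al_line h 0 b

theorem cl_conv (E : Set XX) (hC : HC4 E) (P Q : XX) (hP : P ∈ closure E)
    (hQ : Q ∈ interior E) (hal : al P.2 Q.2) (s : ℝ) (s0 : 0 ≤ s) (s1 : s ≤ 1) :
    (1 - s) • P + s • Q ∈ closure E := by
  let g : XX → XX := fun P' => mv P' (Q.1 - P.1) (Q.2.1 - P.2.1) (Q.2.2.1 - P.2.2.1)
  have hg : Continuous g := by simp only [g, mv]; fun_prop
  have hgP : g P = Q := mv_of_al P Q hal
  have ev : ∀ᶠ P' in 𝓝 P, g P' ∈ interior E := by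
    apply hg.continuousAt.eventually
    rw [hgP]; exact isOpen_interior.mem_nhds hQ
  have hf : Continuous (fun P' => (1 - s) • P' + s • g P') := by fun_prop
  have fr := (mem_closure_iff_frequently.1 hP).and_eventually ev
  rw [mem_closure_iff_frequently]
  have := hf.continuousAt (x := P)
  have t : Tendsto (fun P' => (1 - s) • P' + s • g P') (𝓝 P) (𝓝 ((1 - s) • P + s • Q)) := by
    have := hf.continuousAt (x := P)
    unfold ContinuousAt at this
    simp only [hgP] at this
    exact this
  apply t.frequently
  refine fr.mono ?_
  rintro P' ⟨h1, h2⟩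
  exact hC _ h1 _ (interior_subset h2) (mv_al _ _ _ _) s s0 s1

theorem int_cl (E : Set XX) (hC : HC4 E) (hC' : HC4 Eᶜ) :
    interior (closure E) = interior E := by
  apply subset_antisymm _ (interior_mono subset_closure)
  intro R hR
  by_contra h
  have h1 : R ∈ closure (interior Eᶜ) := by
    have : R ∈ closure Eᶜ := by rw [closure_compl]; exact h
    have h2 := closure_mono (reg4 Eᶜ hC' (by rwa [compl_compl])) this
    rwa [closure_closure] at h2
  obtain ⟨x, hx1, hx2⟩ := mem_closure_iff.1 h1 _ isOpen_interior hR
  rw [interior_compl] at hx2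
  exact hx2 (interior_subset hx1)

theorem open_seg_aux (E : Set XX) (hC : HC4 E) (hC' : HC4 Eᶜ) (P Q : XX) (hP : P ∈ closure E)
    (hQ : Q ∈ interior E) (hal : al P.2 Q.2) (hne : P.2 ≠ Q.2) (l : ℝ) (l0 : 0 < l) (l1 : l ≤ 1) :
    (1 - l) • P + l • Q ∈ interior E := by
  rw [← int_cl E hC hC', mem_interior_iff_mem_nhds]
  set R := (1 - l) • P + l • Q with hR
  have l0' := l0.ne'
  have halr : al P.2 R.2 := al_line0 hal l
  have hner : P.2 ≠ R.2 := by
    intro h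
    apply hne
    have : l • (Q.2 - P.2) = 0 := by
      have : l • (Q.2 - P.2) = R.2 - P.2 := by
        rw [hR]; simp only [Prod.snd_add, Prod.smul_snd]; module
      rw [this, ← h, sub_self]
    rcases smul_eq_zero.1 this with h | h
    · linarith
    · exact (sub_eq_zero.1 h).symm
  obtain ⟨m, hmc, hmr, hmal⟩ := solveT4 P R halr hner (1/2) (by norm_num)
  have hm0 : m R = (1 - l / 2) • P + (l / 2) • Q := by
    rw [hmr, hR]; module
  let Q1 : XX → XX := fun r' => (1 - 2 / l) • P + (2 / l) • m r'
  let Q2 : XX → XX := fun r' => (1 - (2 - l) / l) • m r' + ((2 - l) / l) • r'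
  have hQ1c : ContinuousAt Q1 R := by fun_prop
  have hQ2c : ContinuousAt Q2 R := by fun_prop
  have hQ1 : Q1 R = Q := by
    simp only [Q1, hm0]
    have := line_sub P Q 0 (l / 2) (2 / l)
    simp only [sub_zero, one_smul, zero_smul, add_zero] at this
    rw [this]
    have e : (1 - 2 / l) * 0 + 2 / l * (l / 2) = 1 := by field_simp; ring
    rw [e]; simp
  have hQ2 : Q2 R = Q := by
    simp only [Q2, hm0]
    rw [hR, line_sub]
    have e : (1 - (2 - l) / l) * (l / 2) + (2 - l) / l * l = 1 := by field_simp; ring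
    rw [e]; simp
  have t1 := hQ1c.tendsto; rw [hQ1] at t1
  have t2 := hQ2c.tendsto; rw [hQ2] at t2
  have evA : ∀ᶠ x in 𝓝 Q, x ∈ interior E := isOpen_interior.mem_nhds hQ
  filter_upwards [t1.eventually evA, t2.eventually evA, hmal] with r' h1 h2 h4
  have hmC : m r' ∈ closure E := by
    have e : m r' = (1 - l / 2) • P + (l / 2) • Q1 r' := by
      simp only [Q1]
      rw [smul_add, smul_smul, smul_smul, ← add_assoc, ← add_smul]
      have e1 : (1 - l / 2) + l / 2 * (1 - 2 / l) = 0 := by field_simp; ring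
      have e2 : l / 2 * (2 / l) = 1 := by field_simp
      rw [e1, e2]; simp
    have := cl_conv E hC P (Q1 r') hP h1 (al_line0 h4.1 (2 / l)) (l / 2)
      (by positivity) (by linarith)
    rwa [← e] at this
  have h2l : 2 - l ≠ 0 := by linarith
  have e : r' = (1 - l / (2 - l)) • m r' + (l / (2 - l)) • Q2 r' := by
    simp only [Q2]
    rw [smul_add, smul_smul, smul_smul, ← add_assoc, ← add_smul]
    have e1 : (1 - l / (2 - l)) + l / (2 - l) * (1 - (2 - l) / l) = 0 := by field_simp; ring
    have e2 : l / (2 - l) * ((2 - l) / l) = 1 := by field_simp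
    rw [e1, e2]; simp
  have := cl_conv E hC (m r') (Q2 r') hmC h2 (al_line0 h4.2 ((2 - l) / l))
      (l / (2 - l)) (div_nonneg l0.le (by linarith))
      (by rw [div_le_one (by linarith)]; linarith)
  rwa [← e] at this

theorem open_seg (E : Set XX) (hC : HC4 E) (hC' : HC4 Eᶜ) (P Q : XX) (hP : P ∈ closure E)
    (hQ : Q ∈ interior E) (hal : al P.2 Q.2) (l : ℝ) (l0 : 0 < l) (l1 : l ≤ 1) :
    (1 - l) • P + l • Q ∈ interior E := by
  by_cases hne : P.2 = Q.2
  swap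
  · exact open_seg_aux E hC hC' P Q hP hQ hal hne l l0 l1
  have hg : Continuous (fun δ : ℝ => mv Q 0 δ 0) := by simp only [mv]; fun_prop
  have hg' : Continuous (fun δ : ℝ => mv Q 0 (-δ) 0) := by simp only [mv]; fun_prop
  have m0 : mv Q 0 0 0 = Q := by simp [mv]
  have ev : ∀ᶠ δ in 𝓝 (0:ℝ), mv Q 0 δ 0 ∈ interior E ∧ mv Q 0 (-δ) 0 ∈ interior E := by
    apply (hg.continuousAt.eventually ?_).and (hg'.continuousAt.eventually ?_)
    · show ∀ᶠ y in 𝓝 (mv Q 0 0 0), y ∈ interior E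
      rw [m0]; exact isOpen_interior.mem_nhds hQ
    · show ∀ᶠ y in 𝓝 (mv Q 0 (-0) 0), y ∈ interior E
      rw [neg_zero, m0]; exact isOpen_interior.mem_nhds hQ
  have ev' : ∀ᶠ δ in 𝓝[>] (0:ℝ), mv Q 0 δ 0 ∈ interior E ∧ mv Q 0 (-δ) 0 ∈ interior E :=
    ev.filter_mono nhdsWithin_le_nhds
  obtain ⟨δ, ⟨h1, h2⟩, hδ⟩ := (ev'.and self_mem_nhdsWithin).exists
  have hδ : 0 < δ := hδ
  have a1 := open_seg_aux E hC hC' P _ hP h1 (by rw [hne]; exact mv_al _ _ _ _) (by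
    rw [hne]; intro h; simp [mv, Prod.ext_iff] at h; linarith) l l0 l1
  have a2 := open_seg_aux E hC hC' P _ hP h2 (by rw [hne]; exact mv_al _ _ _ _) (by
    rw [hne]; intro h; simp [mv, Prod.ext_iff] at h; linarith) l l0 l1
  have a3 := open_seg_aux E hC hC' _ _ (subset_closure (interior_subset a1)) a2 (by
    simp only [al, mv, Prod.snd_add, Prod.smul_snd, Prod.fst_add, Prod.smul_fst, smul_eq_mul, hne]
    ring) (by
    intro h
    simp [mv, Prod.ext_iff] at h
    rcases h.1 with h | h <;> linarith) (1/2) (by norm_num) (by norm_num)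
  convert a3 using 1
  ext <;> simp [mv] <;> ring

theorem fr_out (E : Set XX) (hC : HC4 E) (hC' : HC4 Eᶜ) (P Q : XX) (hP : P ∈ frontier E)
    (hQ : Q ∈ frontier E) (hal : al P.2 Q.2) (s : ℝ) (hs : 1 < s) :
    (1 - s) • P + s • Q ∉ interior E := by
  intro h
  have := open_seg E hC hC' P _ (frontier_subset_closure hP) h (al_line0 hal s)
    (1 / s) (by positivity) (by rw [div_le_one (by linarith)]; linarith)
  have e : (1 - 1 / s) • P + (1 / s) • ((1 - s) • P + s • Q) = Q := by
    have : s ≠ 0 := by linarith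
    rw [smul_add, smul_smul, smul_smul, ← add_assoc, ← add_smul]
    have e1 : (1 - 1 / s) + 1 / s * (1 - s) = 0 := by field_simp; ring
    have e2 : 1 / s * s = 1 := by field_simp
    rw [e1, e2]; simp
  rw [e] at this
  exact hQ.2 this

theorem tri (E : Set XX) (x : XX) : x ∈ interior E ∨ x ∈ interior Eᶜ ∨ x ∈ frontier E := by
  by_cases h : x ∈ interior E
  · exact Or.inl h
  by_cases h' : x ∈ closure E
  · exact Or.inr (Or.inr ⟨h', h⟩)
  · right; left; rw [interior_compl]; exact h'

theorem fr_line_aux (E : Set XX) (hC : HC4 E) (hC' : HC4 Eᶜ) (P Q : XX) (hP : P ∈ frontier E)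
    (hQ : Q ∈ frontier E) (hal : al P.2 Q.2) (s : ℝ) :
    (1 - s) • P + s • Q ∉ interior E := by
  intro h
  have hs0 : s ≠ 0 := by
    rintro rfl
    simp at h; exact hP.2 h
  have hs1 : s ≠ 1 := by
    rintro rfl
    simp at h; exact hQ.2 h
  rcases lt_or_gt_of_ne hs1 with h1 | h1
  swap
  · exact fr_out E hC hC' P Q hP hQ hal s h1 h
  rcases lt_or_gt_of_ne hs0 with h0 | h0
  · apply fr_out E hC hC' Q P hQ hP (al_symm hal) (1 - s) (by linarith)
    rw [sub_sub_cancel, add_comm]; exact h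
  have f2 : (1 - (2:ℝ)) • P + (2:ℝ) • Q ∈ frontier E := by
    rcases tri E ((1 - (2:ℝ)) • P + (2:ℝ) • Q) with h | h | h
    · exact absurd h (fr_out E hC hC' P Q hP hQ hal 2 (by norm_num))
    · exact absurd h (fr_out Eᶜ hC' (by rwa [compl_compl]) P Q (by rwa [frontier_compl])
        (by rwa [frontier_compl]) hal 2 (by norm_num))
    · exact h
  have := open_seg E hC hC' _ _ (frontier_subset_closure f2) h (al_line hal 2 s) (1 / (2 - s))
    (by apply div_pos <;> linarith) (by rw [div_le_one (by linarith)]; linarith)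
  rw [line_sub] at this
  have e : (1 - 1 / (2 - s)) * 2 + 1 / (2 - s) * s = 1 := by
    have : 2 - s ≠ 0 := by linarith
    field_simp; ring
  rw [e] at this
  simp at this
  exact hQ.2 this

theorem fr_line (E : Set XX) (hC : HC4 E) (hC' : HC4 Eᶜ) (P Q : XX) (hP : P ∈ frontier E)
    (hQ : Q ∈ frontier E) (hal : al P.2 Q.2) (s : ℝ) :
    (1 - s) • P + s • Q ∈ frontier E := by
  rcases tri E ((1 - s) • P + s • Q) with h | h | h
  · exact absurd h (fr_line_aux E hC hC' P Q hP hQ hal s)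
  · exact absurd h (fr_line_aux Eᶜ hC' (by rwa [compl_compl]) P Q (by rwa [frontier_compl])
      (by rwa [frontier_compl]) hal s)
  · exact h

theorem circ_aux (E : Set XX) (hC : HC4 E) (hC' : HC4 Eᶜ) (P : XX) (hP : P ∈ frontier E)
    (c a b c' a' b' : ℝ) (h : mv P c a b ∈ interior E) :
    ∃ x y : ℝ, x ^ 2 + y ^ 2 = 1 ∧
      mv P (x * c + y * c') (x * a + y * a') (x * b + y * b') ∈ frontier E := by
  let f : ℝ → XX := fun θ => mv P (Real.cos θ * c + Real.sin θ * c')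
    (Real.cos θ * a + Real.sin θ * a') (Real.cos θ * b + Real.sin θ * b')
  have hf : Continuous f := by simp only [f, mv]; fun_prop
  by_contra hh
  push Not at hh
  have hnf : ∀ θ, f θ ∉ frontier E := fun θ => hh _ _ (Real.cos_sq_add_sin_sq θ)
  have hpre : IsPreconnected (f '' univ) := isPreconnected_univ.image f hf.continuousOn
  have f0 : f 0 ∈ interior E := by simpa [f] using h
  have fpi : f Real.pi ∈ interior Eᶜ := by
    rcases tri E (f Real.pi) with h1 | h1 | h1
    · exfalso
      have := open_seg E hC hC' _ _ (subset_closure (interior_subset f0)) h1 (by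
        simp [f, al, mv]; ring) (1/2) (by norm_num) (by norm_num)
      have e : (1 - (1/2:ℝ)) • f 0 + (1/2 : ℝ) • f Real.pi = P := by
        ext <;> simp [f, mv] <;> ring
      rw [e] at this
      exact hP.2 this
    · exact h1
    · exact absurd h1 (hnf _)
  obtain ⟨x, -, hx1, hx2⟩ := hpre (interior E) (interior Eᶜ) isOpen_interior isOpen_interior
    (by
      rintro _ ⟨θ, -, rfl⟩
      rcases tri E (f θ) with h1 | h1 | h1
      · exact Or.inl h1
      · exact Or.inr h1
      · exact absurd h1 (hnf _))
    ⟨_, mem_image_of_mem f (mem_univ 0), f0⟩ ⟨_, mem_image_of_mem f (mem_univ Real.pi), fpi⟩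
  exact (interior_subset hx2) (interior_subset hx1)

theorem circ (E : Set XX) (hC : HC4 E) (hC' : HC4 Eᶜ) (P : XX) (hP : P ∈ frontier E)
    (c a b c' a' b' : ℝ) :
    ∃ x y : ℝ, x ^ 2 + y ^ 2 = 1 ∧
      mv P (x * c + y * c') (x * a + y * a') (x * b + y * b') ∈ frontier E := by
  rcases tri E (mv P c a b) with h | h | h
  · exact circ_aux E hC hC' P hP _ _ _ _ _ _ h
  · have := circ_aux Eᶜ hC' (by rwa [compl_compl]) P (by rwa [frontier_compl]) _ _ _ c' a' b' h
    rwa [frontier_compl] at this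
  · exact ⟨1, 0, by norm_num, by simpa using h⟩

def LC (Z : Set HH) : Prop := ∀ p ∈ Z, ∀ q ∈ Z, al p q → ∀ s : ℝ, (1 - s) • p + s • q ∈ Z

def pt (r : HH) (a b s : ℝ) : HH :=
  (r.1 + s * a, r.2.1 + s * b, r.2.2 + 2 * s * (r.2.1 * a - r.1 * b))

theorem pt_line (r : HH) (a b s s' k : ℝ) :
    (1 - k) • pt r a b s + k • pt r a b s' = pt r a b ((1 - k) * s + k * s') := by
  ext <;> simp [pt] <;> ring

theorem pt_al (r : HH) (a b s s' : ℝ) : al (pt r a b s) (pt r a b s') := by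
  simp only [al, pt]; ring

theorem pt_zero (r : HH) (a b : ℝ) : pt r a b 0 = r := by
  simp [pt]

theorem pt_pt (r : HH) (a b s s' : ℝ) : pt (pt r a b s) a b s' = pt r a b (s + s') := by
  ext <;> simp only [pt] <;> ring

theorem lc_line {Z : Set HH} (hZ : LC Z) {r : HH} {a b s s' : ℝ} (h : pt r a b s ∈ Z)
    (h' : pt r a b s' ∈ Z) (hs : s ≠ s') (x : ℝ) : pt r a b x ∈ Z := by
  have := hZ _ h _ h' (pt_al _ _ _ _ _) ((x - s) / (s' - s))
  rw [pt_line] at this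
  have hs' : s' - s ≠ 0 := sub_ne_zero.2 hs.symm
  have e : (1 - (x - s) / (s' - s)) * s + (x - s) / (s' - s) * s' = x := by field_simp; ring
  rwa [e] at this

theorem kstd (Z : Set HH) (hZ : LC Z) (c : ℝ) (h1 : ∀ s : ℝ, ((s, 0, 0) : HH) ∈ Z)
    (h2 : ∀ s : ℝ, ((s, 1, 2 * s + c) : HH) ∈ Z) : ∀ P, P ∈ Z := by
  let F : HH → ℝ := fun P => (2 * P.2.1 - 1) * P.2.2 - P.2.1 * (2 * P.1 + P.2.1 * c)
  have hS0 : ∀ s y : ℝ, (((2 * y - 1) * s - (1 - y) * c / 2, y, y * (2 * s + c)) : HH) ∈ Z := by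
    intro s y
    have := hZ _ (h1 (- s - c / 2)) _ (h2 s) (by simp only [al]; ring) y
    convert this using 1
    ext <;> simp <;> ring
  have hS : ∀ P, F P = 0 → P ∈ Z := by
    rintro ⟨x, y, t⟩ h
    simp only [F] at h
    by_cases hy : 2 * y - 1 = 0
    · have hy2 : y = 1 / 2 := by linarith
      subst hy2
      have := hS0 (t - c / 2) (1/2)
      convert this using 3
      · linarith
      · ring
    · have := hS0 ((x + (1 - y) * c / 2) / (2 * y - 1)) y
      convert this using 3
      · field_simp; ring
      · apply mul_left_cancel₀ hy
        field_simp
        linear_combination h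
  have hmain : ∀ P : HH, 2 * P.2.1 - 1 ≠ 0 → P ∈ Z := by
    intro r hr
    by_cases hF : F r = 0
    · exact hS r hF
    obtain ⟨f, hf⟩ : ∃ f, f = F r := ⟨_, rfl⟩
    rw [← hf] at hF
    let a := (4 * r.1 + c - f) / (2 * (2 * r.2.1 - 1))
    have ha : a * (2 * (2 * r.2.1 - 1)) = 4 * r.1 + c - f := by
      simp only [a]; field_simp
    obtain ⟨β, hβ⟩ : ∃ β : ℝ, ∀ s, F (pt r a 1 s) = - f * s ^ 2 + β * s + f := by
      refine ⟨2 * r.2.2 + (2 * r.2.1 - 1) * 2 * (r.2.1 * a - r.1)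
        - (2 * r.1 + 2 * r.2.1 * a + 2 * r.2.1 * c), ?_⟩
      intro s
      rw [hf]
      simp only [F, pt]
      simp only [F] at hf
      linear_combination s ^ 2 * ha - s ^ 2 * hf
    obtain ⟨g, hg⟩ : ∃ g, β = g * f := ⟨β / f, by field_simp⟩
    have hsq : Real.sqrt (g ^ 2 + 4) ^ 2 = g ^ 2 + 4 := Real.sq_sqrt (by positivity)
    have hpos : 0 < Real.sqrt (g ^ 2 + 4) := Real.sqrt_pos.2 (by positivity)
    have r1 : pt r a 1 ((g + Real.sqrt (g ^ 2 + 4)) / 2) ∈ Z := by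
      apply hS; rw [hβ, hg]; linear_combination (- f / 4) * hsq
    have r2 : pt r a 1 ((g - Real.sqrt (g ^ 2 + 4)) / 2) ∈ Z := by
      apply hS; rw [hβ, hg]; linear_combination (- f / 4) * hsq
    have := lc_line hZ r1 r2 (by intro h; linarith) 0
    rwa [pt_zero] at this
  intro r
  by_cases hr : 2 * r.2.1 - 1 = 0
  · have := lc_line hZ (r := r) (a := 0) (b := 1) (s := 1) (s' := -1)
      (hmain _ (by simp only [pt]; intro h; linarith)) (hmain _ (by simp only [pt]; intro h; linarith))
      (by norm_num) 0
    rwa [pt_zero] at this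
  · exact hmain r hr

theorem kpar (Z : Set HH) (hZ : LC Z) (p q : HH) (v1 v2 : ℝ) (hp : ∀ s, pt p v1 v2 s ∈ Z)
    (hq : ∀ s, pt q v1 v2 s ∈ Z) (hD : v1 * (q.2.1 - p.2.1) - v2 * (q.1 - p.1) ≠ 0) :
    ∀ P, P ∈ Z := by
  obtain ⟨G, -, hG1, hG2⟩ := Ph_inv p v1 v2 (q.1 - p.1) (q.2.1 - p.2.1) hD
  let c := (q.2.2 - p.2.2 - 2 * (p.2.1 * (q.1 - p.1) - p.1 * (q.2.1 - p.2.1))) /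
    (v1 * (q.2.1 - p.2.1) - v2 * (q.1 - p.1))
  have hc : (v1 * (q.2.1 - p.2.1) - v2 * (q.1 - p.1)) * c =
    (q.2.2 - p.2.2 - 2 * (p.2.1 * (q.1 - p.1) - p.1 * (q.2.1 - p.2.1))) := by
    simp only [c]; field_simp
  have := kstd (Ph p v1 v2 (q.1 - p.1) (q.2.1 - p.2.1) ⁻¹' Z) (by
      intro a ha b hb hab s
      have := hZ _ ha _ hb (Ph_al _ _ _ _ _ hab) s
      rw [← Ph_line] at this
      exact this) c (by
      intro s
      have := hp s
      show Ph _ _ _ _ _ _ ∈ Z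
      convert this using 1
      ext <;> simp only [Ph, pt] <;> ring) (by
      intro s
      have := hq s
      show Ph _ _ _ _ _ _ ∈ Z
      convert this using 1
      ext <;> simp only [Ph, pt]
      · ring
      · ring
      · linear_combination hc)
  intro P
  have h := this (G P)
  rw [mem_preimage, hG1] at h
  exact h

theorem kvert (Z : Set HH) (hZ : LC Z) (p p' : HH) (v1 v2 w1 w2 : ℝ) (hp : ∀ s, pt p v1 v2 s ∈ Z)
    (hq : ∀ s, pt p' w1 w2 s ∈ Z) (hD : v1 * w2 - v2 * w1 ≠ 0) (h1 : p'.1 = p.1)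
    (h2 : p'.2.1 = p.2.1) (h3 : p'.2.2 ≠ p.2.2) :
    ∀ P, P ∈ Z := by
  obtain ⟨c, hc⟩ : ∃ c, p'.2.2 = p.2.2 + c := ⟨p'.2.2 - p.2.2, by ring⟩
  have hc0 : c ≠ 0 := by rintro rfl; apply h3; rw [hc, add_zero]
  let σ := - c / (2 * (v1 * w2 - v2 * w1))
  have hσ : σ * (2 * (v1 * w2 - v2 * w1)) = - c := by simp only [σ]; field_simp
  have hσ0 : σ ≠ 0 := by
    intro h; rw [h] at hσ; apply hc0; linarith
  apply kpar Z hZ (pt p v1 v2 1) (pt p v1 v2 (-1)) (σ * w1 - v1) (σ * w2 - v2)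
  · apply lc_line hZ (s := 0) (s' := 1)
    · rw [pt_zero]; exact hp 1
    · convert hq σ using 1
      ext <;> simp only [pt, h1, h2, hc]
      · ring
      · ring
      · linear_combination -hσ
    · norm_num
  · apply lc_line hZ (s := 0) (s' := -1)
    · rw [pt_zero]; exact hp (-1)
    · convert hq (-σ) using 1
      ext <;> simp only [pt, h1, h2, hc]
      · ring
      · ring
      · linear_combination -hσ
    · norm_num
  · have : 2 * σ * (v1 * w2 - v2 * w1) ≠ 0 := by
      apply mul_ne_zero _ hD; simpa using hσ0
    convert this using 1
    simp only [pt]; ring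

theorem meet (Z : Set HH) (hZ : LC Z) (hne : ∃ P, P ∉ Z) (p q : HH) (v1 v2 w1 w2 : ℝ)
    (hp : ∀ s, pt p v1 v2 s ∈ Z) (hq : ∀ s, pt q w1 w2 s ∈ Z) (hD : v1 * w2 - v2 * w1 ≠ 0) :
    ∃ σ τ, pt p v1 v2 σ = pt q w1 w2 τ := by
  let D := v1 * w2 - v2 * w1
  have hD' : D ≠ 0 := hD
  let σ := ((q.1 - p.1) * w2 - (q.2.1 - p.2.1) * w1) / D
  let τ := (v2 * (q.1 - p.1) - v1 * (q.2.1 - p.2.1)) / D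
  have e1 : p.1 + σ * v1 = q.1 + τ * w1 := by
    simp only [σ, τ]; field_simp; simp only [D]; ring
  have e2 : p.2.1 + σ * v2 = q.2.1 + τ * w2 := by
    simp only [σ, τ]; field_simp; simp only [D]; ring
  refine ⟨σ, τ, ?_⟩
  by_contra hh
  obtain ⟨P, hP⟩ := hne
  apply hP
  apply kvert Z hZ (pt p v1 v2 σ) (pt q w1 w2 τ) v1 v2 w1 w2 _ _ hD
  · exact e1.symm
  · exact e2.symm
  · intro h3
    apply hh
    ext
    · exact e1
    · exact e2
    · exact h3.symm
  · intro s; rw [pt_pt]; exact hp _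
  · intro s; rw [pt_pt]; exact hq _

theorem par_vec (v1 v2 w1 w2 : ℝ) (hv : v1 ≠ 0 ∨ v2 ≠ 0) (hw : w1 ≠ 0 ∨ w2 ≠ 0)
    (hD : v1 * w2 - v2 * w1 = 0) : ∃ k, v1 = k * w1 ∧ v2 = k * w2 := by
  rcases hw with h | h
  · refine ⟨v1 / w1, by field_simp, ?_⟩
    field_simp; linarith
  · refine ⟨v2 / w2, ?_, by field_simp⟩
    field_simp; linarith

theorem parl (Z : Set HH) (hZ : LC Z) (hne : ∃ P, P ∉ Z) (p q : HH) (v1 v2 w1 w2 : ℝ)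
    (hp : ∀ s, pt p v1 v2 s ∈ Z) (hq : ∀ s, pt q w1 w2 s ∈ Z) (hv : v1 ≠ 0 ∨ v2 ≠ 0)
    (hw : w1 ≠ 0 ∨ w2 ≠ 0) (hD : v1 * w2 - v2 * w1 = 0) :
    v1 * (q.2.1 - p.2.1) - v2 * (q.1 - p.1) = 0 := by
  obtain ⟨k, rfl, rfl⟩ := par_vec v1 v2 w1 w2 hv hw hD
  by_contra hh
  obtain ⟨P, hP⟩ := hne
  apply hP
  apply kpar Z hZ p q _ _ hp _ hh
  intro s
  convert hq (k * s) using 1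
  ext <;> simp only [pt] <;> ring

theorem al_of_pt (o r : HH) (a b s : ℝ) (h : o = pt r a b s) : al o r := by
  rw [h]; simp only [al, pt]; ring

theorem in_plane (Z : Set HH) (hZ : LC Z) (hne : ∃ P, P ∉ Z) (hne' : ∃ P, P ∈ Z)
    (hl : ∀ q ∈ Z, ∃ a b : ℝ, (a ≠ 0 ∨ b ≠ 0) ∧ ∀ s, pt q a b s ∈ Z) :
    ∃ n1 n2 n3 c : ℝ, (n1 ≠ 0 ∨ n2 ≠ 0 ∨ n3 ≠ 0) ∧
      ∀ q ∈ Z, n1 * q.1 + n2 * q.2.1 + n3 * q.2.2 = c := by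
  obtain ⟨p, hp⟩ := hne'
  obtain ⟨v1, v2, hv, hpl⟩ := hl p hp
  by_cases hA : ∀ q ∈ Z, v1 * (q.2.1 - p.2.1) - v2 * (q.1 - p.1) = 0
  · refine ⟨-v2, v1, 0, -v2 * p.1 + v1 * p.2.1, ?_, ?_⟩
    · rcases hv with h | h
      · right; left; exact h
      · left; simpa using h
    · intro q hq
      linear_combination hA q hq
  push Not at hA
  obtain ⟨q, hq, hqD⟩ := hA
  obtain ⟨w1, w2, hw, hql⟩ := hl q hq
  have hD : v1 * w2 - v2 * w1 ≠ 0 := fun h =>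
    hqD (parl Z hZ hne p q v1 v2 w1 w2 hpl hql hv hw h)
  obtain ⟨σ, τ, hst⟩ := meet Z hZ hne p q v1 v2 w1 w2 hpl hql hD
  obtain ⟨o, ho⟩ : ∃ o, o = pt p v1 v2 σ := ⟨_, rfl⟩
  have hov : ∀ s, pt o v1 v2 s ∈ Z := by intro s; rw [ho, pt_pt]; exact hpl _
  have how : ∀ s, pt o w1 w2 s ∈ Z := by intro s; rw [ho, hst, pt_pt]; exact hql _
  have key : ∀ r ∈ Z, al o r := by
    intro r hr
    obtain ⟨e1, e2, he, hrl⟩ := hl r hr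
    by_cases hve : v1 * e2 - v2 * e1 = 0
    · have hpar := parl Z hZ hne o r v1 v2 e1 e2 hov hrl hv he hve
      have hwe : w1 * e2 - w2 * e1 ≠ 0 := by
        intro h
        obtain ⟨k, h1, h2⟩ := par_vec v1 v2 e1 e2 hv he hve
        obtain ⟨k', h3, h4⟩ := par_vec w1 w2 e1 e2 hw he h
        apply hD; rw [h1, h2, h3, h4]; ring
      obtain ⟨s, x, hs⟩ := meet Z hZ hne o r w1 w2 e1 e2 how hrl hwe
      have h1 : o.1 + s * w1 = r.1 + x * e1 := congrArg (fun z : HH => z.1) hs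
      have h2 : o.2.1 + s * w2 = r.2.1 + x * e2 := congrArg (fun z : HH => z.2.1) hs
      have : s * (v1 * w2 - v2 * w1) = 0 := by
        linear_combination v1 * h2 - v2 * h1 + hpar + x * hve
      rcases mul_eq_zero.1 this with h | h
      · rw [h, pt_zero] at hs
        exact al_of_pt _ _ _ _ _ hs
      · exact absurd h hD
    · obtain ⟨s, x, hs⟩ := meet Z hZ hne o r v1 v2 e1 e2 hov hrl hve
      by_cases hwe : w1 * e2 - w2 * e1 = 0
      · have hpar := parl Z hZ hne o r w1 w2 e1 e2 how hrl hw he hwe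
        have h1 : o.1 + s * v1 = r.1 + x * e1 := congrArg (fun z : HH => z.1) hs
        have h2 : o.2.1 + s * v2 = r.2.1 + x * e2 := congrArg (fun z : HH => z.2.1) hs
        have : s * (v1 * w2 - v2 * w1) = 0 := by
          linear_combination -w1 * h2 + w2 * h1 - hpar - x * hwe
        rcases mul_eq_zero.1 this with h | h
        · rw [h, pt_zero] at hs
          exact al_of_pt _ _ _ _ _ hs
        · exact absurd h hD
      · obtain ⟨s', x', hs'⟩ := meet Z hZ hne o r w1 w2 e1 e2 how hrl hwe
        have ha : al (pt o v1 v2 s) (pt o w1 w2 s') := by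
          rw [hs, hs']; exact pt_al _ _ _ _ _
        have : s * s' * (v1 * w2 - v2 * w1) = 0 := by
          simp only [al, pt] at ha
          linear_combination ha / 2
        rcases mul_eq_zero.1 this with h | h
        · rcases mul_eq_zero.1 h with h | h
          · rw [h, pt_zero] at hs
            exact al_of_pt _ _ _ _ _ hs
          · rw [h, pt_zero] at hs'
            exact al_of_pt _ _ _ _ _ hs'
        · exact absurd h hD
  refine ⟨-2 * o.2.1, 2 * o.1, 1, o.2.2, by simp, ?_⟩
  intro r hr
  have := key r hr
  simp only [al] at this
  linear_combination this

def Gd (W : Set XX) (p : HH) : Prop := ∃ u, (u, p) ∈ W ∧ ∀ v, (v, p) ∈ W → v = u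

theorem gd_step (E : Set XX) (hC : HC4 E) (hC' : HC4 Eᶜ) (p q : HH) (h : al p q)
    (hp : Gd (frontier E) p) : Gd (frontier E) q := by
  obtain ⟨u, hu, hun⟩ := hp
  obtain ⟨x, y, hxy, hR⟩ := circ E hC hC' (u, p) hu 1 0 0 0 (q.1 - p.1) (q.2.1 - p.2.1)
  have hy : y ≠ 0 := by
    rintro rfl
    have e : mv (u, p) (x * 1 + 0 * 0) (x * 0 + 0 * (q.1 - p.1)) (x * 0 + 0 * (q.2.1 - p.2.1))
        = (u + x, p) := by
      simp [mv]
    rw [e] at hR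
    have := hun _ hR
    have hx : x = 0 := by linarith
    rw [hx] at hxy; norm_num at hxy
  have key : ∀ k : ℝ, ∃ v, (v, (1 - k) • p + k • q) ∈ frontier E := by
    intro k
    have := fr_line E hC hC' _ _ hu hR (mv_al _ _ _ _) (k / y)
    refine ⟨u + k / y * x, ?_⟩
    convert this using 1
    obtain ⟨p1, p2, p3⟩ := p
    obtain ⟨q1, q2, q3⟩ := q
    simp only [al] at h
    have h3 : q3 = p3 + 2 * (p2 * q1 - p1 * q2) := by linarith
    subst h3
    simp only [mv, Prod.smul_mk, Prod.mk_add_mk, smul_eq_mul, Prod.mk.injEq]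
    refine ⟨?_, ?_, ?_, ?_⟩ <;> field_simp <;> ring
  obtain ⟨v, hv⟩ := key 1
  obtain ⟨w, hw⟩ := key (1/2)
  have e1 : (1 - (1:ℝ)) • p + (1:ℝ) • q = q := by simp
  rw [e1] at hv
  refine ⟨v, hv, ?_⟩
  intro v' hv'
  have halm : al q ((1 - (1/2:ℝ)) • p + (1/2:ℝ) • q) := by
    have := al_line0 (al_symm h) (1/2)
    convert this using 1
    rw [add_comm]; norm_num
  have back : ∀ v, (v, q) ∈ frontier E → (2 * w - v, p) ∈ frontier E := by
    intro v hv
    have := fr_line E hC hC' _ _ hv hw halm 2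
    convert this using 1
    ext <;> simp <;> ring
  have a1 := hun _ (back v hv)
  have a2 := hun _ (back v' hv')
  linarith

theorem gd_all (E : Set XX) (hC : HC4 E) (hC' : HC4 Eᶜ) (p q : HH)
    (hp : Gd (frontier E) p) : Gd (frontier E) q := by
  have st : ∀ (r : HH) (a b : ℝ), Gd (frontier E) r → Gd (frontier E) (pt r a b 1) := by
    intro r a b hr
    refine gd_step E hC hC' r _ ?_ hr
    have := pt_al r a b 0 1
    rwa [pt_zero] at this
  obtain ⟨x0, y0, t0⟩ := p
  obtain ⟨x1, y1, t1⟩ := q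
  set c : ℝ := (t1 - t0 - 2 * y0 * (x1 - x0) + 2 * x1 * (y1 - y0)) / 4 with hc
  have := st _ 0 (y1 - y0 - 1) (st _ c 0 (st _ 0 1 (st _ (x1 - x0 - c) 0 hp)))
  convert this using 1
  simp only [pt, Prod.mk.injEq]
  refine ⟨by ring, by ring, ?_⟩
  have : t1 = 4 * c + t0 + 2 * y0 * (x1 - x0) - 2 * x1 * (y1 - y0) := by rw [hc]; ring
  rw [this]; ring

theorem graph_case (E : Set XX) (hC : HC4 E) (hC' : HC4 Eᶜ) (p0 : HH)
    (hp : Gd (frontier E) p0) :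
    ∃ α β γ δ : ℝ, ∀ P : XX, P ∈ frontier E ↔
      P.1 = α + β * P.2.1 + γ * P.2.2.1 + δ * P.2.2.2 := by
  have hg : ∀ q, Gd (frontier E) q := fun q => gd_all E hC hC' p0 q hp
  choose g hg1 hg2 using hg
  have lin : ∀ p q, al p q → ∀ s : ℝ, g ((1 - s) • p + s • q) = (1 - s) * g p + s * g q := by
    intro p q h s
    have := fr_line E hC hC' (g p, p) (g q, q) (hg1 p) (hg1 q) h s
    exact (hg2 ((1 - s) • p + s • q) _ this).symm
  set α := g (0,0,0) with hα
  set β := g (1,0,0) - α with hβ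
  set γ := g (0,1,0) - α with hγ
  set δ := (g (1,1,2) - α - β - γ) / 2 with hδ
  let Z : Set HH := {p | g p = α + β * p.1 + γ * p.2.1 + δ * p.2.2}
  have hZ : LC Z := by
    intro p hp q hq h s
    simp only [Z, mem_setOf_eq] at hp hq ⊢
    rw [lin p q h s, hp, hq]
    simp; ring
  have z0 : ((0,0,0):HH) ∈ Z := by simp [Z, hα]
  have z1 : ((1,0,0):HH) ∈ Z := by simp [Z, hβ]
  have z2 : ((0,1,0):HH) ∈ Z := by simp [Z, hγ]
  have z3 : ((1,1,2):HH) ∈ Z := by simp [Z, hδ]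
  have hall := kstd Z hZ 0 (by
    intro s
    have := hZ _ z0 _ z1 (by simp [al]) s
    simpa using this) (by
    intro s
    have := hZ _ z2 _ z3 (by simp [al]) s
    convert this using 1
    simp; ring)
  refine ⟨α, β, γ, δ, ?_⟩
  rintro ⟨u, p⟩
  have h := hall p
  simp only [Z, mem_setOf_eq] at h
  simp only
  rw [← h]
  constructor
  · exact fun hh => hg2 p u hh
  · rintro rfl; exact hg1 p

theorem inv_plane_aux (E : Set XX) (n1 n2 n3 c : ℝ) (hn : n1 ≠ 0 ∨ n2 ≠ 0 ∨ n3 ≠ 0)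
    (hsub : ∀ q ∈ frontier E, n1 * q.2.1 + n2 * q.2.2.1 + n3 * q.2.2.2 = c)
    (hB : (interior Eᶜ).Nonempty) (z : XX)
    (hz : n1 * z.2.1 + n2 * z.2.2.1 + n3 * z.2.2.2 = c) (hzA : z ∈ interior E) : False := by
  let f : XX → ℝ := fun q => n1 * q.2.1 + n2 * q.2.2.1 + n3 * q.2.2.2
  have hf : Continuous f := by fun_prop
  have hN : 0 < n1^2 + n2^2 + n3^2 := by
    rcases hn with h | h | h <;> positivity
  -- moving along the normal
  let m : XX → ℝ → XX := fun q s => (q.1, q.2.1 + s * n1, q.2.2.1 + s * n2, q.2.2.2 + s * n3)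
  have hm : ∀ q s, f (m q s) = f q + s * (n1^2 + n2^2 + n3^2) := by
    intro q s; simp only [f, m]; ring
  have hmc : ∀ q, Continuous (m q) := by intro q; simp only [m]; fun_prop
  have hm0 : ∀ q, m q 0 = q := by intro q; simp [m]
  have nb : ∀ (U : Set XX) (q : XX), IsOpen U → q ∈ U → ∃ e > 0, m q e ∈ U ∧ m q (-e) ∈ U := by
    intro U q hU hq
    have hop : IsOpen ((m q) ⁻¹' U) := hU.preimage (hmc q)
    obtain ⟨e, he, hb⟩ := Metric.isOpen_iff.1 hop 0 (by simpa [hm0] using hq)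
    refine ⟨e/2, by positivity, hb ?_, hb ?_⟩ <;> simp [abs_of_pos he] <;> linarith
  have half : ∀ (H : Set XX), IsPreconnected H → (∀ q ∈ H, f q ≠ c) → (H ∩ interior E).Nonempty →
      H ∩ interior Eᶜ = ∅ := by
    intro H hH hne hA
    by_contra hB'
    have hB' := nonempty_iff_ne_empty.2 hB'
    obtain ⟨r, _, hr1, hr2⟩ := hH _ _ isOpen_interior isOpen_interior (by
      intro q hq
      rcases tri E q with h | h | h
      · exact Or.inl h
      · exact Or.inr h
      · exact absurd (hsub q h) (hne q hq)) hA hB'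
    exact (interior_subset hr2) (interior_subset hr1)
  have cv : ∀ q r : XX, ∀ a b : ℝ, f (a • q + b • r) = a * f q + b * f r := by
    intro q r a b; simp [f]; ring
  have lf : IsLinearMap ℝ f := by
    constructor
    · intro q r; simp [f]; ring
    · intro a q; simp [f]; ring
  have hfz : f z = c := hz
  obtain ⟨e, he, h1, h2⟩ := nb _ z isOpen_interior hzA
  have hP := half {q | c < f q} (convex_halfSpace_gt lf c).isPreconnected
    (fun q hq => ne_of_gt hq) ⟨m z e, by
      simp only [mem_setOf_eq, hm, hfz]; nlinarith [mul_pos he hN], h1⟩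
  have hM := half {q | f q < c} (convex_halfSpace_lt lf c).isPreconnected
    (fun q hq => ne_of_lt hq) ⟨m z (-e), by
      simp only [mem_setOf_eq, hm, hfz]; nlinarith [mul_pos he hN], h2⟩
  obtain ⟨b, hb⟩ := hB
  obtain ⟨e', he', h1', h2'⟩ := nb _ b isOpen_interior hb
  have g1 : ¬ c < f (m b e') := fun h => by
    have : m b e' ∈ ({q | c < f q} ∩ interior Eᶜ : Set XX) := ⟨h, h1'⟩
    rw [hP] at this; exact this
  have g2 : ¬ f (m b (-e')) < c := fun h => by
    have : m b (-e') ∈ ({q | f q < c} ∩ interior Eᶜ : Set XX) := ⟨h, h2'⟩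
    rw [hM] at this; exact this
  rw [hm] at g1 g2
  nlinarith [mul_pos he' hN]

theorem inv_case (E : Set XX) (hC : HC4 E) (hC' : HC4 Eᶜ) (hA : (interior E).Nonempty)
    (hB : (interior Eᶜ).Nonempty) (hW : (frontier E).Nonempty)
    (hinv : ∀ u v p, (u, p) ∈ frontier E → (v, p) ∈ frontier E) :
    ∃ n1 n2 n3 c : ℝ, (n1 ≠ 0 ∨ n2 ≠ 0 ∨ n3 ≠ 0) ∧ ∀ P : XX, P ∈ frontier E ↔
      n1 * P.2.1 + n2 * P.2.2.1 + n3 * P.2.2.2 = c := by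
  let Z : Set HH := {p | ((0:ℝ), p) ∈ frontier E}
  have hZ : LC Z := by
    intro p hp q hq h s
    have := fr_line E hC hC' (0, p) (0, q) hp hq h s
    simp only [Z, mem_setOf_eq]
    convert this using 1
    simp
  have hdisj : ∀ x, x ∈ interior E → x ∉ frontier E := by
    intro x hx hf; exact hf.2 hx
  obtain ⟨n1, n2, n3, c, hn, hsub⟩ := in_plane Z hZ
    (by
      obtain ⟨⟨u, p⟩, hx⟩ := hA
      exact ⟨p, fun h => hdisj _ hx (hinv _ _ _ h)⟩)
    (by
      obtain ⟨⟨u, p⟩, hx⟩ := hW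
      exact ⟨p, hinv _ _ _ hx⟩)
    (by
      intro q hq
      obtain ⟨x, y, hxy, hR⟩ := circ E hC hC' (0, q) hq 0 1 0 0 0 1
      refine ⟨x, y, ?_, ?_⟩
      · by_contra h
        push Not at h
        rw [h.1, h.2] at hxy; norm_num at hxy
      · have h0 : pt q x y 0 ∈ Z := by rw [pt_zero]; exact hq
        have h1 : pt q x y 1 ∈ Z := by
          have := hinv _ 0 _ (show ((_, _) : XX) ∈ frontier E from hR)
          simp only [Z, mem_setOf_eq]
          convert this using 2
          simp [pt]
        exact fun s => lc_line hZ h0 h1 (by norm_num) s)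
  have hsub' : ∀ q ∈ frontier E, n1 * q.2.1 + n2 * q.2.2.1 + n3 * q.2.2.2 = c := by
    rintro ⟨u, p⟩ h
    exact hsub p (hinv _ _ _ h)
  refine ⟨n1, n2, n3, c, hn, fun P => ⟨hsub' P, fun hP => ?_⟩⟩
  rcases tri E P with h | h | h
  · exact (inv_plane_aux E n1 n2 n3 c hn hsub' hB P hP h).elim
  · refine (inv_plane_aux Eᶜ n1 n2 n3 c hn ?_ ?_ P hP h).elim
    · rw [frontier_compl]; exact hsub'
    · rw [compl_compl]; exact hA
  · exact h

theorem main4 (E : Set XX) (hC : HC4 E) (hC' : HC4 Eᶜ) (h1 : E ≠ ∅) (h2 : E ≠ univ) :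
    ∃ m n1 n2 n3 c : ℝ, (m ≠ 0 ∨ n1 ≠ 0 ∨ n2 ≠ 0 ∨ n3 ≠ 0) ∧ ∀ P : XX, P ∈ frontier E ↔
      m * P.1 + n1 * P.2.1 + n2 * P.2.2.1 + n3 * P.2.2.2 = c := by
  have hEne := nonempty_iff_ne_empty.2 h1
  have hEcne := nonempty_compl.2 h2
  have hA : (interior E).Nonempty := closure_nonempty_iff.1 (hEne.mono (reg4 E hC hC'))
  have hB : (interior Eᶜ).Nonempty := closure_nonempty_iff.1
    (hEcne.mono (reg4 Eᶜ hC' (by rwa [compl_compl])))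
  have hW : (frontier E).Nonempty := nonempty_frontier_iff.2 ⟨hEne, h2⟩
  by_cases hinv : ∀ u v p, (u, p) ∈ frontier E → (v, p) ∈ frontier E
  · obtain ⟨n1, n2, n3, c, hn, h⟩ := inv_case E hC hC' hA hB hW hinv
    exact ⟨0, n1, n2, n3, c, Or.inr hn, fun P => by rw [h P]; simp⟩
  · push Not at hinv
    obtain ⟨u, v, p, hu, hv⟩ := hinv
    have hG : Gd (frontier E) p := by
      refine ⟨u, hu, fun w hw => ?_⟩
      by_contra hne
      apply hv
      have hd : w - u ≠ 0 := sub_ne_zero.2 hne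
      have := fr_line E hC hC' (u, p) (w, p) hu hw (al_refl p) ((v - u) / (w - u))
      convert this using 1
      ext
      · simp; field_simp; ring
      all_goals simp; ring
    obtain ⟨α, β, γ, δ, h⟩ := graph_case E hC hC' p hG
    refine ⟨1, -β, -γ, -δ, α, Or.inl one_ne_zero, fun P => ?_⟩
    rw [h P]
    constructor <;> intro h <;> linarith

def e4 : XX ≃ₜ (Fin 4 → ℝ) where
  toFun P := ![P.2.1, P.2.2.1, P.1, P.2.2.2]
  invFun v := (v 2, v 0, v 1, v 3)
  left_inv P := by simp
  right_inv v := by ext i; fin_cases i <;> rfl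
  continuous_toFun := by
    refine continuous_pi fun i => ?_
    fin_cases i <;> simp <;> fun_prop
  continuous_invFun := by fun_prop

theorem hc4_of (E : Set (Fin 4 → ℝ)) (h : HRConvex E) : HC4 (e4 ⁻¹' E) := by
  rintro ⟨u, x, y, t⟩ hp ⟨u', x', y', t'⟩ hq hal s hs hs'
  simp only [al] at hal
  have ht : t' = t + 2 * (y * x' - x * y') := by linarith
  subst ht
  have := h _ hp (x' - x) (y' - y) (u' - u) (by
    convert (show _ ∈ E from hq) using 1
    ext i; fin_cases i <;> simp [hmul, e4] <;> ring) s hs hs'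
  show _ ∈ E
  convert this using 1
  ext i; fin_cases i <;> simp [hmul, e4] <;> ring

end

/-- **Monotone sets in `ℍ×ℝ`:** the boundary of a nontrivial precisely monotone set
is an affine hyperplane. -/
theorem monotone_boundary_is_hyperplane
    (E : Set (Fin 4 → ℝ)) (hE : PreciselyMonotone E)
    (h1 : E ≠ ∅) (h2 : E ≠ Set.univ) :
    ∃ ν : Fin 4 → ℝ, ν ≠ 0 ∧ ∃ c : ℝ,
      frontier E = {v : Fin 4 → ℝ | ∑ i, v i * ν i = c} := by
  obtain ⟨m, n1, n2, n3, c, hn, h⟩ := main4 (e4 ⁻¹' E) (hc4_of E hE.1) (hc4_of Eᶜ hE.2)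
    (by
      intro h0
      apply h1
      rw [← e4.image_preimage E, h0, Set.image_empty])
    (by
      intro h0
      apply h2
      rw [← e4.image_preimage E, h0, Set.image_univ, e4.surjective.range_eq])
  refine ⟨![n1, n2, m, n3], ?_, c, ?_⟩
  · intro h0
    have a0 := congrFun h0 0
    have a1 := congrFun h0 1
    have a2 := congrFun h0 2
    have a3 := congrFun h0 3
    simp at a0 a1 a2 a3
    tauto
  · ext v
    have hv := h (e4.symm v)
    rw [← e4.preimage_frontier, Set.mem_preimage, e4.apply_symm_apply] at hv
    rw [hv, Set.mem_setOf_eq, Fin.sum_univ_four]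
    have : e4.symm v = (v 2, v 0, v 1, v 3) := rfl
    rw [this]
    simp
    constructor <;> intro h <;> linarith
end
end

section
/- Assume the Hörmander condition. Then there exists p ∈ ℕ such that for every ξ ∈ Z there is c₀ > 0 with the following property: for every r with 0 < r ≤ c₀, the image under Γ of the Euclidean open ball in Z^p centered at (ξ,ξ,…,ξ) of radius r contains the Euclidean open ball in Z × T centered at Γ(ξ,…,ξ) of radius c₀ r². In particular Γ is open at every point (ξ,…,ξ) ∈ Z^p. -/
/- `Z = ℝ^m`, `T = ℝ^ℓ`, `Q : Z × Z → T` bilinear skew-symmetric, and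
`Γ(u₁,…,u_p) = (Σ_j u_j, Σ_{j<k} Q(u_j,u_k))`. -/

noncomputable section

abbrev ZS (m : ℕ) := EuclideanSpace ℝ (Fin m)

abbrev TS (l : ℕ) := EuclideanSpace ℝ (Fin l)

/-- The multiexponential map `Γ : Z^p → Z × T`. -/
def Gam {m l : ℕ} (Q : ZS m →ₗ[ℝ] ZS m →ₗ[ℝ] TS l) (p : ℕ)
    (u : Fin p → ZS m) : ZS m × TS l :=
  (∑ j, u j,
   ∑ jk ∈ Finset.univ.filter (fun jk : Fin p × Fin p => jk.1 < jk.2),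
      Q (u jk.1) (u jk.2))


theorem aux_self {m l : ℕ} (Q : ZS m →ₗ[ℝ] ZS m →ₗ[ℝ] TS l)
    (hskew : ∀ z ζ : ZS m, Q z ζ = - Q ζ z) (z : ZS m) : Q z z = 0 := by
  have h : (2:ℝ) • Q z z = 0 := by
    rw [two_smul]
    exact add_eq_zero_iff_eq_neg.2 (hskew z z)
  simpa using h

theorem aux_Gam_snd {m l : ℕ} (Q : ZS m →ₗ[ℝ] ZS m →ₗ[ℝ] TS l) (p : ℕ) (u : Fin p → ZS m) :
    (Gam Q p u).2 = ∑ j, ∑ k, if j < k then Q (u j) (u k) else 0 := by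
  simp only [Gam]
  rw [Finset.sum_filter, Fintype.sum_prod_type]

theorem aux_Gam_cons {m l : ℕ} (Q : ZS m →ₗ[ℝ] ZS m →ₗ[ℝ] TS l) (p : ℕ) (x : ZS m)
    (u : Fin p → ZS m) :
    Gam Q (p+1) (Fin.cons x u) = (x + (Gam Q p u).1, Q x (Gam Q p u).1 + (Gam Q p u).2) := by
  refine Prod.ext ?_ ?_
  · simp [Gam, Fin.sum_univ_succ]
  · rw [aux_Gam_snd, aux_Gam_snd]
    simp [Gam, Fin.sum_univ_succ, Fin.succ_lt_succ_iff]

theorem aux_Gam_snoc {m l : ℕ} (Q : ZS m →ₗ[ℝ] ZS m →ₗ[ℝ] TS l) (p : ℕ) (x : ZS m)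
    (u : Fin p → ZS m) :
    Gam Q (p+1) (Fin.snoc u x : Fin (p+1) → ZS m) =
      ((Gam Q p u).1 + x, (Gam Q p u).2 + Q (Gam Q p u).1 x) := by
  refine Prod.ext ?_ ?_
  · simp [Gam, Fin.sum_univ_castSucc]
  · rw [aux_Gam_snd, aux_Gam_snd]
    have h : ∀ j : Fin p, ¬ (Fin.last p < j.castSucc) := fun j => not_lt.2 (Fin.le_last _)
    simp [Gam, Fin.sum_univ_castSucc, Fin.castSucc_lt_last, Finset.sum_add_distrib, h]

theorem aux_norm {m : ℕ} (x y : ZS m) : ‖x‖^2 + (‖y - (2:ℝ)•x‖^2 + (‖x - (2:ℝ)•y‖^2 + ‖y‖^2))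
    ≤ 11 * (‖x‖^2 + ‖y‖^2) := by
  have h1 : ‖y - (2:ℝ)•x‖ ≤ ‖y‖ + 2 * ‖x‖ := by
    refine (norm_sub_le _ _).trans ?_
    simp [norm_smul]
  have h2 : ‖x - (2:ℝ)•y‖ ≤ ‖x‖ + 2 * ‖y‖ := by
    refine (norm_sub_le _ _).trans ?_
    simp [norm_smul]
  have h3 := pow_le_pow_left₀ (norm_nonneg _) h1 2
  have h4 := pow_le_pow_left₀ (norm_nonneg _) h2 2
  nlinarith [sq_nonneg (‖x‖ - ‖y‖), sq_nonneg (‖y‖ - 2*‖x‖), sq_nonneg (‖x‖ - 2*‖y‖)]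

theorem aux_blocks {m l : ℕ} (Q : ZS m →ₗ[ℝ] ZS m →ₗ[ℝ] TS l)
    (hskew : ∀ z ζ : ZS m, Q z ζ = - Q ζ z) (ξ : ZS m) (N : ℕ) :
    ∀ x y : Fin N → ZS m, ∃ u : Fin (4*N) → ZS m,
      Gam Q (4*N) u = ((4*N:ℝ) • ξ, (2:ℝ) • ∑ i, Q (x i) (y i)) ∧
      ∑ j, ‖u j - ξ‖^2 ≤ 11 * ∑ i, (‖x i‖^2 + ‖y i‖^2) := by
  have h0 : ∀ z, Q z z = 0 := aux_self Q hskew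
  induction N with
  | zero =>
    intro x y
    refine ⟨fun _ => 0, ?_, ?_⟩
    · simp [Gam]
    · simp
  | succ N ih =>
    intro x y
    obtain ⟨u, hu, hn⟩ := ih (fun i => x i.succ) (fun i => y i.succ)
    set X := x 0 with hX
    set Y := y 0 with hY
    let u4 : Fin (4*N+1) → ZS m := Fin.cons (ξ + Y) u
    let u3 : Fin (4*N+1+1) → ZS m := Fin.cons (ξ + (X - (2:ℝ)•Y)) u4
    let u2 : Fin (4*N+1+1+1) → ZS m := Fin.cons (ξ + (Y - (2:ℝ)•X)) u3
    let u1 : Fin (4*N+1+1+1+1) → ZS m := Fin.cons (ξ + X) u2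
    refine ⟨u1, ?_, ?_⟩
    · change Gam Q (4*N+1+1+1+1) u1 = _
      simp only [u1, u2, u3, u4, aux_Gam_cons, hu]
      refine Prod.ext ?_ ?_
      · simp only
        push_cast
        module
      · simp only [Fin.sum_univ_succ, ← hX, ← hY]
        simp only [map_add, map_sub, map_smul, LinearMap.add_apply, LinearMap.sub_apply,
          LinearMap.smul_apply, h0, hskew Y X, hskew X ξ, hskew Y ξ]
        module
    · change ∑ j : Fin (4*N+1+1+1+1), _ ≤ _
      rw [Fin.sum_univ_succ, Fin.sum_univ_succ, Fin.sum_univ_succ, Fin.sum_univ_succ,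
        Fin.sum_univ_succ (n := N)]
      have := aux_norm X Y
      simp only [u1, u2, u3, u4, Fin.cons_zero, Fin.cons_succ, add_sub_cancel_left, ← hX, ← hY]
      linarith

theorem aux_repr {m l : ℕ} (Q : ZS m →ₗ[ℝ] ZS m →ₗ[ℝ] TS l)
    (hHorm : Submodule.span ℝ (Set.range fun zz : ZS m × ZS m => Q zz.1 zz.2) = ⊤) :
    ∃ (N : ℕ) (K : ℝ), 0 ≤ K ∧ ∀ b : TS l, ∃ x y : Fin N → ZS m,
      (2:ℝ) • ∑ i, Q (x i) (y i) = b ∧ ∑ i, (‖x i‖^2 + ‖y i‖^2) ≤ K * ‖b‖ := by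
  obtain ⟨ι, B0, hB0⟩ : ∃ (ι : Type) (B0 : Module.Basis ι ℝ (TS l)),
      Set.range B0 ⊆ Set.range fun zz : ZS m × ZS m => Q zz.1 zz.2 :=
    ⟨_, Module.Basis.ofSpan hHorm.ge, Module.Basis.ofSpan_subset hHorm.ge⟩
  have := Module.Finite.finite_basis B0
  obtain ⟨N, ⟨e⟩⟩ := Finite.exists_equiv_fin ι
  let B := B0.reindex e
  have hB : ∀ i, ∃ zz : ZS m × ZS m, Q zz.1 zz.2 = B i := by
    intro i
    have : B i ∈ Set.range B0 := by simp [B]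
    exact hB0 this
  choose z hz using hB
  let c : Fin N → ℝ := fun i => ‖LinearMap.toContinuousLinearMap (B.coord i)‖
  have hc : ∀ i b, |B.repr b i| ≤ c i * ‖b‖ := fun i b =>
    (LinearMap.toContinuousLinearMap (B.coord i)).le_opNorm b
  refine ⟨N, ∑ i, c i * (‖(z i).1‖^2 + ‖(z i).2‖^2), ?_, ?_⟩
  · exact Finset.sum_nonneg fun i _ => mul_nonneg (norm_nonneg _) (by positivity)
  intro b
  let s : Fin N → ℝ := fun i => √(|B.repr b i| / 2)
  have hs : ∀ i, s i * s i = |B.repr b i| / 2 := fun i => Real.mul_self_sqrt (by positivity)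
  let t : Fin N → ℝ := fun i => if 0 ≤ B.repr b i then s i else - s i
  have hst : ∀ i, 2 * (s i * t i) = B.repr b i := by
    intro i
    have := hs i
    simp only [t]
    split_ifs with h
    · rw [abs_of_nonneg h] at this; linarith
    · rw [abs_of_neg (not_le.1 h)] at this; linarith
  have htt : ∀ i, t i * t i = s i * s i := by
    intro i
    simp only [t]
    split_ifs <;> ring
  refine ⟨fun i => s i • (z i).1, fun i => t i • (z i).2, ?_, ?_⟩
  · conv_rhs => rw [← B.sum_repr b]
    rw [Finset.smul_sum]
    refine Finset.sum_congr rfl fun i _ => ?_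
    rw [← hst i, ← hz i]
    simp only [map_smul, LinearMap.smul_apply, smul_smul]
    congr 1; ring
  · rw [Finset.sum_mul]
    refine Finset.sum_le_sum fun i _ => ?_
    rw [norm_smul, norm_smul, mul_pow, mul_pow, Real.norm_eq_abs, Real.norm_eq_abs, sq_abs, sq_abs,
      pow_two (s i), pow_two (t i), htt, hs]
    have h1 := hc i b
    have h2 : 0 ≤ ‖(z i).1‖^2 + ‖(z i).2‖^2 := by positivity
    have h3 := abs_nonneg (B.repr b i)
    nlinarith [mul_le_mul_of_nonneg_right h1 h2, mul_nonneg h3 h2]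

/-- **Quadratic openness of the multiexponential map at diagonal points.** -/
theorem Gamma_open_at_diagonal
    (m l : ℕ) (hm : 0 < m) (hl : 0 < l)
    (Q : ZS m →ₗ[ℝ] ZS m →ₗ[ℝ] TS l)
    (hskew : ∀ z ζ : ZS m, Q z ζ = - Q ζ z)
    (hHorm : Submodule.span ℝ (Set.range fun zz : ZS m × ZS m => Q zz.1 zz.2) = ⊤) :
    ∃ p : ℕ, ∀ ξ : ZS m, ∃ c₀ > (0 : ℝ), ∀ r : ℝ, 0 < r → r ≤ c₀ →
      ∀ v : ZS m × TS l,
        Real.sqrt (‖v.1 - (Gam Q p fun _ => ξ).1‖ ^ 2 +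
                   ‖v.2 - (Gam Q p fun _ => ξ).2‖ ^ 2) < c₀ * r ^ 2 →
        ∃ u : Fin p → ZS m,
          Real.sqrt (∑ j, ‖u j - ξ‖ ^ 2) < r ∧ Gam Q p u = v := by
  have h0 : ∀ z, Q z z = 0 := aux_self Q hskew
  obtain ⟨N, K, hK, hrep⟩ := aux_repr Q hHorm
  refine ⟨4*N+1+1, fun ξ => ?_⟩
  have hG : (Gam Q (4*N+1+1) fun _ => ξ) = ((4*N+2:ℝ) • ξ, 0) := by
    refine Prod.ext ?_ ?_
    · simp only [Gam, Finset.sum_const, Finset.card_univ, Fintype.card_fin]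
      rw [← Nat.cast_smul_eq_nsmul ℝ]
      push_cast
      module
    · simp [Gam, h0]
  have hpos : 0 < 2 + 11 * K := by linarith
  refine ⟨1 / (2 + 11 * K), by positivity, fun r hr hrc v hv => ?_⟩
  rw [hG] at hv
  set c := 1 / (2 + 11 * K) with hc
  have hcpos : 0 < c := by positivity
  have hcm : c * (2 + 11 * K) = 1 := by rw [hc]; field_simp
  have hc1 : c ≤ 1 := by nlinarith
  set a := v.1 - (4*N+2:ℝ) • ξ with ha
  simp only [sub_zero] at hv
  have hna : ‖a‖ < c * r^2 :=
    lt_of_le_of_lt (Real.le_sqrt_of_sq_le (by nlinarith [sq_nonneg ‖v.2‖])) hv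
  have hnb : ‖v.2‖ < c * r^2 :=
    lt_of_le_of_lt (Real.le_sqrt_of_sq_le (by nlinarith [sq_nonneg ‖a‖])) hv
  obtain ⟨x, y, hxy, hn⟩ := hrep v.2
  obtain ⟨u, hu, hun⟩ := aux_blocks Q hskew ξ N x y
  rw [hxy] at hu
  let w : Fin (4*N+1) → ZS m := Fin.snoc u (ξ + (1/2:ℝ) • a)
  refine ⟨Fin.cons (ξ + (1/2:ℝ) • a) w, ?_, ?_⟩
  · rw [Real.sqrt_lt' hr, Fin.sum_univ_succ, Fin.sum_univ_castSucc]
    simp only [w, Fin.cons_zero, Fin.cons_succ, Fin.snoc_castSucc, Fin.snoc_last,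
      add_sub_cancel_left]
    have e : ‖(1/2:ℝ) • a‖^2 = ‖a‖^2 / 4 := by
      rw [norm_smul, mul_pow]; norm_num; ring
    rw [e]
    have hr1 : r ≤ 1 := hrc.trans hc1
    have hr2 : r^2 ≤ 1 := by nlinarith
    have hr3 : 0 < r^2 := by positivity
    have ha1 : ‖a‖ ≤ 1 := by nlinarith
    have ha2 : ‖a‖^2 ≤ c * r^2 := by nlinarith [norm_nonneg a]
    have hb2 : K * ‖v.2‖ ≤ K * (c * r^2) := mul_le_mul_of_nonneg_left hnb.le hK
    have : r^2 = 2 * (c * r^2) + 11 * (K * (c * r^2)) := by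
      linear_combination (-r^2) * hcm
    have : 0 < c * r^2 := by positivity
    linarith
  · rw [aux_Gam_cons, aux_Gam_snoc, hu]
    refine Prod.ext ?_ ?_
    · have : v.1 = a + (4*N+2:ℝ) • ξ := by rw [ha]; abel
      simp only [this]
      module
    · simp only [map_add, map_smul, LinearMap.add_apply, LinearMap.smul_apply, h0, hskew a ξ]
      module
end
end

section
/- Let E ⊆ G be precisely monotone, assume the Hörmander condition, and suppose the origin (0,0) lies in ∂E. Then either the horizontal plane {(ζ,0) : ζ ∈ Z} is contained in ∂E, or there exist a unit vector ξ ∈ Z, an open neighborhood W of the origin in ξ^⊥ × T (where ξ^⊥ is the orthogonal complement of ξ in Z), and a continuous function ψ : W → ℝ such that: (i) {(η + ψ(η,τ)ξ, τ + ψ(η,τ)Q(η,ξ)) : (η,τ) ∈ W} ⊆ ∂E; (ii) {(η + sξ, τ + sQ(η,ξ)) : (η,τ) ∈ W, s > ψ(η,τ)} ⊆ Int(E); (iii) {(η + sξ, τ + sQ(η,ξ)) : (η,τ) ∈ W, s < ψ(η,τ)} ⊆ Int(G∖E). -/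
/- Step-two Carnot group `G = Z × T` with `Z = ℝ^m`, `T = ℝ^ℓ` and group law
`(z,t)·(ζ,τ) = (z+ζ, t+τ+Q(z,ζ))` for a bilinear skew-symmetric `Q`. -/

noncomputable section

/-- Group law of the step-two group. -/
def gmul {m l : ℕ} (Q : ZS m →ₗ[ℝ] ZS m →ₗ[ℝ] TS l)
    (p q : ZS m × TS l) : ZS m × TS l :=
  (p.1 + q.1, p.2 + q.2 + Q p.1 q.1)

/-- Horizontal convexity. -/
def HConvex {m l : ℕ} (Q : ZS m →ₗ[ℝ] ZS m →ₗ[ℝ] TS l)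
    (C : Set (ZS m × TS l)) : Prop :=
  ∀ p : ZS m × TS l, ∀ u : ZS m, p ∈ C → gmul Q p (u, 0) ∈ C →
    ∀ s : ℝ, 0 ≤ s → s ≤ 1 → gmul Q p (s • u, 0) ∈ C

open Filter Topology

section aux
variable {m l : ℕ} {Q : ZS m →ₗ[ℝ] ZS m →ₗ[ℝ] TS l}

lemma Q_cont (Q : ZS m →ₗ[ℝ] ZS m →ₗ[ℝ] TS l) :
    Continuous fun q : ZS m × ZS m => Q q.1 q.2 := by
  let Q' : ZS m →L[ℝ] ZS m →L[ℝ] TS l :=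
    LinearMap.toContinuousLinearMap
      ((LinearMap.toContinuousLinearMap : (ZS m →ₗ[ℝ] TS l) ≃ₗ[ℝ] _).toLinearMap ∘ₗ Q)
  have : Continuous fun q : ZS m × ZS m => Q' q.1 q.2 := by fun_prop
  exact this

lemma gmul_cont {X : Type*} [TopologicalSpace X] (Q : ZS m →ₗ[ℝ] ZS m →ₗ[ℝ] TS l)
    {f g : X → ZS m × TS l} (hf : Continuous f) (hg : Continuous g) :
    Continuous fun x => gmul Q (f x) (g x) := by
  have h := (Q_cont Q).comp (hf.fst.prodMk hg.fst)
  exact (hf.fst.add hg.fst).prodMk ((hf.snd.add hg.snd).add h)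

lemma Q_self (hskew : ∀ z ζ : ZS m, Q z ζ = - Q ζ z) (u : ZS m) : Q u u = 0 := by
  have h := hskew u u
  have h2 : (2 : ℝ) • Q u u = 0 := by
    rw [two_smul]; nth_rewrite 1 [h]; simp
  simpa using h2

/-- moving along a line -/
lemma gmul_line (hskew : ∀ z ζ : ZS m, Q z ζ = - Q ζ z) (p : ZS m × TS l) (u : ZS m) (c d : ℝ) :
    gmul Q (gmul Q p (c • u, 0)) (d • u, 0) = gmul Q p ((c + d) • u, 0) := by
  ext1
  · simp [gmul]; module
  · simp [gmul, Q_self hskew]; module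

lemma single_step (hskew : ∀ z ζ : ZS m, Q z ζ = - Q ζ z) {E : Set (ZS m × TS l)}
    (hE : HConvex Q E) {p : ZS m × TS l} (hp : p ∈ interior E) (u : ZS m) {c h : ℝ}
    (hc : 0 < c) (hh : 0 < h) :
    ∀ᶠ y : (ZS m × TS l) × ZS m in 𝓝 (gmul Q p (c • u, 0), 0),
      y.1 ∈ Eᶜ → gmul Q y.1 (h • u + y.2, 0) ∈ Eᶜ := by
  have hcont : Continuous fun y : (ZS m × TS l) × ZS m =>
      gmul Q y.1 (-(c / h) • (h • u + y.2), 0) :=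
    gmul_cont Q (by fun_prop) (by fun_prop)
  have ht := hcont.tendsto' (gmul Q p (c • u, 0), 0) p (by
    have e : -(c / h) • (h • u + (0 : ZS m)) = (-c) • u := by
      rw [add_zero, smul_smul]; congr 1; field_simp
    simp only [e]
    rw [gmul_line hskew]; simp [gmul])
  filter_upwards [ht.eventually (isOpen_interior.mem_nhds hp)] with y hy hA hcon
  apply hA
  have hy' := interior_subset hy
  generalize h • u + y.2 = w at hy' hcon
  obtain ⟨x, v⟩ := y
  simp only at *
  have hhc : 0 < c / h := by positivity
  generalize c / h = k at hy' hhc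
  have h1 : gmul Q (gmul Q x (-k • w, 0)) ((1 + k) • w, 0) = gmul Q x (w, 0) := by
    rw [gmul_line hskew]; congr 2; module
  have := hE _ ((1 + k) • w) hy' (by rw [h1]; exact hcon) (k / (1 + k)) (by positivity)
    (by rw [div_le_one (by positivity)]; linarith)
  rw [smul_smul, div_mul_cancel₀ _ (by positivity), gmul_line hskew] at this
  simpa [gmul] using this

lemma block_id (hskew : ∀ z ζ : ZS m, Q z ζ = - Q ζ z) (x : ZS m × TS l) (u a b : ZS m) (h : ℝ) :
    gmul Q (gmul Q (gmul Q (gmul Q x (h • u + a, 0)) (h • u + ((-2 : ℝ) • a + b), 0))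
      (h • u + (a + (-2 : ℝ) • b), 0)) (h • u + b, 0) =
      gmul Q x ((4 * h) • u, (2 : ℝ) • Q a b) := by
  ext1
  · simp [gmul]; module
  · simp only [gmul, map_add, map_smul, LinearMap.add_apply, LinearMap.smul_apply, Q_self hskew,
      hskew a u, hskew b u, hskew b a]
    module

lemma block (hskew : ∀ z ζ : ZS m, Q z ζ = - Q ζ z) {E : Set (ZS m × TS l)}
    (hE : HConvex Q E) {p : ZS m × TS l} (hp : p ∈ interior E) (u : ZS m) {c h : ℝ}
    (hc : 0 < c) (hh : 0 < h) :
    ∀ᶠ y : (ZS m × TS l) × ZS m × ZS m in 𝓝 (gmul Q p (c • u, 0), 0, 0),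
      y.1 ∈ Eᶜ → gmul Q y.1 ((4 * h) • u, (2 : ℝ) • Q y.2.1 y.2.2) ∈ Eᶜ := by
  let f1 : (ZS m × TS l) × ZS m × ZS m → ZS m × TS l := fun y => gmul Q y.1 (h • u + y.2.1, 0)
  let f2 : (ZS m × TS l) × ZS m × ZS m → ZS m × TS l :=
    fun y => gmul Q (f1 y) (h • u + ((-2 : ℝ) • y.2.1 + y.2.2), 0)
  let f3 : (ZS m × TS l) × ZS m × ZS m → ZS m × TS l :=
    fun y => gmul Q (f2 y) (h • u + (y.2.1 + (-2 : ℝ) • y.2.2), 0)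
  have c1 : Continuous f1 := gmul_cont Q (by fun_prop) (by fun_prop)
  have c2 : Continuous f2 := gmul_cont Q (by fun_prop) (by fun_prop)
  have c3 : Continuous f3 := gmul_cont Q (by fun_prop) (by fun_prop)
  have v1 : f1 (gmul Q p (c • u, 0), 0, 0) = gmul Q p ((c + h) • u, 0) := by
    simp only [f1, add_zero]; rw [gmul_line hskew]
  have v2 : f2 (gmul Q p (c • u, 0), 0, 0) = gmul Q p ((c + h + h) • u, 0) := by
    simp only [f2, add_zero, smul_zero, v1]; rw [gmul_line hskew]
  have v3 : f3 (gmul Q p (c • u, 0), 0, 0) = gmul Q p ((c + h + h + h) • u, 0) := by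
    simp only [f3, add_zero, smul_zero, v2]; rw [gmul_line hskew]
  have t0 := (show Continuous fun y : (ZS m × TS l) × ZS m × ZS m => (y.1, y.2.1) by
    fun_prop).tendsto' (gmul Q p (c • u, 0), 0, 0) (gmul Q p (c • u, 0), 0) rfl
  have t1 := (show Continuous fun y => (f1 y, (-2 : ℝ) • y.2.1 + y.2.2) by
    fun_prop).tendsto' (gmul Q p (c • u, 0), 0, 0) (gmul Q p ((c + h) • u, 0), 0)
      (by simp [v1])
  have t2 := (show Continuous fun y => (f2 y, y.2.1 + (-2 : ℝ) • y.2.2) by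
    fun_prop).tendsto' (gmul Q p (c • u, 0), 0, 0) (gmul Q p ((c + h + h) • u, 0), 0)
      (by simp [v2])
  have t3 := (show Continuous fun y => (f3 y, y.2.2) by
    fun_prop).tendsto' (gmul Q p (c • u, 0), 0, 0) (gmul Q p ((c + h + h + h) • u, 0), 0)
      (by simp [v3])
  filter_upwards [t0.eventually (single_step hskew hE hp u hc hh),
    t1.eventually (single_step hskew hE hp u (c := c + h) (by positivity) hh),
    t2.eventually (single_step hskew hE hp u (c := c + h + h) (by positivity) hh),
    t3.eventually (single_step hskew hE hp u (c := c + h + h + h) (by positivity) hh)]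
    with y h1 h2 h3 h4 hA
  rw [← block_id hskew]
  exact h4 (h3 (h2 (h1 hA)))

lemma sqrt_id (c : ℝ) : (√c + √(-c)) * (√c - √(-c)) = c := by
  rcases le_total 0 c with h | h
  · rw [Real.sqrt_eq_zero_of_nonpos (show -c ≤ 0 by linarith)]
    simp [Real.mul_self_sqrt h]
  · rw [Real.sqrt_eq_zero_of_nonpos h]
    have := Real.mul_self_sqrt (show 0 ≤ -c by linarith)
    linarith

lemma multi (hskew : ∀ z ζ : ZS m, Q z ζ = - Q ζ z) {E : Set (ZS m × TS l)}
    (hE : HConvex Q E) {p : ZS m × TS l} (hp : p ∈ interior E) (u : ZS m)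
    {ι : Type*} (e f : ι → ZS m) (K : Finset ι) : ∀ c d : ℝ, 0 < c → 0 < d →
    ∀ᶠ y : (ZS m × TS l) × (ι → ℝ) in 𝓝 (gmul Q p (c • u, 0), 0),
      y.1 ∈ Eᶜ → gmul Q y.1 (d • u, ∑ k ∈ K, y.2 k • Q (e k) (f k)) ∈ Eᶜ := by
  classical
  induction K using Finset.induction_on with
  | empty =>
    intro c d hc hd
    have t0 := (show Continuous fun y : (ZS m × TS l) × (ι → ℝ) => (y.1, (0 : ZS m)) by
      fun_prop).tendsto' (gmul Q p (c • u, 0), 0) (gmul Q p (c • u, 0), 0) rfl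
    filter_upwards [t0.eventually (single_step hskew hE hp u hc hd)] with y hy
    simpa using hy
  | insert k K hk ih =>
    intro c d hc hd
    let a : (ZS m × TS l) × (ι → ℝ) → ZS m := fun y => (√(y.2 k / 2) + √(-(y.2 k / 2))) • e k
    let b : (ZS m × TS l) × (ι → ℝ) → ZS m := fun y => (√(y.2 k / 2) - √(-(y.2 k / 2))) • f k
    have hab : ∀ y, (2 : ℝ) • Q (a y) (b y) = y.2 k • Q (e k) (f k) := by
      intro y
      simp only [a, b, map_smul, LinearMap.smul_apply, smul_smul]
      congr 1
      have := sqrt_id (y.2 k / 2)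
      linarith
    have t0 := (show Continuous fun y => (y.1, a y, b y) by
      fun_prop).tendsto' (gmul Q p (c • u, 0), 0) (gmul Q p (c • u, 0), 0, 0) (by simp [a, b])
    let g : (ZS m × TS l) × (ι → ℝ) → ZS m × TS l :=
      fun y => gmul Q y.1 ((d / 2) • u, y.2 k • Q (e k) (f k))
    have cg : Continuous g := gmul_cont Q (by fun_prop) (by fun_prop)
    have t1 := (show Continuous fun y => (g y, y.2) by
      fun_prop).tendsto' (gmul Q p (c • u, 0), 0) (gmul Q p ((c + d / 2) • u, 0), 0) (by
        simp only [g, Pi.zero_apply, zero_smul, gmul_line hskew])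
    filter_upwards [t0.eventually (block hskew hE hp u (h := d / 8) hc (by positivity)),
      t1.eventually (ih (c + d / 2) (d / 2) (by positivity) (by positivity))] with y h1 h2 hA
    have h3 := h1 hA
    rw [hab, show 4 * (d / 8) = d / 2 by ring] at h3
    have h4 := h2 h3
    convert h4 using 1
    rw [Finset.sum_insert hk]
    ext1
    · simp [g, gmul]; module
    · simp only [g, gmul, map_add, map_smul, LinearMap.add_apply, LinearMap.smul_apply,
        Q_self hskew]
      module

lemma key (hskew : ∀ z ζ : ZS m, Q z ζ = - Q ζ z)
    (hHorm : Submodule.span ℝ (Set.range fun zz : ZS m × ZS m => Q zz.1 zz.2) = ⊤)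
    {E : Set (ZS m × TS l)}
    (hE : HConvex Q E) {p : ZS m × TS l} (hp : p ∈ interior E) (u : ZS m)
    (hr : gmul Q p (u, 0) ∈ closure Eᶜ) {t : ℝ} (ht : 0 < t) :
    gmul Q p ((1 + t) • u, 0) ∈ interior Eᶜ := by
  let B := Module.Basis.ofSpan hHorm.ge
  have hB : ∀ i, ∃ zz : ZS m × ZS m, Q zz.1 zz.2 = B i := by
    intro i
    exact Module.Basis.ofSpan_subset hHorm.ge (Set.mem_range_self i)
  choose zz hzz using hB
  haveI : Fintype _ := FiniteDimensional.fintypeBasisIndex B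
  have hm := multi hskew hE hp u (fun i => (zz i).1) (fun i => (zz i).2) Finset.univ 1 (t / 2)
    one_pos (by positivity)
  have hs := single_step hskew hE hp u (c := 1 + t / 2) (h := t / 2) (by positivity)
    (by positivity)
  rw [one_smul] at hm
  have hcoef : Continuous fun τ : TS l => B.equivFun τ :=
    LinearMap.continuous_of_finiteDimensional B.equivFun.toLinearMap
  have hQ := Q_cont Q
  let v : (ZS m × TS l) × (ZS m × TS l) → ZS m := fun q => q.2.1 - q.1.1 - t • u
  have cv : Continuous v := by fun_prop
  let τ : (ZS m × TS l) × (ZS m × TS l) → TS l := fun q =>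
    q.2.2 - q.1.2 - Q q.1.1 ((t / 2) • u) - Q (q.1.1 + (t / 2) • u) ((t / 2) • u + v q)
  have cτ : Continuous τ := by
    have h1 : Continuous fun q : (ZS m × TS l) × (ZS m × TS l) => Q q.1.1 ((t / 2) • u) :=
      hQ.comp (f := fun q : (ZS m × TS l) × (ZS m × TS l) => (q.1.1, (t / 2) • u)) (by fun_prop)
    have h2 : Continuous fun q : (ZS m × TS l) × (ZS m × TS l) =>
        Q (q.1.1 + (t / 2) • u) ((t / 2) • u + v q) :=
      hQ.comp (f := fun q : (ZS m × TS l) × (ZS m × TS l) =>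
        (q.1.1 + (t / 2) • u, (t / 2) • u + v q)) (by fun_prop)
    exact ((by fun_prop : Continuous fun q : (ZS m × TS l) × (ZS m × TS l) =>
      q.2.2 - q.1.2).sub h1).sub h2
  let q0 : (ZS m × TS l) × (ZS m × TS l) := (gmul Q p (u, 0), gmul Q p ((1 + t) • u, 0))
  have v0 : v q0 = 0 := by simp [v, q0, gmul]; module
  have τ0 : τ q0 = 0 := by
    simp only [τ, v0]
    simp [q0, gmul, Q_self hskew]; module
  let g : (ZS m × TS l) × (ZS m × TS l) → (ZS m × TS l) := fun q => gmul Q q.1 ((t / 2) • u, τ q)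
  have cg : Continuous g := gmul_cont Q (by fun_prop) (by fun_prop)
  have t1 := (show Continuous fun q : (ZS m × TS l) × (ZS m × TS l) =>
    (q.1, B.equivFun (τ q)) from continuous_fst.prodMk (hcoef.comp cτ)).tendsto' q0
      (gmul Q p (u, 0), 0) (by simp only [τ0, map_zero]; rfl)
  have t2 := (show Continuous fun q => (g q, v q) by fun_prop).tendsto' q0
      (gmul Q p ((1 + t / 2) • u, 0), 0) (by
        simp only [g, v0, τ0]
        rw [← gmul_line hskew, one_smul])
  have hev : ∀ᶠ q in 𝓝 q0, q.1 ∈ Eᶜ → q.2 ∈ Eᶜ := by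
    filter_upwards [t1.eventually hm, t2.eventually hs] with q h1 h2 hA
    have h3 := h1 hA
    have e : ∑ k, B.equivFun (τ q) k • Q (zz k).1 (zz k).2 = τ q := by
      simp only [hzz]; exact B.sum_equivFun (τ q)
    simp only [e] at h3
    have h4 := h2 h3
    convert h4 using 1
    ext1
    · simp only [g, gmul, v]; module
    · simp only [g, gmul, τ]; module
  rw [nhds_prod_eq] at hev
  have hev2 := hev.curry
  obtain ⟨x, hxA, hx⟩ := ((mem_closure_iff_frequently.1 hr).and_eventually hev2).exists
  rw [mem_interior_iff_mem_nhds]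
  filter_upwards [hx] with y hy using hy hxA

/-- Two-sided version along a line. -/
lemma key_up (hskew : ∀ z ζ : ZS m, Q z ζ = - Q ζ z)
    (hHorm : Submodule.span ℝ (Set.range fun zz : ZS m × ZS m => Q zz.1 zz.2) = ⊤)
    {E : Set (ZS m × TS l)} (hE : HConvex Q E) {p : ZS m × TS l} (ξ : ZS m) {a b c : ℝ}
    (ha : gmul Q p (a • ξ, 0) ∈ interior E) (hb : gmul Q p (b • ξ, 0) ∈ closure Eᶜ)
    (h : 0 < (c - b) * (b - a)) : gmul Q p (c • ξ, 0) ∈ interior Eᶜ := by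
  have hab : b - a ≠ 0 := by rintro h'; simp [h'] at h
  have := key hskew hHorm hE ha ((b - a) • ξ) (by rw [gmul_line hskew]; simpa using hb)
    (t := (c - b) / (b - a)) (by
      have : (c - b) / (b - a) = (c - b) * (b - a) / (b - a) ^ 2 := by field_simp
      rw [this]; positivity)
  rw [smul_smul, gmul_line hskew] at this
  convert this using 4
  field_simp; ring

lemma fr_cl {X : Type*} [TopologicalSpace X] {E : Set X} {x : X} (h : x ∈ frontier E) :
    x ∈ closure E ∧ x ∈ closure Eᶜ := by
  rwa [frontier_eq_closure_inter_closure] at h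

lemma final (hskew : ∀ z ζ : ZS m, Q z ζ = - Q ζ z)
    (hHorm : Submodule.span ℝ (Set.range fun zz : ZS m × ZS m => Q zz.1 zz.2) = ⊤)
    (E : Set (ZS m × TS l)) (hE : HConvex Q E ∧ HConvex Q Eᶜ)
    (h0 : ((0 : ZS m), (0 : TS l)) ∈ frontier E) (ξ : ZS m)
    (hp : gmul Q 0 ((1 : ℝ) • ξ, 0) ∈ interior E)
    (hn : gmul Q 0 ((-1 : ℝ) • ξ, 0) ∈ interior Eᶜ) :
      ∃ W : Set (↥((ℝ ∙ ξ)ᗮ) × TS l), IsOpen W ∧ (0 : ↥((ℝ ∙ ξ)ᗮ) × TS l) ∈ W ∧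
      ∃ ψ : (↥((ℝ ∙ ξ)ᗮ) × TS l) → ℝ, ContinuousOn ψ W ∧
        (∀ p ∈ W,
          (((p.1 : ZS m) + ψ p • ξ, p.2 + ψ p • Q (p.1 : ZS m) ξ) ∈ frontier E)) ∧
        (∀ p ∈ W, ∀ s : ℝ, ψ p < s →
          (((p.1 : ZS m) + s • ξ, p.2 + s • Q (p.1 : ZS m) ξ) ∈ interior E)) ∧
        (∀ p ∈ W, ∀ s : ℝ, s < ψ p →
          (((p.1 : ZS m) + s • ξ, p.2 + s • Q (p.1 : ZS m) ξ) ∈ interior Eᶜ)) := by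
  let Φ : (↥((ℝ ∙ ξ)ᗮ) × TS l) → ℝ → ZS m × TS l :=
    fun p s => gmul Q ((p.1 : ZS m), p.2) (s • ξ, 0)
  have hΦ : ∀ p s, ((p.1 : ZS m) + s • ξ, p.2 + s • Q (p.1 : ZS m) ξ) = Φ p s := by
    intro p s; simp [Φ, gmul]
  have cΦ : Continuous fun q : (↥((ℝ ∙ ξ)ᗮ) × TS l) × ℝ => Φ q.1 q.2 :=
    gmul_cont Q (by fun_prop) (by fun_prop)
  have cΦ1 : ∀ s, Continuous fun p => Φ p s := fun s =>
    cΦ.comp (f := fun p => (p, s)) (by fun_prop)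
  have cΦ2 : ∀ p, Continuous (Φ p) := fun p => cΦ.comp (f := fun s => (p, s)) (by fun_prop)
  let W : Set (↥((ℝ ∙ ξ)ᗮ) × TS l) := {p | Φ p 1 ∈ interior E ∧ Φ p (-1) ∈ interior Eᶜ}
  have oW : IsOpen W :=
    (isOpen_interior.preimage (cΦ1 1)).inter (isOpen_interior.preimage (cΦ1 (-1)))
  have hex : ∀ p, ∃ s, p ∈ W → Φ p s ∈ frontier E := by
    intro p
    by_cases hpW : p ∈ W
    · by_contra! hcon
      have hcon' : ∀ s, Φ p s ∉ frontier E := fun s => (hcon s).2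
      have hcl : IsClopen (Φ p ⁻¹' (interior E)) := by
        refine ⟨?_, isOpen_interior.preimage (cΦ2 p)⟩
        have : Φ p ⁻¹' (interior E) = Φ p ⁻¹' (closure E) := by
          ext s
          refine ⟨fun h => subset_closure (interior_subset h), fun h => ?_⟩
          by_contra h'
          exact hcon' s ⟨h, h'⟩
        rw [this]; exact isClosed_closure.preimage (cΦ2 p)
      rcases isClopen_iff.1 hcl with h | h
      · exact (h ▸ (show (1 : ℝ) ∈ Φ p ⁻¹' (interior E) from hpW.1) : (1 : ℝ) ∈ (∅ : Set ℝ))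
      · have : (-1 : ℝ) ∈ Φ p ⁻¹' (interior E) := by rw [h]; trivial
        exact interior_subset hpW.2 (interior_subset this)
    · exact ⟨0, fun h => absurd h hpW⟩
  choose ψ hψ using hex
  have disj : ∀ x, x ∈ interior E → x ∉ closure Eᶜ := by
    intro x hx hx'; rw [closure_compl] at hx'; exact hx' hx
  have disj' : ∀ x, x ∈ interior Eᶜ → x ∉ closure E := by
    intro x hx hx'; rw [interior_compl] at hx; exact hx hx'
  have up : ∀ p ∈ W, ∀ s : ℝ, ψ p < s → Φ p s ∈ interior E := by
    intro p hpW s hs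
    obtain ⟨f1, f2⟩ := fr_cl (hψ p hpW)
    have hb : -1 < ψ p := by
      rcases lt_trichotomy (-1) (ψ p) with h | h | h
      · exact h
      · exact absurd f1 (by rw [← h]; exact disj' _ hpW.2)
      · -- `ψ p < -1 < 1`
        exact absurd (key_up hskew hHorm hE.1 ξ hpW.1 f2 (c := ψ p - 1) (by nlinarith)) (by
          intro _
          have h1 := key_up hskew hHorm hE.2 ξ hpW.2 (by rw [compl_compl]; exact f1)
            (c := ψ p - 1) (by nlinarith)
          rw [compl_compl] at h1
          rename_i h2
          exact interior_subset h2 (interior_subset h1))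
    have := key_up hskew hHorm hE.2 ξ hpW.2 (by rw [compl_compl]; exact f1)
            (c := s) (by nlinarith)
    rwa [compl_compl] at this
  have down : ∀ p ∈ W, ∀ s : ℝ, s < ψ p → Φ p s ∈ interior Eᶜ := by
    intro p hpW s hs
    obtain ⟨f1, f2⟩ := fr_cl (hψ p hpW)
    exact key_up hskew hHorm hE.1 ξ (up p hpW (ψ p + 1) (by linarith)) f2 (by nlinarith)
  refine ⟨W, oW, ⟨hp, hn⟩, ψ, ?_, ?_, ?_, ?_⟩
  · intro p hpW
    apply ContinuousAt.continuousWithinAt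
    rw [ContinuousAt, tendsto_order]
    constructor
    · intro a ha
      filter_upwards [oW.mem_nhds hpW, (isOpen_interior.preimage (cΦ1 a)).mem_nhds
        (down p hpW a ha)] with q hq hqa
      by_contra! hcon
      rcases hcon.lt_or_eq with h | h
      · exact interior_subset hqa (interior_subset (up q hq a h))
      · exact disj' _ hqa (h ▸ (fr_cl (hψ q hq)).1)
    · intro a ha
      filter_upwards [oW.mem_nhds hpW, (isOpen_interior.preimage (cΦ1 a)).mem_nhds
        (up p hpW a ha)] with q hq hqa
      by_contra! hcon
      rcases hcon.lt_or_eq with h | h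
      · exact interior_subset (down q hq a h) (interior_subset hqa)
      · exact disj _ hqa (h ▸ (fr_cl (hψ q hq)).2)
  · intro p hpW; rw [hΦ]; exact hψ p hpW
  · intro p hpW s hs; rw [hΦ]; exact up p hpW s hs
  · intro p hpW s hs; rw [hΦ]; exact down p hpW s hs

end aux

/-- **Monotone sets and intrinsic graphs:** at a boundary point (the origin) of a
precisely monotone set, either the horizontal plane is contained in the boundary, or
the boundary is locally an intrinsic graph in some horizontal direction `ξ`. -/
theorem monotone_boundary_is_intrinsic_graph
    (m l : ℕ) (hm : 0 < m) (hl : 0 < l)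
    (Q : ZS m →ₗ[ℝ] ZS m →ₗ[ℝ] TS l)
    (hskew : ∀ z ζ : ZS m, Q z ζ = - Q ζ z)
    (hHorm : Submodule.span ℝ (Set.range fun zz : ZS m × ZS m => Q zz.1 zz.2) = ⊤)
    (E : Set (ZS m × TS l)) (hE : HConvex Q E ∧ HConvex Q Eᶜ)
    (h0 : ((0 : ZS m), (0 : TS l)) ∈ frontier E) :
    (∀ ζ : ZS m, (ζ, (0 : TS l)) ∈ frontier E) ∨
    ∃ ξ : ZS m, ‖ξ‖ = 1 ∧
      ∃ W : Set (↥((ℝ ∙ ξ)ᗮ) × TS l), IsOpen W ∧ (0 : ↥((ℝ ∙ ξ)ᗮ) × TS l) ∈ W ∧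
      ∃ ψ : (↥((ℝ ∙ ξ)ᗮ) × TS l) → ℝ, ContinuousOn ψ W ∧
        (∀ p ∈ W,
          (((p.1 : ZS m) + ψ p • ξ, p.2 + ψ p • Q (p.1 : ZS m) ξ) ∈ frontier E)) ∧
        (∀ p ∈ W, ∀ s : ℝ, ψ p < s →
          (((p.1 : ZS m) + s • ξ, p.2 + s • Q (p.1 : ZS m) ξ) ∈ interior E)) ∧
        (∀ p ∈ W, ∀ s : ℝ, s < ψ p →
          (((p.1 : ZS m) + s • ξ, p.2 + s • Q (p.1 : ZS m) ξ) ∈ interior Eᶜ)) := by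
  by_cases hall : ∀ ζ : ZS m, (ζ, (0 : TS l)) ∈ frontier E
  · exact Or.inl hall
  right
  push Not at hall
  obtain ⟨ζ, hζ⟩ := hall
  obtain ⟨f1, f2⟩ := fr_cl h0
  have hζ0 : ζ ≠ 0 := by rintro rfl; exact hζ h0
  have hnz : 0 < ‖ζ‖ := norm_pos_iff.2 hζ0
  have g0 : ∀ w : ZS m, gmul Q 0 (w, 0) = (w, 0) := by intro w; simp [gmul]
  let ξ : ZS m := ‖ζ‖⁻¹ • ζ
  have hξ : ‖ξ‖ = 1 := by simp [ξ, norm_smul, hnz.ne']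
  have hζξ : ζ = ‖ζ‖ • ξ := by simp [ξ, smul_smul, hnz.ne']
  have z1 : gmul Q 0 ((0 : ℝ) • ξ, 0) ∈ closure E := by rw [g0, zero_smul]; exact f1
  have z2 : gmul Q 0 ((0 : ℝ) • ξ, 0) ∈ closure Eᶜ := by rw [g0, zero_smul]; exact f2
  have hE2 : HConvex Q Eᶜᶜ := by rw [compl_compl]; exact hE.1
  by_cases hi : (ζ, (0 : TS l)) ∈ interior E
  · have h1 : gmul Q 0 (‖ζ‖ • ξ, 0) ∈ interior E := by rw [g0, ← hζξ]; exact hi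
    have h2 : gmul Q 0 ((-1 : ℝ) • ξ, 0) ∈ interior Eᶜ :=
      key_up hskew hHorm hE.1 ξ h1 z2 (by nlinarith)
    have h3 := key_up hskew hHorm hE.2 ξ h2 (by rw [compl_compl]; exact z1) (c := 1) (by norm_num)
    rw [compl_compl] at h3
    exact ⟨ξ, hξ, final hskew hHorm E hE h0 ξ h3 h2⟩
  · have hi' : (ζ, (0 : TS l)) ∈ interior Eᶜ := by
      rw [interior_compl]; intro h; exact hζ ⟨h, hi⟩
    have h1 : gmul Q 0 (‖ζ‖ • ξ, 0) ∈ interior Eᶜ := by rw [g0, ← hζξ]; exact hi'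
    have h2 := key_up hskew hHorm hE.2 ξ h1 (by rw [compl_compl]; exact z1) (c := -1)
      (by nlinarith)
    rw [compl_compl] at h2
    have h3 : gmul Q 0 ((1 : ℝ) • ξ, 0) ∈ interior Eᶜ :=
      key_up hskew hHorm hE.1 ξ h2 z2 (by norm_num)
    refine ⟨-ξ, by simpa using hξ, final hskew hHorm E hE h0 (-ξ) ?_ ?_⟩
    · simpa using h2
    · simpa using h3
end
end

section
/- Let n ≥ 1 and let E ⊆ ℍⁿ be precisely monotone with E ≠ ∅ and E ≠ ℍⁿ. Then there exist a nonzero ν ∈ ℝ^{2n+1} and c ∈ ℝ such that, setting Ω = {v ∈ ℝ^{2n+1} : ⟨v,ν⟩ > c}, one has Ω ⊆ E ⊆ closure(Ω). -/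
/- The Heisenberg group `ℍⁿ = ℂⁿ × ℝ` with law
`(z,t)·(ζ,τ) = (z+ζ, t+τ+2 Im(Σ_j z_j conj(ζ_j)))`. -/

noncomputable section

/-- Group law of `ℍⁿ`. -/
def heisMul {n : ℕ} (p q : (Fin n → ℂ) × ℝ) : (Fin n → ℂ) × ℝ :=
  (p.1 + q.1, p.2 + q.2 + 2 * (∑ j, p.1 j * (starRingEnd ℂ) (q.1 j)).im)

/-- Horizontal convexity in `ℍⁿ`. -/
def HeisConvex {n : ℕ} (C : Set ((Fin n → ℂ) × ℝ)) : Prop :=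
  ∀ p : (Fin n → ℂ) × ℝ, ∀ ζ : Fin n → ℂ, p ∈ C → heisMul p (ζ, 0) ∈ C →
    ∀ s : ℝ, 0 ≤ s → s ≤ 1 → heisMul p (s • ζ, 0) ∈ C


namespace HM
open Set Filter Topology

abbrev P3 := ℝ × ℝ × ℝ

def conn (p q : P3) : Prop := q.2.2 - p.2.2 = p.1 * q.2.1 - p.2.1 * q.1

def lerp (p q : P3) (s : ℝ) : P3 :=
  (p.1 + s * (q.1 - p.1), p.2.1 + s * (q.2.1 - p.2.1), p.2.2 + s * (q.2.2 - p.2.2))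

def HC (C : Set P3) : Prop :=
  ∀ p q, p ∈ C → q ∈ C → conn p q → ∀ s, 0 ≤ s → s ≤ 1 → lerp p q s ∈ C

def Mono (E : Set P3) : Prop := HC E ∧ HC Eᶜ

lemma Mono.compl {E : Set P3} (h : Mono E) : Mono Eᶜ := ⟨h.2, by rw [compl_compl]; exact h.1⟩

structure IsAut (g h : P3 → P3) : Prop where
  gc : Continuous g
  hc : Continuous h
  gh : ∀ v, g (h v) = v
  hg : ∀ v, h (g v) = v
  cn : ∀ p q, conn p q → conn (g p) (g q)
  lp : ∀ p q s, g (lerp p q s) = lerp (g p) (g q) s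

def Half (E : Set P3) : Prop :=
  ∃ f : P3 → ℝ, (∀ p q s, f (lerp p q s) = f p + s * (f q - f p)) ∧ (∃ v, 0 < f v) ∧
    ∀ v, (0 < f v → v ∈ E) ∧ (f v < 0 → v ∉ E)

section aut
variable {g h : P3 → P3}

lemma IsAut.hlp (A : IsAut g h) (p q : P3) (s : ℝ) : h (lerp p q s) = lerp (h p) (h q) s := by
  have := A.lp (h p) (h q) s
  rw [A.gh, A.gh] at this
  rw [← this, A.hg]

lemma IsAut.hcpre (A : IsAut g h) {E : Set P3} (hE : HC E) : HC (g ⁻¹' E) := by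
  intro p q hp hq hc s h0 h1
  show g _ ∈ E
  rw [A.lp]
  exact hE _ _ hp hq (A.cn _ _ hc) s h0 h1

lemma IsAut.mono (A : IsAut g h) {E : Set P3} (hE : Mono E) : Mono (g ⁻¹' E) :=
  ⟨A.hcpre hE.1, A.hcpre hE.2⟩

def IsAut.homeo (A : IsAut g h) : P3 ≃ₜ P3 where
  toFun := g
  invFun := h
  left_inv := A.hg
  right_inv := A.gh
  continuous_toFun := A.gc
  continuous_invFun := A.hc

lemma IsAut.int (A : IsAut g h) (E : Set P3) (v : P3) : v ∈ interior (g ⁻¹' E) ↔ g v ∈ interior E := by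
  have := A.homeo.preimage_interior E
  exact (Set.ext_iff.1 this v).symm

lemma IsAut.clo (A : IsAut g h) (E : Set P3) (v : P3) : v ∈ closure (g ⁻¹' E) ↔ g v ∈ closure E := by
  have := A.homeo.preimage_closure E
  exact (Set.ext_iff.1 this v).symm

lemma IsAut.fro (A : IsAut g h) (E : Set P3) (v : P3) : v ∈ frontier (g ⁻¹' E) ↔ g v ∈ frontier E := by
  have := A.homeo.preimage_frontier E
  exact (Set.ext_iff.1 this v).symm

lemma IsAut.half (A : IsAut g h) {E : Set P3} (hE : Half (g ⁻¹' E)) : Half E := by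
  obtain ⟨f, f1, ⟨v, hv⟩, f3⟩ := hE
  refine ⟨f ∘ h, fun p q s => ?_, ⟨g v, ?_⟩, fun w => ?_⟩
  · simp [A.hlp, f1]
  · simpa [A.hg] using hv
  · have := f3 (h w)
    simpa [A.gh] using this

end aut

noncomputable def gA (a b c d : ℝ) (v : P3) (p : P3) : P3 :=
  (v.1 + a * p.1 + b * p.2.1, v.2.1 + c * p.1 + d * p.2.1,
   v.2.2 + (a * d - b * c) * p.2.2 + v.1 * (c * p.1 + d * p.2.1) - v.2.1 * (a * p.1 + b * p.2.1))

noncomputable def hA (a b c d : ℝ) (v : P3) (p : P3) : P3 :=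
  ((d * (p.1 - v.1) - b * (p.2.1 - v.2.1)) / (a * d - b * c),
   (- c * (p.1 - v.1) + a * (p.2.1 - v.2.1)) / (a * d - b * c),
   (p.2.2 - v.2.2 - v.1 * (p.2.1 - v.2.1) + v.2.1 * (p.1 - v.1)) / (a * d - b * c))

lemma isAut {a b c d : ℝ} (hD : a * d - b * c ≠ 0) (v : P3) :
    IsAut (gA a b c d v) (hA a b c d v) where
  gc := by unfold gA; fun_prop
  hc := by unfold hA; fun_prop
  gh := by
    rintro ⟨x, y, t⟩
    obtain ⟨D, hDD⟩ : ∃ D, D = a * d - b * c := ⟨_, rfl⟩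
    simp only [gA, hA, Prod.mk.injEq, ← hDD] at hD ⊢
    refine ⟨?_, ?_, ?_⟩ <;> field_simp <;> rw [hDD] <;> ring
  hg := by
    rintro ⟨x, y, t⟩
    simp only [gA, hA, Prod.mk.injEq]
    refine ⟨?_, ?_, ?_⟩ <;> rw [div_eq_iff hD] <;> ring
  cn := by
    rintro ⟨x, y, t⟩ ⟨x', y', t'⟩ h
    simp only [gA, conn] at *
    linear_combination (a * d - b * c) * h
  lp := by
    rintro ⟨x, y, t⟩ ⟨x', y', t'⟩ s
    simp only [gA, lerp, Prod.mk.injEq]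
    refine ⟨?_, ?_, ?_⟩ <;> ring

/-- points on a line -/
lemma conn_lerp {p q : P3} (h : conn p q) (a b : ℝ) : conn (lerp p q a) (lerp p q b) := by
  simp only [conn, lerp] at *
  linear_combination (b - a) * h

lemma lerp_lerp (p q : P3) (a b s : ℝ) :
    lerp (lerp p q a) (lerp p q b) s = lerp p q (a + s * (b - a)) := by
  simp only [lerp, Prod.mk.injEq]
  refine ⟨?_, ?_, ?_⟩ <;> ring

lemma lerp_zero (p q : P3) : lerp p q 0 = p := by simp [lerp]
lemma lerp_one (p q : P3) : lerp p q 1 = q := by simp [lerp]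

lemma conn_symm {p q : P3} (h : conn p q) : conn q p := by
  simp only [conn] at *; linarith

lemma conn_self (p : P3) : conn p p := by simp only [conn]; ring

lemma disc' {E : Set P3} (hE : HC E) {p q r : P3} (hp : p ∈ interior E) {θ : ℝ} (h0 : 0 < θ)
    (h1 : θ < 1) (hr : r = lerp q p θ) :
    ∃ A ∈ 𝓝 r, ∃ B ∈ 𝓝 q, ∀ x ∈ A, ∀ y ∈ B, y ∈ E → conn y x → x ∈ E := by
  have hcont : Continuous (fun z : P3 × P3 => lerp z.2 z.1 (1 / θ)) := by
    unfold lerp; fun_prop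
  have hval : lerp q r (1 / θ) = p := by
    subst hr
    simp only [lerp]
    ext <;> simp <;> field_simp <;> ring
  have : (fun z : P3 × P3 => lerp z.2 z.1 (1 / θ)) ⁻¹' (interior E) ∈ 𝓝 (r, q) := by
    apply hcont.continuousAt.preimage_mem_nhds
    simp only [hval]
    exact isOpen_interior.mem_nhds hp
  rw [nhds_prod_eq, Filter.mem_prod_iff] at this
  obtain ⟨A, hA, B, hB, hAB⟩ := this
  refine ⟨A, hA, B, hB, fun x hx y hy hyE hc => ?_⟩
  have h2 : lerp y x (1 / θ) ∈ interior E := hAB (Set.mk_mem_prod hx hy)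
  have h3 : conn y (lerp y x (1 / θ)) := by
    have := conn_lerp hc 0 (1 / θ)
    rwa [lerp_zero] at this
  have h4 := hE _ _ hyE (interior_subset h2) h3 θ h0.le h1.le
  have h5 : lerp y (lerp y x (1 / θ)) θ = x := by
    simp only [lerp]
    ext <;> simp <;> field_simp <;> ring
  rwa [h5] at h4

lemma two_normal {E : Set P3} (hE : HC E) {P : ℝ} (hP : 0 < P)
    (hp : ((-P, 0, 0) : P3) ∈ interior E) (hq : ((2, 0, 0) : P3) ∈ closure E) :
    ((0, 0, 0) : P3) ∈ interior E := by
  obtain ⟨A, hA, B, hB, hAB⟩ := disc' hE (p := (-P, 0, 0)) (q := (2, 0, 0)) (r := (1, 0, 0)) hp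
    (θ := 1 / (P + 2)) (by positivity) (by rw [div_lt_one (by positivity)]; linarith)
    (by simp only [lerp]; ext <;> simp; field_simp; ring)
  obtain ⟨A', hA', B', hB', hAB'⟩ := disc' hE (p := (-P, 0, 0)) (q := (1, 0, 0)) (r := (0, 0, 0)) hp
    (θ := 1 / (P + 1)) (by positivity) (by rw [div_lt_one (by positivity)]; linarith)
    (by simp only [lerp]; ext <;> simp; field_simp; ring)
  -- D k y : the point of the disc
  set D : ℝ → P3 → P3 := fun k y => (1, k, y.2.2 + y.1 * k - y.2.1) with hD
  set Eq : P3 → P3 → ℝ := fun d x => (d.2.2 - x.2.2 - x.1 * d.2.1 + x.2.1) / (x.1 - 1) with hEq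
  set e : P3 → P3 → P3 := fun d x => (x.1, x.2.1 + Eq d x, x.2.2 + x.1 * Eq d x) with he
  -- choose h
  have c1 : ∀ σ : ℝ, ∀ᶠ k in 𝓝 (0:ℝ), D (σ * k) (2, 0, 0) ∈ interior (A ∩ B') := by
    intro σ
    have : Continuous (fun k : ℝ => D (σ * k) (2, 0, 0)) := by simp only [hD]; fun_prop
    apply this.continuousAt.eventually_mem
    apply isOpen_interior.mem_nhds
    have : D (σ * 0) (2, 0, 0) = (1, 0, 0) := by simp [hD]
    rw [this]
    exact mem_interior_iff_mem_nhds.2 (Filter.inter_mem hA hB')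
  have c2 : ∀ σ : ℝ, ∀ᶠ k in 𝓝 (0:ℝ), e (D (σ * k) (2, 0, 0)) (0, 0, 0) ∈ interior A' := by
    intro σ
    have : Continuous (fun k : ℝ => e (D (σ * k) (2, 0, 0)) (0, 0, 0)) := by
      simp only [hD, he, hEq]; fun_prop
    apply this.continuousAt.eventually_mem
    apply isOpen_interior.mem_nhds
    have : e (D (σ * 0) (2, 0, 0)) (0, 0, 0) = (0, 0, 0) := by simp [hD, he, hEq]
    rw [this]
    exact mem_interior_iff_mem_nhds.2 hA'
  have c3 : ∀ᶠ k in 𝓝[>] (0:ℝ), 0 < k := eventually_mem_nhdsWithin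
  obtain ⟨k, ⟨⟨⟨hk1, hk2⟩, hk3⟩, hk4⟩, hk0⟩ :=
    (((((c1 1).and (c1 (-1))).and (c2 1)).and (c2 (-1))).filter_mono nhdsWithin_le_nhds
      |>.and c3).exists
  simp only [one_mul, neg_mul, one_mul] at hk1 hk2 hk3 hk4
  -- choose y
  have Dc : ∀ k, Continuous (D k) := by intro k; simp only [hD]; fun_prop
  have y1 : ∀ k, D k (2, 0, 0) ∈ interior (A ∩ B') →
      ∀ᶠ y in 𝓝 ((2, 0, 0) : P3), D k y ∈ interior (A ∩ B') := fun k hk =>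
    (Dc k).continuousAt.eventually_mem (isOpen_interior.mem_nhds hk)
  have ec : ∀ k, Continuous (fun y => e (D k y) (0, 0, 0)) := by
    intro k; simp only [hD, he, hEq]; fun_prop
  have y2 : ∀ k, e (D k (2, 0, 0)) (0, 0, 0) ∈ interior A' →
      ∀ᶠ y in 𝓝 ((2, 0, 0) : P3), e (D k y) (0, 0, 0) ∈ interior A' := fun k hk =>
    (ec k).continuousAt.eventually_mem (isOpen_interior.mem_nhds hk)
  have y3 : ∀ᶠ y in 𝓝 ((2, 0, 0) : P3), Eq (D k y) (0, 0, 0) < 0 := by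
    have : Continuous (fun y => Eq (D k y) (0, 0, 0)) := by simp only [hD, hEq]; fun_prop
    apply this.continuousAt.eventually_lt_const
    simp [hD, hEq]; linarith
  have y4 : ∀ᶠ y in 𝓝 ((2, 0, 0) : P3), 0 < Eq (D (-k) y) (0, 0, 0) := by
    have : Continuous (fun y => Eq (D (-k) y) (0, 0, 0)) := by simp only [hD, hEq]; fun_prop
    apply this.continuousAt.eventually_const_lt
    simp [hD, hEq]; linarith
  obtain ⟨y, hyE, ⟨⟨⟨⟨⟨⟨hyB, h1⟩, h2⟩, h3⟩, h4⟩, h5⟩, h6⟩⟩ := ((mem_closure_iff_frequently.1 hq).and_eventually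
    (((((((show ∀ᶠ y in 𝓝 ((2, 0, 0) : P3), y ∈ B from hB).and (y1 _ hk1)).and (y1 _ hk2)).and
      (y2 _ hk3)).and (y2 _ hk4)).and y3).and y4)).exists
  have hcD : ∀ k, conn y (D k y) := by intro k; simp only [conn, hD]; ring
  have hd1 : D k y ∈ E := hAB _ (interior_subset h1).1 y hyB hyE (hcD _)
  have hd2 : D (-k) y ∈ E := hAB _ (interior_subset h2).1 y hyB hyE (hcD _)
  have hb1 := (interior_subset h1).2
  have hb2 := (interior_subset h2).2
  rw [mem_interior_iff_mem_nhds]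
  have x0 : ∀ᶠ x in 𝓝 ((0, 0, 0) : P3), x.1 < 1 := by
    have : Continuous (fun x : P3 => x.1) := by fun_prop
    exact this.continuousAt.eventually_lt_const (by simp)
  have Eqc : ∀ d, ContinuousAt (Eq d) ((0, 0, 0) : P3) := by
    intro d
    simp only [hEq]
    apply ContinuousAt.div (by fun_prop) (by fun_prop)
    norm_num
  have x1 : ∀ d, e d (0, 0, 0) ∈ interior A' →
      ∀ᶠ x in 𝓝 ((0, 0, 0) : P3), e d x ∈ interior A' := by
    intro d hd
    have : ContinuousAt (e d) ((0, 0, 0) : P3) := by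
      have := Eqc d
      simp only [he]
      fun_prop
    exact this.eventually_mem (isOpen_interior.mem_nhds hd)
  have x2 := (Eqc (D k y)).eventually_lt_const h5
  have x3 := (Eqc (D (-k) y)).eventually_const_lt h6
  filter_upwards [x0, x1 _ h3, x1 _ h4, x2, x3] with x a0 a1 a2 a3 a4
  have hce : ∀ d : P3, d.1 = 1 → conn d (e d x) := by
    intro d hd
    have : Eq d x * (x.1 - 1) = d.2.2 - x.2.2 - x.1 * d.2.1 + x.2.1 := by
      simp only [hEq]
      rw [div_mul_cancel₀]
      linarith
    simp only [conn, he, hd]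
    linear_combination this
  have e1 : e (D k y) x ∈ E := hAB' _ (interior_subset a1) _ hb1 hd1 (hce _ rfl)
  have e2 : e (D (-k) y) x ∈ E := hAB' _ (interior_subset a2) _ hb2 hd2 (hce _ rfl)
  set s1 := Eq (D k y) x
  set s2 := Eq (D (-k) y) x
  have hpos : 0 < s2 - s1 := by linarith
  have := hE _ _ e1 e2 (by simp only [conn, he]; ring) (-s1 / (s2 - s1))
    (div_nonneg (by linarith) hpos.le) (by rw [div_le_one hpos]; linarith)
  convert this using 1
  simp only [lerp, he]
  ext
  · simp
  · simp; field_simp; ring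
  · simp; field_simp; ring

end HM

namespace HM
open Set Filter Topology

lemma two_general {E : Set P3} (hE : HC E) {p q : P3} (hp : p ∈ interior E)
    (hq : q ∈ closure E) (hc : conn p q) {s : ℝ} (h0 : 0 < s) (h1 : s < 1) :
    lerp p q s ∈ interior E := by
  obtain ⟨x, y, t⟩ := p
  obtain ⟨x', y', t'⟩ := q
  by_cases hxy : x' - x = 0 ∧ y' - y = 0
  · obtain ⟨hx, hy⟩ := hxy
    have ht : t' - t = 0 := by
      simp only [conn] at hc
      rw [hc]; linear_combination x * hy - y * hx
    simpa [lerp, hx, hy, ht] using hp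
  have hN : 0 < (x' - x) ^ 2 + (y' - y) ^ 2 := by
    rcases not_and_or.1 hxy with h | h
    · positivity
    · positivity
  set u := (1 - s) / 2 with hu
  have hu0 : 0 < u := by rw [hu]; linarith
  set v := lerp (x, y, t) (x', y', t') s with hv
  have A := isAut (a := u * (x' - x)) (b := - (u * (y' - y))) (c := u * (y' - y))
    (d := u * (x' - x)) (by
      have : 0 < u ^ 2 * ((x' - x) ^ 2 + (y' - y) ^ 2) := by positivity
      nlinarith) v
  have hv0 : gA (u * (x' - x)) (-(u * (y' - y))) (u * (y' - y)) (u * (x' - x)) v (0, 0, 0) = v := by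
    simp [gA]
  have key := two_normal (A.hcpre hE) (P := s / u) (by positivity) ?_ ?_
  · rw [A.int, hv0] at key; exact key
  · rw [A.int]
    convert hp using 1
    simp only [conn] at hc
    simp only [gA, hv, lerp, Prod.mk.injEq]
    refine ⟨?_, ?_, ?_⟩
    · field_simp; ring
    · field_simp; ring
    · field_simp
      linear_combination s * hc
  · rw [A.clo]
    convert hq using 1
    simp only [conn] at hc
    simp only [gA, hv, lerp, Prod.mk.injEq, hu]
    refine ⟨?_, ?_, ?_⟩
    · ring
    · ring
    · linear_combination (-(1 - s)) * hc

lemma not_int_compl {E : Set P3} {q : P3} (h : q ∉ interior Eᶜ) : q ∈ closure E := by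
  rw [interior_compl] at h; simpa using h

lemma fr_cl {E : Set P3} {q : P3} (h : q ∈ frontier E) : q ∈ closure E := h.1
lemma fr_ni {E : Set P3} {q : P3} (h : q ∈ frontier E) : q ∉ interior E := h.2
lemma fr_nic {E : Set P3} {q : P3} (h : q ∈ frontier E) : q ∉ interior Eᶜ := by
  rw [← frontier_compl] at h; exact h.2
lemma not_fr {E : Set P3} {q : P3} (h : q ∉ frontier E) : q ∈ interior E ∨ q ∈ interior Eᶜ := by
  by_cases h1 : q ∈ interior E
  · exact Or.inl h1
  · right; by_contra h2
    exact h ⟨not_int_compl h2, h1⟩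

lemma beyond {E : Set P3} (hE : HC E) {p q : P3} (hp : p ∈ interior E) (hc : conn p q) {s : ℝ}
    (h0 : 0 < s) (h1 : s < 1) (hf : lerp p q s ∈ frontier E) : q ∈ interior Eᶜ := by
  by_contra h
  exact fr_ni hf (two_general hE hp (not_int_compl h) hc h0 h1)

lemma line_aux {E : Set P3} (hE : Mono E) {p q : P3} (hp : p ∈ frontier E)
    (hq : q ∈ frontier E) (hc : conn p q) (s : ℝ) (hs : lerp p q s ∈ interior E) : False := by
  rcases lt_trichotomy s 0 with h | h | h
  · have := two_general hE.1 hs (fr_cl hq) (by simpa [lerp_one] using conn_lerp hc s 1)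
      (s := (-s) / (1 - s)) (div_pos (by linarith) (by linarith))
      (by rw [div_lt_one (by linarith)]; linarith)
    nth_rw 2 [← lerp_one p q] at this
    rw [lerp_lerp, show s + -s / (1 - s) * (1 - s) = 0 by
      rw [div_mul_cancel₀ _ (by linarith)]; ring, lerp_zero] at this
    exact fr_ni hp this
  · rw [h, lerp_zero] at hs; exact fr_ni hp hs
  rcases lt_trichotomy s 1 with h' | h' | h'
  · have a : lerp p q (-1) ∈ interior Eᶜ := by
      apply beyond hE.1 hs (conn_lerp hc s (-1)) (s := s / (s + 1)) (by positivity)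
        (by rw [div_lt_one (by linarith)]; linarith)
      rw [lerp_lerp, show s + s / (s + 1) * (-1 - s) = 0 by field_simp; ring, lerp_zero]
      exact hp
    have b : lerp p q 2 ∈ interior Eᶜ := by
      have h2 : 2 - s ≠ 0 := by linarith
      apply beyond hE.1 hs (conn_lerp hc s 2) (s := (1 - s) / (2 - s))
        (div_pos (by linarith) (by linarith))
        (by rw [div_lt_one (by linarith)]; linarith)
      rw [lerp_lerp, show s + (1 - s) / (2 - s) * (2 - s) = 1 by field_simp; ring, lerp_one]
      exact hq
    have := hE.2 _ _ (interior_subset a) (interior_subset b) (conn_lerp hc _ _) ((s + 1) / 3)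
      (by linarith) (by linarith)
    rw [lerp_lerp, show -1 + (s + 1) / 3 * (2 - -1) = s by ring] at this
    exact this (interior_subset hs)
  · rw [h', lerp_one] at hs; exact fr_ni hq hs
  · have := two_general hE.1 hs (fr_cl hp) (by simpa [lerp_zero] using conn_lerp hc s 0)
      (s := (s - 1) / s) (div_pos (by linarith) (by linarith))
      (by rw [div_lt_one (by linarith)]; linarith)
    nth_rw 2 [← lerp_zero p q] at this
    rw [lerp_lerp, show s + (s - 1) / s * (0 - s) = 1 by field_simp; ring, lerp_one] at this
    exact fr_ni hq this

lemma line {E : Set P3} (hE : Mono E) {p q : P3} (hp : p ∈ frontier E)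
    (hq : q ∈ frontier E) (hc : conn p q) (s : ℝ) : lerp p q s ∈ frontier E := by
  by_contra h
  rcases not_fr h with h | h
  · exact line_aux hE hp hq hc s h
  · exact line_aux hE.compl (by rwa [frontier_compl]) (by rwa [frontier_compl]) hc s h

/-- line through σ in direction (u,v) -/
def ln (σ : P3) (u v r : ℝ) : P3 := (σ.1 + r * u, σ.2.1 + r * v, σ.2.2 + r * (σ.1 * v - σ.2.1 * u))

lemma lines_exist {E : Set P3} (hE : Mono E) {σ : P3} (hσ : σ ∈ frontier E) :
    ∃ u v : ℝ, u ^ 2 + v ^ 2 = 1 ∧ ∀ r, ln σ u v r ∈ frontier E := by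
  set R : ℝ → P3 := fun θ => ln σ (Real.cos θ) (Real.sin θ) 1 with hR
  have hRc : Continuous R := by simp only [hR, ln]; fun_prop
  by_cases hex : ∃ θ, R θ ∈ frontier E
  · obtain ⟨θ, hθ⟩ := hex
    refine ⟨_, _, Real.cos_sq_add_sin_sq θ, fun r => ?_⟩
    have := line hE hσ hθ (by simp only [conn, hR, ln]; ring) r
    convert this using 1
    simp only [hR, ln, lerp, Prod.mk.injEq]
    refine ⟨?_, ?_, ?_⟩ <;> ring
  exfalso
  push Not at hex
  have hcl : IsClopen {θ | R θ ∈ interior E} := by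
    refine ⟨?_, isOpen_interior.preimage hRc⟩
    have : {θ | R θ ∈ interior E} = R ⁻¹' (closure E) := by
      ext θ; exact ⟨fun h => subset_closure (interior_subset h), fun h => by
        by_contra h'; exact hex θ ⟨h, h'⟩⟩
    rw [this]; exact isClosed_closure.preimage hRc
  have hopp : ∀ θ, lerp (R θ) (R (θ + Real.pi)) (1/2) = σ := by
    intro θ
    simp only [hR, ln, lerp, Real.cos_add_pi, Real.sin_add_pi]
    ext
    · simp; ring
    · simp; ring
    · simp; ring
  have hcn : ∀ θ, conn (R θ) (R (θ + Real.pi)) := by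
    intro θ
    simp only [hR, ln, conn, Real.cos_add_pi, Real.sin_add_pi]
    ring
  rcases isClopen_iff.1 hcl with h | h
  · have h0 : ∀ θ, R θ ∈ interior Eᶜ := by
      intro θ
      rcases not_fr (hex θ) with h' | h'
      · have : θ ∈ {θ | R θ ∈ interior E} := h'
        rw [h] at this; exact this.elim
      · exact h'
    have := beyond hE.2 (h0 0) (hcn 0) (s := 1/2) (by norm_num) (by norm_num)
      (by rw [hopp, frontier_compl]; exact hσ)
    exact interior_subset (h0 (0 + Real.pi)) (by simpa using interior_subset this)
  · have h0 : ∀ θ, R θ ∈ interior E := by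
      intro θ
      have : θ ∈ {θ | R θ ∈ interior E} := by rw [h]; trivial
      exact this
    have := beyond hE.1 (h0 0) (hcn 0) (s := 1/2) (by norm_num) (by norm_num)
      (by rw [hopp]; exact hσ)
    exact (interior_subset this) (interior_subset (h0 (0 + Real.pi)))

end HM

namespace HM
open Set Filter Topology

lemma aff_pos {f : ℝ → ℝ} {α β a b s : ℝ} (hf : ∀ s, f s = α + β * s) (ha : 0 < f a) (hb : 0 < f b)
    (h1 : a ≤ s) (h2 : s ≤ b) : 0 < f s := by
  rw [hf] at *
  rcases le_total 0 β with h | h <;> nlinarith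

def xl (z : P3) (s : ℝ) : P3 := (z.1 + s, z.2.1, z.2.2 - z.2.1 * s)

def KK (z w : P3) : ℝ := (w.2.2 - z.2.2 - w.2.1 * z.1 + z.2.1 * w.1) / (w.2.1 - z.2.1)
def T1 (z _w : P3) (s : ℝ) : ℝ := z.2.2 - z.2.1 * s
def T2 (z w : P3) (s : ℝ) : ℝ := -(w.2.2 - w.2.1 * (KK z w - s))
def X1 (z _w : P3) (s : ℝ) : ℝ := z.1 + s
def X2 (z w : P3) (s : ℝ) : ℝ := w.1 + (KK z w - s)
def NN (z w : P3) (s : ℝ) : ℝ := T2 z w s * z.2.1 + T1 z w s * w.2.1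
def DD (z w : P3) (s : ℝ) : ℝ := T2 z w s * X1 z w s + T1 z w s * X2 z w s

def Con (F : Set P3) (a b : ℝ) : Prop := ∀ σ, a ≤ σ → σ ≤ b → ∃ x, 0 < x ∧ ((x, σ * x, 0) : P3) ∈ F

lemma core_alg {F : Set P3} (hF : HC F) {z w : P3} {e1 e2 sa sb : ℝ}
    (hz : ∀ s, 0 ≤ e1 * s → xl z s ∈ F) (hw : ∀ s, 0 ≤ e2 * s → xl w s ∈ F)
    (hab : sa < sb) (h1a : 0 < e1 * sa) (h1b : 0 < e1 * sb)
    (hne : w.2.1 - z.2.1 < 0)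
    (h2a : 0 < e2 * (KK z w - sa)) (h2b : 0 < e2 * (KK z w - sb))
    (t1a : 0 < T1 z w sa) (t1b : 0 < T1 z w sb) (t2a : 0 < T2 z w sa) (t2b : 0 < T2 z w sb)
    (x1a : 0 < X1 z w sa) (x1b : 0 < X1 z w sb) (x2a : 0 < X2 z w sa) (x2b : 0 < X2 z w sb)
    {σ1 σ2 : ℝ} (ga : NN z w sa / DD z w sa < σ1) (gb : σ2 < NN z w sb / DD z w sb) :
    Con F σ1 σ2 := by
  intro σ hs1 hs2
  have pT1 : ∀ s, sa ≤ s → s ≤ sb → 0 < T1 z w s := fun s => aff_pos (f := T1 z w)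
    (α := z.2.2) (β := - z.2.1) (by intro s; simp only [T1]; ring) t1a t1b
  have pT2 : ∀ s, sa ≤ s → s ≤ sb → 0 < T2 z w s := fun s => aff_pos (f := T2 z w)
    (α := -(w.2.2 - w.2.1 * (KK z w))) (β := - w.2.1) (by intro s; simp only [T2]; ring) t2a t2b
  have pX1 : ∀ s, sa ≤ s → s ≤ sb → 0 < X1 z w s := fun s => aff_pos (f := X1 z w)
    (α := z.1) (β := 1) (by intro s; simp only [X1]; ring) x1a x1b
  have pX2 : ∀ s, sa ≤ s → s ≤ sb → 0 < X2 z w s := fun s => aff_pos (f := X2 z w)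
    (α := w.1 + KK z w) (β := -1) (by intro s; simp only [X2]; ring) x2a x2b
  have pe1 : ∀ s, sa ≤ s → s ≤ sb → 0 < e1 * s := fun s => aff_pos (f := fun s => e1 * s)
    (α := 0) (β := e1) (by intro s; ring) h1a h1b
  have pe2 : ∀ s, sa ≤ s → s ≤ sb → 0 < e2 * (KK z w - s) := fun s =>
    aff_pos (f := fun s => e2 * (KK z w - s))
    (α := e2 * KK z w) (β := -e2) (by intro s; ring) h2a h2b
  have pD : ∀ s, sa ≤ s → s ≤ sb → 0 < DD z w s := by
    intro s h h'
    have := pT1 s h h'; have := pT2 s h h'; have := pX1 s h h'; have := pX2 s h h'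
    unfold DD; positivity
  have hcont : ContinuousOn (fun s => NN z w s / DD z w s) (Icc sa sb) := by
    apply ContinuousOn.div
    · unfold NN T1 T2; fun_prop
    · unfold DD X1 X2 T1 T2; fun_prop
    · intro s hs; exact (pD s hs.1 hs.2).ne'
  obtain ⟨s, ⟨hs, hs'⟩, hg⟩ := intermediate_value_Icc hab.le hcont
    (show σ ∈ Icc _ _ from ⟨(ga.trans_le hs1).le, hs2.trans gb.le⟩)
  have a1 := pT1 s hs hs'
  have a2 := pT2 s hs hs'
  have a3 := pX1 s hs hs'
  have a4 := pX2 s hs hs'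
  have a5 := pD s hs hs'
  have c : conn (xl z s) (xl w (KK z w - s)) := by
    have : KK z w * (w.2.1 - z.2.1) = w.2.2 - z.2.2 - w.2.1 * z.1 + z.2.1 * w.1 := by
      unfold KK; rw [div_mul_cancel₀ _ hne.ne]
    simp only [conn, xl]
    linear_combination -this
  have hT : 0 < T1 z w s + T2 z w s := by positivity
  have := hF _ _ (hz s (pe1 s hs hs').le) (hw _ (pe2 s hs hs').le) c
    (T1 z w s / (T1 z w s + T2 z w s)) (by positivity) (by rw [div_le_one hT]; linarith)
  refine ⟨DD z w s / (T1 z w s + T2 z w s), by positivity, ?_⟩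
  convert this using 1
  have hg' : NN z w s = σ * DD z w s := by rw [← hg]; field_simp
  have e1 : (xl z s).2.2 = T1 z w s := rfl
  have e2 : (xl w (KK z w - s)).2.2 = - T2 z w s := by simp only [xl, T2]; ring
  have e3 : (xl z s).1 = X1 z w s := rfl
  have e4 : (xl w (KK z w - s)).1 = X2 z w s := rfl
  have e5 : (xl z s).2.1 = z.2.1 := rfl
  have e6 : (xl w (KK z w - s)).2.1 = w.2.1 := rfl
  simp only [lerp, e1, e2, e3, e4, e5, e6, Prod.mk.injEq]
  refine ⟨?_, ?_, ?_⟩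
  · field_simp; unfold DD; ring
  · field_simp; rw [← hg']; unfold NN; ring
  · field_simp; ring

lemma core {F : Set P3} (hF : HC F) {e1 e2 sa sb b ε : ℝ}
    (hz : ∃ᶠ z in 𝓝 ((1, 1, 1) : P3), ∀ s, 0 ≤ e1 * s → xl z s ∈ F)
    (hw : ∃ᶠ z in 𝓝 ((1 + b, -1, b - 1) : P3), ∀ s, 0 ≤ e2 * s → xl z s ∈ F)
    (hab : sa < sb) (h1a : 0 < e1 * sa) (h1b : 0 < e1 * sb)
    (h2a : 0 < e2 * (- b - sa)) (h2b : 0 < e2 * (- b - sb))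
    (hε : ε ≤ 1) (b1 : -ε < sa) (b2 : sb < ε) :
    ∃ σ1 σ2, -ε < σ1 ∧ σ1 < σ2 ∧ σ2 < ε ∧ Con F σ1 σ2 := by
  have hga : ∀ s, -ε < s → s < ε → -ε < s / (1 + s ^ 2) ∧ s / (1 + s ^ 2) < ε := by
    intro s h h'
    have : 0 < 1 + s ^ 2 := by positivity
    rw [lt_div_iff₀ this, div_lt_iff₀ this]
    have : 0 < ε := by linarith
    constructor <;> nlinarith [mul_nonneg this.le (sq_nonneg s)]
  have hgm : sa / (1 + sa ^ 2) < sb / (1 + sb ^ 2) := by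
    rw [div_lt_div_iff₀ (by positivity) (by positivity)]
    have : sa * sb < 1 := by nlinarith
    nlinarith [mul_pos (sub_pos.2 hab) (sub_pos.2 this)]
  have ⟨g1, _⟩ := hga sa b1 (by linarith)
  have ⟨_, g2⟩ := hga sb (by linarith) b2
  set p := sa / (1 + sa ^ 2)
  set q := sb / (1 + sb ^ 2)
  refine ⟨(2 * p + q) / 3, (p + 2 * q) / 3, by linarith, by linarith, by linarith, ?_⟩
  set v0 : P3 × P3 := ((1, 1, 1), (1 + b, -1, b - 1)) with hv0
  have hK0 : KK v0.1 v0.2 = -b := by simp [hv0, KK]; ring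
  have cK : ContinuousAt (fun v : P3 × P3 => KK v.1 v.2) v0 := by
    unfold KK
    apply ContinuousAt.div (by fun_prop) (by fun_prop)
    norm_num [hv0]
  have cT1 : ∀ s, ContinuousAt (fun v : P3 × P3 => T1 v.1 v.2 s) v0 := by
    intro s; unfold T1; fun_prop
  have cT2 : ∀ s, ContinuousAt (fun v : P3 × P3 => T2 v.1 v.2 s) v0 := by
    intro s; unfold T2; fun_prop
  have cX1 : ∀ s, ContinuousAt (fun v : P3 × P3 => X1 v.1 v.2 s) v0 := by
    intro s; unfold X1; fun_prop
  have cX2 : ∀ s, ContinuousAt (fun v : P3 × P3 => X2 v.1 v.2 s) v0 := by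
    intro s; unfold X2; fun_prop
  have vT1 : ∀ s, T1 v0.1 v0.2 s = 1 - s := by intro s; simp [T1, hv0]
  have vT2 : ∀ s, T2 v0.1 v0.2 s = 1 + s := by intro s; simp only [T2, hK0]; simp [hv0]; ring
  have vX1 : ∀ s, X1 v0.1 v0.2 s = 1 + s := by intro s; simp [X1, hv0]
  have vX2 : ∀ s, X2 v0.1 v0.2 s = 1 - s := by intro s; simp only [X2, hK0]; simp [hv0]; ring
  have vN : ∀ s, NN v0.1 v0.2 s = 2 * s := by
    intro s; simp only [NN, vT1, vT2]; simp [hv0]; ring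
  have vD : ∀ s, DD v0.1 v0.2 s = 2 * (1 + s ^ 2) := by
    intro s; simp only [DD, vT1, vT2, vX1, vX2]; ring
  have vg : ∀ s, NN v0.1 v0.2 s / DD v0.1 v0.2 s = s / (1 + s ^ 2) := by
    intro s; rw [vN, vD, mul_div_mul_left _ _ (by norm_num)]
  have cg : ∀ s, ContinuousAt (fun v : P3 × P3 => NN v.1 v.2 s / DD v.1 v.2 s) v0 := by
    intro s
    have := cT1 s; have := cT2 s; have := cX1 s; have := cX2 s
    apply ContinuousAt.div
    · unfold NN; fun_prop
    · unfold DD; fun_prop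
    · rw [vD]; positivity
  have hev : ∀ᶠ v in 𝓝 v0, v.2.2.1 - v.1.2.1 < 0 ∧
      0 < e2 * (KK v.1 v.2 - sa) ∧ 0 < e2 * (KK v.1 v.2 - sb) ∧
      0 < T1 v.1 v.2 sa ∧ 0 < T1 v.1 v.2 sb ∧ 0 < T2 v.1 v.2 sa ∧ 0 < T2 v.1 v.2 sb ∧
      0 < X1 v.1 v.2 sa ∧ 0 < X1 v.1 v.2 sb ∧ 0 < X2 v.1 v.2 sa ∧ 0 < X2 v.1 v.2 sb ∧
      NN v.1 v.2 sa / DD v.1 v.2 sa < (2 * p + q) / 3 ∧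
      (p + 2 * q) / 3 < NN v.1 v.2 sb / DD v.1 v.2 sb := by
    refine Filter.Eventually.and ?_ <| Filter.Eventually.and ?_ <| Filter.Eventually.and ?_ <|
      Filter.Eventually.and ?_ <| Filter.Eventually.and ?_ <| Filter.Eventually.and ?_ <|
      Filter.Eventually.and ?_ <| Filter.Eventually.and ?_ <| Filter.Eventually.and ?_ <|
      Filter.Eventually.and ?_ <| Filter.Eventually.and ?_ <| Filter.Eventually.and ?_ ?_
    · have : ContinuousAt (fun v : P3 × P3 => v.2.2.1 - v.1.2.1) v0 := by fun_prop
      exact this.eventually_lt_const (by norm_num [hv0])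
    · have : ContinuousAt (fun v : P3 × P3 => e2 * (KK v.1 v.2 - sa)) v0 := by fun_prop
      exact this.eventually_const_lt (by simp only [hK0]; assumption)
    · have : ContinuousAt (fun v : P3 × P3 => e2 * (KK v.1 v.2 - sb)) v0 := by fun_prop
      exact this.eventually_const_lt (by simp only [hK0]; assumption)
    · exact (cT1 _).eventually_const_lt (by simp only [vT1]; linarith)
    · exact (cT1 _).eventually_const_lt (by simp only [vT1]; linarith)
    · exact (cT2 _).eventually_const_lt (by simp only [vT2]; linarith)
    · exact (cT2 _).eventually_const_lt (by simp only [vT2]; linarith)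
    · exact (cX1 _).eventually_const_lt (by simp only [vX1]; linarith)
    · exact (cX1 _).eventually_const_lt (by simp only [vX1]; linarith)
    · exact (cX2 _).eventually_const_lt (by simp only [vX2]; linarith)
    · exact (cX2 _).eventually_const_lt (by simp only [vX2]; linarith)
    · exact (cg _).eventually_lt_const (by simp only [vg]; linarith)
    · exact (cg _).eventually_const_lt (by simp only [vg]; linarith)
  rw [hv0, nhds_prod_eq] at hev
  obtain ⟨z, hz1, hz2⟩ := (hz.and_eventually hev.curry).exists
  obtain ⟨w, hw1, a1, a2, a3, a4, a5, a6, a7, a8, a9, a10, a11, a12, a13⟩ :=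
    (hw.and_eventually hz2).exists
  exact core_alg hF hz1 hw1 hab h1a h1b a1 a2 a3 a4 a5 a6 a7 a8 a9 a10 a11 a12 a13

lemma lemP {E : Set P3} (hE : Mono E) (hd : closure Eᶜ = univ) {ε : ℝ} (h0 : 0 < ε) (h1 : ε ≤ 1) :
    ∃ σ1 σ2, -ε < σ1 ∧ σ1 < σ2 ∧ σ2 < ε ∧ Con Eᶜ σ1 σ2 := by
  have half : ∀ z ∈ Eᶜ, (∀ s, 0 ≤ (1:ℝ) * s → xl z s ∈ Eᶜ) ∨ (∀ s, 0 ≤ (-1:ℝ) * s → xl z s ∈ Eᶜ) := by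
    intro z hz
    by_contra! hcon
    obtain ⟨⟨s, hs, hs'⟩, ⟨r, hr, hr'⟩⟩ := hcon
    simp only [mem_compl_iff, not_not] at hs' hr'
    apply hz
    rcases eq_or_lt_of_le (show r ≤ s by linarith) with h | h
    · have : s = 0 := by linarith
      simpa [xl, this] using hs'
    have := hE.1 _ _ hr' hs' (by simp only [conn, xl]; ring) (-r / (s - r))
      (div_nonneg (by linarith) (by linarith)) (by rw [div_le_one (by linarith)]; linarith)
    convert this using 1
    have : s - r ≠ 0 := by linarith
    simp only [lerp, xl]
    ext
    · simp
      field_simp; ring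
    · simp
    · simp
      field_simp; ring
  have dens : ∀ z0 : P3, (∃ᶠ z in 𝓝 z0, ∀ s, 0 ≤ (1:ℝ) * s → xl z s ∈ Eᶜ) ∨
      (∃ᶠ z in 𝓝 z0, ∀ s, 0 ≤ (-1:ℝ) * s → xl z s ∈ Eᶜ) := by
    intro z0
    rw [← frequently_or_distrib]
    have : z0 ∈ closure Eᶜ := by rw [hd]; trivial
    exact (mem_closure_iff_frequently.1 this).mono half
  rcases dens (1, 1, 1) with h | h
  · rcases dens (1 + (-ε / 2), -1, -ε / 2 - 1) with h' | h'
    · exact core hE.2 (sa := ε / 8) (sb := 3 * ε / 8) h h' (by linarith) (by linarith) (by linarith)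
        (by linarith) (by linarith) h1 (by linarith) (by linarith)
    · exact core hE.2 (sa := 5 * ε / 8) (sb := 7 * ε / 8) h h' (by linarith) (by linarith)
        (by linarith) (by linarith) (by linarith) h1 (by linarith) (by linarith)
  · rcases dens (1 + (ε / 2), -1, ε / 2 - 1) with h' | h'
    · exact core hE.2 (sb := -(5 * ε / 8)) (sa := -(7 * ε / 8)) h h' (by linarith) (by linarith)
        (by linarith) (by linarith) (by linarith) h1 (by linarith) (by linarith)
    · exact core hE.2 (sb := -(ε / 8)) (sa := -(3 * ε / 8)) h h' (by linarith) (by linarith)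
        (by linarith) (by linarith) (by linarith) h1 (by linarith) (by linarith)

lemma not_dense0 {E : Set P3} (hE : Mono E) (hd : closure Eᶜ = univ)
    (h0 : ((0, 0, 0) : P3) ∈ E) : False := by
  obtain ⟨σ1, σ2, a1, a2, a3, hc⟩ := lemP hE hd (ε := 1) (by norm_num) le_rfl
  set m := (σ1 + σ2) / 2 with hm
  have A := isAut (a := -1) (b := m) (c := -m) (d := -1) (by nlinarith) (0, 0, 0)
  have hd' : closure (gA (-1) m (-m) (-1) (0, 0, 0) ⁻¹' E)ᶜ = univ := by
    rw [← preimage_compl]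
    ext v
    rw [A.clo, hd]; simp
  obtain ⟨τ1, τ2, b1, b2, b3, hc'⟩ := lemP (A.mono hE) hd' (ε := (σ2 - σ1) / 8) (by linarith)
    (by linarith)
  obtain ⟨x, hx, hxF⟩ := hc' τ1 le_rfl b2.le
  have hm1 : -1 < m := by linarith
  have hm2 : m < 1 := by linarith
  have ht1 : -(1/4) < τ1 := by linarith
  have ht2 : τ1 < 1/4 := by linarith
  have hden : 1/2 < 1 - τ1 * m := by nlinarith
  have hden0 : 0 < 1 - τ1 * m := by linarith
  have hmm : m ^ 2 < 1 := by nlinarith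
  obtain ⟨x', hx', hxF'⟩ := hc ((τ1 + m) / (1 - τ1 * m))
    (by
      rw [le_div_iff₀ hden0]
      have : σ1 = m - (σ2 - σ1) / 2 := by rw [hm]; ring
      rw [this]
      nlinarith)
    (by
      rw [div_le_iff₀ hden0]
      have : σ2 = m + (σ2 - σ1) / 2 := by rw [hm]; ring
      rw [this]
      nlinarith)
  have hxF2 : gA (-1) m (-m) (-1) (0, 0, 0) (x, τ1 * x, 0) ∈ Eᶜ := hxF
  obtain ⟨D, hD⟩ : ∃ D, D = 1 - τ1 * m := ⟨_, rfl⟩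
  rw [← hD] at hden0 hxF'
  obtain ⟨σ, hσ⟩ : ∃ σ, σ = (τ1 + m) / D := ⟨_, rfl⟩
  rw [← hσ] at hxF'
  have hσD : σ * D = τ1 + m := by rw [hσ]; field_simp
  have hpt : gA (-1) m (-m) (-1) (0, 0, 0) (x, τ1 * x, 0) = (-(x * D), -(σ * (x * D)), 0) := by
    simp only [gA, Prod.mk.injEq]
    refine ⟨?_, ?_, ?_⟩
    · rw [hD]; ring
    · linear_combination (x) * hσD
    · ring
  rw [hpt] at hxF2
  have hsum : 0 < x * D + x' := by positivity
  have := hE.2 _ _ hxF2 hxF' (by simp only [conn]; ring)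
    (x * D / (x * D + x')) (by positivity)
    (by rw [div_le_one hsum]; linarith)
  apply this
  convert h0 using 1
  simp only [lerp]
  ext
  · simp; field_simp; ring
  · simp; field_simp; ring
  · simp

lemma not_dense {E : Set P3} (hE : Mono E) (hne : E.Nonempty) (hd : closure Eᶜ = univ) : False := by
  obtain ⟨v, hv⟩ := hne
  have A := isAut (a := 1) (b := 0) (c := 0) (d := 1) (by norm_num) v
  apply not_dense0 (A.mono hE)
  · rw [← preimage_compl]
    ext w
    rw [A.clo, hd]; simp
  · show gA _ _ _ _ _ _ ∈ E
    simpa [gA] using hv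

/-- one of the interiors is nonempty -/
lemma some_int {E : Set P3} (hE : Mono E) : ∃ v, v ∉ frontier E := by
  by_contra! h
  have h1 : closure E = univ := by ext v; simpa using (h v).1
  have h2 : closure Eᶜ = univ := by
    ext v; simpa using (by have := h v; rw [← frontier_compl] at this; exact this.1 : v ∈ closure Eᶜ)
  have : E.Nonempty := by
    rw [← closure_nonempty_iff, h1]; exact univ_nonempty
  exact not_dense hE this h2

end HM

namespace HM
open Set Filter Topology

lemma gen {S : Set ℝ} (hS : S.Finite) {a : ℝ} {P : ℝ → Prop} (h : ∀ᶠ x in 𝓝 a, P x) :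
    ∃ x, x ∉ S ∧ P x := by
  have hd : Dense Sᶜ := hS.countable.dense_compl ℝ
  exact ((mem_closure_iff_frequently.1 (hd a)).and_eventually h).exists

lemma V1_alg {E : Set P3} (hE : Mono E) {δ : ℝ} (hx : ∀ x : ℝ, ((x, 0, 0) : P3) ∈ frontier E)
    (hy : ∀ y : ℝ, ((0, y, 0) : P3) ∈ frontier E)
    (hn : ∀ y : ℝ, ((1 + δ * y, y, y) : P3) ∈ frontier E)
    {a x y Y X k : ℝ} (ha : a - 1 ≠ 0) (hk : k = a / (a - 1)) (hX : X = 1 + δ * Y) (hX0 : X ≠ 0)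
    (hkX : k + X ≠ 0) (hY : Y ≠ 0)
    (h : Y * (x - a - a * (2 - a) * δ * y) = -2 * a * (a - 1) * y) :
    ((x, y, a * y) : P3) ∈ frontier E := by
  have hka : k * (a - 1) = a := by rw [hk]; field_simp
  have p1 := line hE (hy (-Y / X)) (hn Y) (by simp only [conn, ← hX]; field_simp; ring) (k / (k + X))
  have hw : lerp (0, -Y / X, 0) (1 + δ * Y, Y, Y) (k / (k + X)) =
      (k * X / (k + X), Y * (k - 1) / (k + X), k * Y / (k + X)) := by
    simp only [lerp, ← hX, Prod.mk.injEq]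
    refine ⟨?_, ?_, ?_⟩
    · field_simp; ring
    · field_simp; ring
    · field_simp; ring
  rw [hw] at p1
  have p2 := line hE (hx a) p1 (by
    simp only [conn]; field_simp; linear_combination -Y * hka) (y * (a - 1) * (k + X) / Y)
  convert p2 using 1
  simp only [lerp, Prod.mk.injEq]
  have h1 : (k - 1) * (a - 1) = 1 := by linear_combination hka
  refine ⟨?_, ?_, ?_⟩
  · field_simp
    rw [hX]
    linear_combination h + (-y * (1 + δ * Y) + y * a) * hka
  · field_simp
    linear_combination -y * Y * h1
  · field_simp
    linear_combination -y * Y * hka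

lemma V1 {E : Set P3} (hE : Mono E) {δ : ℝ} (hx : ∀ x : ℝ, ((x, 0, 0) : P3) ∈ frontier E)
    (hy : ∀ y : ℝ, ((0, y, 0) : P3) ∈ frontier E)
    (hn : ∀ y : ℝ, ((1 + δ * y, y, y) : P3) ∈ frontier E) : False := by
  obtain ⟨v, hv⟩ := some_int hE
  have hev : ∀ᶠ z in 𝓝 ((v.2.1, v.2.2, v.1) : P3), ((z.2.2, z.1, z.2.1) : P3) ∉ frontier E := by
    have : Continuous (fun z : P3 => ((z.2.2, z.1, z.2.1) : P3)) := by fun_prop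
    exact (isClosed_frontier.isOpen_compl.preimage this).mem_nhds hv
  rw [nhds_prod_eq] at hev
  obtain ⟨y, hy0, h1⟩ := gen (S := {0}) (by simp) hev.curry
  rw [nhds_prod_eq] at h1
  obtain ⟨T, hT, h2⟩ := gen (S := {0, y, y / 2}) (by simp) h1.curry
  simp only [mem_singleton_iff, mem_insert_iff, not_or] at hy0 hT
  obtain ⟨a, ha⟩ : ∃ a, a = T / y := ⟨_, rfl⟩
  have hay : a * y = T := by rw [ha]; field_simp
  have ha0 : a ≠ 0 := by rintro rfl; simp at hay; exact hT.1 hay.symm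
  have ha1 : a - 1 ≠ 0 := by
    intro h; apply hT.2.1; rw [← hay]; linear_combination y * h
  have ha2 : 2 * a - 1 ≠ 0 := by
    intro h; apply hT.2.2; rw [← hay]; linear_combination y / 2 * h
  set k := a / (a - 1) with hk
  have hk1 : 1 + k ≠ 0 := by
    have : 1 + k = (2 * a - 1) / (a - 1) := by rw [hk]; field_simp; ring
    rw [this]; exact div_ne_zero ha2 ha1
  obtain ⟨x, hxx, h3⟩ := gen (S := {a + a * (2 - a) * δ * y,
    a + a * (2 - a) * δ * y + 2 * a * (a - 1) * y * δ,
    a + a * (2 - a) * δ * y + 2 * a * (a - 1) * y * δ / (1 + k)}) (by simp) h2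
  simp only [mem_singleton_iff, mem_insert_iff, not_or] at hxx
  obtain ⟨b1, b2, b3⟩ := hxx
  apply h3
  obtain ⟨M, hM⟩ : ∃ M, M = x - a - a * (2 - a) * δ * y := ⟨_, rfl⟩
  have hM0 : M ≠ 0 := by
    intro h; apply b1; rw [hM] at h; linear_combination h
  have hM1 : M - 2 * a * (a - 1) * y * δ ≠ 0 := by
    intro h; apply b2; rw [hM] at h; linear_combination h
  have hM2 : (1 + k) * M - 2 * a * (a - 1) * y * δ ≠ 0 := by
    intro h; apply b3
    have : M = 2 * a * (a - 1) * y * δ / (1 + k) := by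
      rw [eq_div_iff hk1]; linear_combination h
    rw [← this, hM]; ring
  obtain ⟨Y, hY⟩ : ∃ Y, Y = -2 * a * (a - 1) * y / M := ⟨_, rfl⟩
  show (x, y, T) ∈ _
  rw [← hay]
  have hYM : Y * M = -2 * a * (a - 1) * y := by rw [hY]; field_simp
  refine V1_alg hE hx hy hn (Y := Y) ha1 hk rfl ?_ ?_ ?_ ?_
  · intro h
    apply hM1
    linear_combination M * h - δ * hYM
  · intro h
    apply hM2
    linear_combination M * h - δ * hYM
  · intro h
    rw [h] at hYM
    simp [ha0, ha1, hy0] at hYM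
  · rw [← hM, hYM]

lemma map_lerp (f : P3 →L[ℝ] ℝ) (p q : P3) (s : ℝ) : f (lerp p q s) = f p + s * (f q - f p) := by
  have : lerp p q s = p + s • (q - p) := by
    ext <;> simp [lerp]
  rw [this]; simp

lemma fin1 {E : Set P3} (hE : Mono E) (f : P3 →L[ℝ] ℝ) (h1 : f (1, 1, 1) = 1)
    (h2 : f (1, -1, -1) = -1) (hf : ((1, 0, 0) : P3) ∈ frontier E)
    (hs : ∀ v ∈ frontier E, f v = 0) : Half E := by
  have cov : ∀ v, f v ≠ 0 → v ∈ interior E ∪ interior Eᶜ := fun v hv =>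
    not_fr (fun h => hv (hs v h))
  have lin : IsLinearMap ℝ f := f.toLinearMap.isLinear
  have disj : Disjoint (interior E) (interior Eᶜ) := by
    apply Disjoint.mono interior_subset interior_subset; exact disjoint_compl_right
  have s1 := IsPreconnected.subset_or_subset isOpen_interior isOpen_interior disj
    (s := {v | 0 < f v}) (fun v hv => cov v (ne_of_gt hv)) (convex_halfSpace_gt lin 0).isPreconnected
  have s2 := IsPreconnected.subset_or_subset isOpen_interior isOpen_interior disj
    (s := {v | f v < 0}) (fun v hv => cov v (ne_of_lt hv)) (convex_halfSpace_lt lin 0).isPreconnected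
  have m1 : ((1, 1, 1) : P3) ∈ {v | 0 < f v} := by simp [h1]
  have m2 : ((1, -1, -1) : P3) ∈ {v | f v < 0} := by simp [h2]
  have hc : conn (1, 1, 1) (1, -1, -1) := by simp only [conn]; norm_num
  have hl : lerp (1, 1, 1) (1, -1, -1) (1/2) = (1, 0, 0) := by simp only [lerp]; norm_num
  rcases s1 with s1 | s1
  · have := beyond hE.1 (s1 m1) hc (s := 1/2) (by norm_num) (by norm_num) (by rw [hl]; exact hf)
    rcases s2 with s2 | s2
    · exact (disj.le_bot ⟨s2 m2, this⟩).elim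
    · exact ⟨f, map_lerp f, ⟨_, m1⟩, fun v => ⟨fun h => interior_subset (s1 h),
        fun h => interior_subset (s2 h)⟩⟩
  · have := beyond hE.2 (s1 m1) hc (s := 1/2) (by norm_num) (by norm_num)
      (by rw [hl, frontier_compl]; exact hf)
    rw [compl_compl] at this
    rcases s2 with s2 | s2
    · exact ⟨-f, map_lerp (-f), ⟨(1, -1, -1), by simp [h2]⟩,
        fun v => ⟨fun h => interior_subset (s2 (by simpa using h)),
        fun h => interior_subset (s1 (by simpa using h))⟩⟩
    · exact (disj.le_bot ⟨this, s2 m2⟩).elim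

lemma stage3 {E : Set P3} (hE : Mono E) (hx : ∀ x : ℝ, ((x, 0, 0) : P3) ∈ frontier E)
    (hy : ∀ y : ℝ, ((0, y, 0) : P3) ∈ frontier E) {p q t : ℝ} (hq : q ≠ 0) (ht : t ≠ 0)
    (hz : ((p, q, t) : P3) ∈ frontier E) : False := by
  have hκ : t / q ≠ 0 := div_ne_zero ht hq
  have A := isAut (a := t / q) (b := 0) (c := 0) (d := 1) (by simpa using hκ) (0, 0, 0)
  refine V1 (A.mono hE) (δ := (p * q / t - 1) / q) (fun x => ?_) (fun y => ?_) (fun y => ?_)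
  · rw [A.fro]; convert hx (t / q * x) using 1; simp [gA]
  · rw [A.fro]; convert hy y using 1; simp [gA]
  · have := line (A.mono hE) (p := (1, 0, 0)) (q := (p * q / t, q, q)) ?_ ?_ ?_ (y / q)
    · convert this using 1
      simp only [lerp, Prod.mk.injEq]
      refine ⟨?_, ?_, ?_⟩ <;> field_simp <;> ring
    · rw [A.fro]; convert hx (t / q) using 1; simp [gA]
    · rw [A.fro]; convert hz using 1; simp only [gA, Prod.mk.injEq]
      refine ⟨?_, ?_, ?_⟩ <;> field_simp <;> ring
    · simp only [conn]; ring

lemma stage2 {E : Set P3} (hE : Mono E) (hx : ∀ x : ℝ, ((x, 0, 0) : P3) ∈ frontier E)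
    (hy : ∀ y : ℝ, ((0, y, 0) : P3) ∈ frontier E) : Half E := by
  by_cases hs : ∀ v ∈ frontier E, v.2.2 = 0
  · exact fin1 hE ((ContinuousLinearMap.snd ℝ ℝ ℝ).comp (ContinuousLinearMap.snd ℝ ℝ (ℝ × ℝ)))
      (by simp) (by simp) (hx 1) (by simpa using hs)
  exfalso
  push Not at hs
  obtain ⟨⟨p, q, t⟩, hz, ht⟩ := hs
  simp only at ht
  have case2 : ∀ p t : ℝ, t ≠ 0 → p ≠ 0 → ((p, 0, t) : P3) ∈ frontier E → False := by
    intro p t ht hp hz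
    have := line hE hz (hy (-t / p)) (by simp only [conn]; field_simp; ring) (1/2)
    refine stage3 hE hx hy (p := p + 1/2 * (0 - p)) (q := 0 + 1/2 * (-t / p - 0))
      (t := t + 1/2 * (0 - t)) ?_ ?_ this
    · have : -t / p ≠ 0 := div_ne_zero (by simpa using ht) hp
      intro h; apply this; linarith
    · intro h; apply ht; linarith
  by_cases hq : q = 0
  · subst hq
    by_cases hp : p = 0
    · subst hp
      obtain ⟨u, v, huv, hl⟩ := lines_exist hE hz
      have h1 := hl 1
      simp only [ln] at h1
      by_cases hv : v = 0
      · have hu : u ≠ 0 := by rintro rfl; simp [hv] at huv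
        refine case2 u t ht hu ?_
        simpa [hv] using h1
      · refine stage3 hE hx hy (p := u) (q := v) (t := t) hv ht ?_
        simpa using h1
    · exact case2 p t ht hp hz
  · exact stage3 hE hx hy hq ht hz

lemma stage1 {E : Set P3} (hE : Mono E) (hx : ∀ x : ℝ, ((x, 0, 0) : P3) ∈ frontier E) : Half E := by
  by_cases hs : ∀ v ∈ frontier E, v.2.1 = 0
  · exact fin1 hE ((ContinuousLinearMap.fst ℝ ℝ ℝ).comp (ContinuousLinearMap.snd ℝ ℝ (ℝ × ℝ)))
      (by simp) (by simp) (hx 1) (by simpa using hs)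
  push Not at hs
  obtain ⟨⟨p, q, t⟩, hz, hq⟩ := hs
  simp only at hq
  have A := isAut (a := 1) (b := p - t / q) (c := 0) (d := q) (by simpa using hq) (t / q, 0, 0)
  apply A.half
  apply stage2 (A.mono hE)
  · intro x; rw [A.fro]; convert hx (t / q + x) using 1; simp [gA]
  · intro y
    have := line hE (hx (t / q)) hz (by simp only [conn]; field_simp; ring) y
    rw [A.fro]; convert this using 1; simp only [gA, lerp, Prod.mk.injEq]
    refine ⟨?_, ?_, ?_⟩ <;> field_simp <;> ring

theorem theorem3 {E : Set P3} (hE : Mono E) : E = ∅ ∨ E = univ ∨ Half E := by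
  by_cases hf : frontier E = ∅
  · have := isClopen_iff.1 (isClopen_iff_frontier_eq_empty.2 hf)
    tauto
  right; right
  obtain ⟨σ, hσ⟩ := nonempty_iff_ne_empty.2 hf
  obtain ⟨u, v, huv, hl⟩ := lines_exist hE hσ
  have A := isAut (a := u) (b := -v) (c := v) (d := u) (by nlinarith) σ
  apply A.half
  apply stage1 (A.mono hE)
  intro x
  rw [A.fro]
  convert hl x using 1
  simp only [gA, ln, Prod.mk.injEq]
  refine ⟨?_, ?_, ?_⟩ <;> ring

end HM

namespace HM
open Set Filter Topology

abbrev Vn (n : ℕ) := (Fin n → ℂ) × ℝ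

def BB {n : ℕ} (z w : Fin n → ℂ) : ℝ := (∑ j, z j * (starRingEnd ℂ) (w j)).im

variable {n : ℕ}

lemma BB_def (z w : Fin n → ℂ) : BB z w = ∑ j, ((z j).im * (w j).re - (z j).re * (w j).im) := by
  unfold BB
  rw [Complex.im_sum]
  refine Finset.sum_congr rfl fun j _ => ?_
  simp [Complex.mul_im]; ring

lemma heisMul_eq (p q : Vn n) : heisMul p q = (p.1 + q.1, p.2 + q.2 + 2 * BB p.1 q.1) := rfl

lemma BB_add_left (a b c : Fin n → ℂ) : BB (a + b) c = BB a c + BB b c := by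
  simp only [BB_def, ← Finset.sum_add_distrib]
  refine Finset.sum_congr rfl fun j _ => ?_
  simp; ring

lemma BB_add_right (a b c : Fin n → ℂ) : BB a (b + c) = BB a b + BB a c := by
  simp only [BB_def, ← Finset.sum_add_distrib]
  refine Finset.sum_congr rfl fun j _ => ?_
  simp; ring

lemma BB_smul_right (r : ℝ) (a b : Fin n → ℂ) : BB a (r • b) = r * BB a b := by
  simp only [BB_def, Finset.mul_sum]
  refine Finset.sum_congr rfl fun j _ => ?_
  simp; ring

lemma BB_smul_smul (c d : ℂ) (ζ : Fin n → ℂ) :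
    BB (c • ζ) (d • ζ) = (c.im * d.re - c.re * d.im) * ∑ j, Complex.normSq (ζ j) := by
  simp only [BB_def, Finset.mul_sum]
  refine Finset.sum_congr rfl fun j _ => ?_
  simp [Complex.normSq_apply]; ring

lemma heisMul_assoc (p q r : Vn n) : heisMul (heisMul p q) r = heisMul p (heisMul q r) := by
  simp only [heisMul_eq, BB_add_left, BB_add_right, Prod.mk.injEq]
  exact ⟨add_assoc _ _ _, by ring⟩

lemma BB_self (a : Fin n → ℂ) : BB a a = 0 := by
  rw [BB_def]; apply Finset.sum_eq_zero; intro j _; ring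

lemma heisMul_inv (p v : Vn n) : heisMul p (heisMul (-p) v) = v := by
  rw [← heisMul_assoc]
  have : heisMul p (-p) = 0 := by
    have h := BB_smul_right (-1) p.1 p.1
    simp only [neg_smul, one_smul, BB_self] at h
    simp only [heisMul_eq]
    ext <;> simp [h]
  rw [this]
  have h := BB_def 0 v.1
  simp at h
  simp [heisMul_eq, h]

lemma heisMul_cont (p : Vn n) : Continuous (heisMul p) := by
  unfold heisMul; fun_prop

def cc (P : P3) : ℂ := ⟨P.2.1, P.1⟩

def NS (ζ : Fin n → ℂ) : ℝ := ∑ j, Complex.normSq (ζ j)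

def sl (p : Vn n) (ζ : Fin n → ℂ) (P : P3) : Vn n :=
  (p.1 + cc P • ζ, p.2 + 2 * NS ζ * P.2.2 + 2 * BB p.1 (cc P • ζ))

lemma sl_eq (p : Vn n) (ζ : Fin n → ℂ) (P : P3) :
    sl p ζ P = heisMul p (cc P • ζ, 2 * NS ζ * P.2.2) := rfl

lemma cc_lerp (P Q : P3) (s : ℝ) : cc (lerp P Q s) = cc P + (s : ℂ) * (cc Q - cc P) := by
  apply Complex.ext <;> simp [cc, lerp]

lemma sl_lerp (p : Vn n) (ζ : Fin n → ℂ) (P Q : P3) (s : ℝ) :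
    sl p ζ (lerp P Q s) = sl p ζ P + s • (sl p ζ Q - sl p ζ P) := by
  have h : cc (lerp P Q s) • ζ = cc P • ζ + s • (cc Q • ζ + (-1:ℝ) • (cc P • ζ)) := by
    rw [cc_lerp]; ext j; simp; ring
  simp only [sl]
  rw [h]
  simp only [BB_add_right, BB_smul_right]
  ext j
  · simp; ring
  · simp [lerp]; ring

lemma sl_hor (p : Vn n) (ζ : Fin n → ℂ) {P Q : P3} (h : conn P Q) (s : ℝ) :
    sl p ζ (lerp P Q s) = heisMul (sl p ζ P) (s • ((cc Q - cc P) • ζ), 0) := by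
  have h1 : cc (lerp P Q s) • ζ = cc P • ζ + s • ((cc Q - cc P) • ζ) := by
    rw [cc_lerp]; ext j; simp; ring
  rw [heisMul_eq]
  simp only [sl]
  rw [h1]
  simp only [BB_add_right, BB_add_left, BB_smul_right, BB_smul_smul, Prod.mk.injEq]
  refine ⟨add_assoc _ _ _ |>.symm, ?_⟩
  simp only [conn] at h
  simp only [cc, lerp, NS, Complex.sub_re, Complex.sub_im]
  linear_combination 2 * (∑ j, Complex.normSq (ζ j)) * s * h

lemma sl_cont (p : Vn n) (ζ : Fin n → ℂ) : Continuous (sl p ζ) := by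
  have h : Continuous (fun P : P3 => cc P) := by
    have : (fun P : P3 => cc P) = fun P : P3 => (P.2.1 : ℂ) + (P.1 : ℂ) * Complex.I := by
      ext P; apply Complex.ext <;> simp [cc]
    rw [this]; fun_prop
  unfold sl BB
  fun_prop

lemma sl_HC {C : Set (Vn n)} (hC : HeisConvex C) (p : Vn n) (ζ : Fin n → ℂ) :
    HC (sl p ζ ⁻¹' C) := by
  intro P Q hP hQ hc s h0 h1
  show sl p ζ _ ∈ C
  rw [sl_hor p ζ hc]
  refine hC _ _ hP ?_ s h0 h1
  have := sl_hor p ζ hc 1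
  rw [lerp_one, one_smul] at this
  rw [← this]; exact hQ

lemma sl_Mono {C : Set (Vn n)} (hC : HeisConvex C ∧ HeisConvex Cᶜ) (p : Vn n) (ζ : Fin n → ℂ) :
    Mono (sl p ζ ⁻¹' C) := ⟨sl_HC hC.1 p ζ, sl_HC hC.2 p ζ⟩

lemma half_int_pos {E : Set P3} {f : P3 → ℝ} (f1 : ∀ p q s, f (lerp p q s) = f p + s * (f q - f p))
    (f2 : ∃ v, 0 < f v) (f3 : ∀ v, (0 < f v → v ∈ E) ∧ (f v < 0 → v ∉ E)) {P : P3}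
    (hP : P ∈ interior E) : 0 < f P := by
  by_contra hf
  obtain ⟨v, hv⟩ := f2
  have hc : Continuous (fun s : ℝ => lerp P v (-s)) := by unfold lerp; fun_prop
  have : ∀ᶠ s in 𝓝 (0:ℝ), lerp P v (-s) ∈ interior E := by
    apply hc.continuousAt.eventually_mem
    apply isOpen_interior.mem_nhds
    simpa [lerp_zero] using hP
  obtain ⟨s, hs, hs0⟩ := ((this.filter_mono nhdsWithin_le_nhds).and
    (eventually_mem_nhdsWithin : ∀ᶠ s in 𝓝[>] (0:ℝ), s ∈ Ioi (0:ℝ))).exists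
  refine (f3 _).2 ?_ (interior_subset hs)
  rw [f1]
  have : 0 < s := hs0
  nlinarith

lemma seg {E : Set (Vn n)} (hE : HeisConvex E ∧ HeisConvex Eᶜ) (hn : 1 ≤ n) {p q : Vn n}
    (hp : p ∈ interior E) (hq : q ∈ interior E) {s : ℝ} (h0 : 0 ≤ s) (h1 : s ≤ 1) :
    p + s • (q - p) ∈ E := by
  obtain ⟨ζ, P, Q, hP, hQ⟩ : ∃ ζ P Q, sl p ζ P = p ∧ sl p ζ Q = q := by
    have BB0 : BB p.1 (0 : Fin n → ℂ) = 0 := by simp [BB_def]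
    have pos : ∀ ζ : Fin n → ℂ, ζ ≠ 0 → NS ζ ≠ 0 := by
      intro ζ hζ h
      apply hζ
      unfold NS at h
      rw [Finset.sum_eq_zero_iff_of_nonneg (fun _ _ => Complex.normSq_nonneg _)] at h
      ext j
      simpa using h j (Finset.mem_univ _)
    have c0 : ∀ t, cc (0, 0, t) = 0 := fun t => by apply Complex.ext <;> simp [cc]
    have c1 : ∀ t, cc (0, 1, t) = 1 := fun t => by apply Complex.ext <;> simp [cc]
    have e0 : ∀ ζ : Fin n → ℂ, sl p ζ (0, 0, 0) = p := by
      intro ζ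
      simp [sl, c0, BB0]
    by_cases h : q.1 - p.1 = 0
    · have hz : (fun _ => 1 : Fin n → ℂ) ≠ 0 := by
        intro h
        have := congrFun h ⟨0, hn⟩
        simp at this
      refine ⟨fun _ => 1, (0, 0, 0), (0, 0, (q.2 - p.2) / (2 * NS (fun _ : Fin n => (1:ℂ)))), e0 _, ?_⟩
      have := pos _ hz
      simp only [sl, c0, zero_smul, BB0]
      refine Prod.ext ?_ ?_
      · simp; exact (sub_eq_zero.1 h).symm
      · simp only; field_simp; ring
    · refine ⟨q.1 - p.1, (0, 0, 0), (0, 1, (q.2 - p.2 - 2 * BB p.1 (q.1 - p.1)) / (2 * NS (q.1 - p.1))),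
        e0 _, ?_⟩
      have := pos _ h
      simp only [sl, c1, one_smul]
      refine Prod.ext ?_ ?_
      · simp
      · simp only; field_simp; ring
  have hPi : P ∈ interior (sl p ζ ⁻¹' E) :=
    preimage_interior_subset_interior_preimage (sl_cont p ζ) (by simpa [hP] using hp)
  have hQi : Q ∈ interior (sl p ζ ⁻¹' E) :=
    preimage_interior_subset_interior_preimage (sl_cont p ζ) (by simpa [hQ] using hq)
  have key : lerp P Q s ∈ sl p ζ ⁻¹' E := by
    rcases theorem3 (sl_Mono hE p ζ) with h | h | ⟨f, f1, f2, f3⟩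
    · rw [h] at hPi; simp at hPi
    · rw [h]; trivial
    · apply (f3 _).1
      have a := half_int_pos f1 f2 f3 hPi
      have b := half_int_pos f1 f2 f3 hQi
      rw [f1]
      rcases eq_or_lt_of_le h0 with h | h
      · rw [← h]; linarith
      · nlinarith
  have h2 : sl p ζ (lerp P Q s) ∈ E := key
  rwa [sl_lerp, hP, hQ] at h2

lemma int_convex {E : Set (Vn n)} (hE : HeisConvex E ∧ HeisConvex Eᶜ) (hn : 1 ≤ n) :
    Convex ℝ (interior E) := by
  intro x hx y hy a b ha hb hab
  rw [mem_interior_iff_mem_nhds]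
  have hc : ∀ w x : Vn n, Continuous (fun v : Vn n => v - w + x) := by intro w x; fun_prop
  set w := a • x + b • y with hw
  have e1 : ∀ᶠ v in 𝓝 w, v - w + x ∈ interior E :=
    (hc w x).continuousAt.eventually_mem (isOpen_interior.mem_nhds (by simpa using hx))
  have e2 : ∀ᶠ v in 𝓝 w, v - w + y ∈ interior E :=
    (hc w y).continuousAt.eventually_mem (isOpen_interior.mem_nhds (by simpa using hy))
  filter_upwards [e1, e2] with v h1 h2
  have := seg hE hn h1 h2 hb (by linarith)
  convert this using 1
  have : a = 1 - b := by linarith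
  rw [hw, this]
  module

lemma half_form {f : P3 → ℝ} (f1 : ∀ p q s, f (lerp p q s) = f p + s * (f q - f p)) :
    ∃ α β γ : ℝ, ∀ x y t, f (x, y, t) = f (0, 0, 0) + α * x + β * y + γ * t := by
  refine ⟨f (1, 0, 0) - f (0, 0, 0), f (0, 1, 0) - f (0, 0, 0), f (0, 0, 1) - f (0, 0, 0), ?_⟩
  intro x y t
  have a1 := f1 (0, 0, 0) (1, 0, 0) (2 * x)
  have a2 := f1 (0, 0, 0) (0, 1, 0) (4 * y)
  have a3 := f1 (0, 0, 0) (0, 0, 1) (4 * t)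
  have a4 := f1 (0, 4 * y, 0) (0, 0, 4 * t) (1 / 2)
  have a5 := f1 (2 * x, 0, 0) (0, 2 * y, 2 * t) (1 / 2)
  simp only [lerp] at a1 a2 a3 a4 a5
  ring_nf at a1 a2 a3 a4 a5 ⊢
  linarith

lemma slice_form {E : Set (Vn n)} (hE : HeisConvex E ∧ HeisConvex Eᶜ) {p : Vn n} (hp : p ∈ E)
    (j : Fin n) : ∃ α β γ : ℝ, (α ≠ 0 ∨ β ≠ 0 ∨ γ ≠ 0) ∧
      (∀ x y t : ℝ, 0 < α * x + β * y + γ * t → sl p (Pi.single j 1) (x, y, t) ∈ E) ∧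
      (α = 0 → β = 0 → 0 < γ → ∃ t < 0, heisMul p (0, 2 * t) ∉ E) := by
  have NS1 : NS (Pi.single j 1 : Fin n → ℂ) = 1 := by
    unfold NS
    rw [Finset.sum_eq_single j] <;> simp +contextual
  have c0 : ∀ t, cc (0, 0, t) = 0 := fun t => by apply Complex.ext <;> simp [cc]
  have v0 : ∀ t, sl p (Pi.single j 1) (0, 0, t) = heisMul p (0, 2 * t) := by
    intro t; rw [sl_eq, NS1, c0]; simp
  have p0 : heisMul p (0, 2 * 0) = p := by
    simp [heisMul_eq, BB_def]
  have m0 : ((0, 0, 0) : P3) ∈ sl p (Pi.single j 1) ⁻¹' E := by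
    show sl p _ _ ∈ E
    rw [v0, p0]; exact hp
  rcases theorem3 (sl_Mono hE p (Pi.single j 1)) with h | h | ⟨f, f1, ⟨v, f2⟩, f3⟩
  · rw [h] at m0; exact m0.elim
  · refine ⟨1, 0, 0, by simp, fun x y t _ => ?_, fun h => by simp at h⟩
    show (x, y, t) ∈ sl p (Pi.single j 1) ⁻¹' E
    rw [h]; trivial
  · obtain ⟨α, β, γ, hf⟩ := half_form f1
    have hd : 0 ≤ f (0, 0, 0) := by
      by_contra h; exact (f3 _).2 (not_le.1 h) m0
    by_cases hz : α = 0 ∧ β = 0 ∧ γ = 0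
    · obtain ⟨rfl, rfl, rfl⟩ := hz
      refine ⟨1, 0, 0, by simp, fun x y t _ => ?_, fun h => by simp at h⟩
      apply (f3 (x, y, t)).1
      obtain ⟨a, b, c⟩ := v
      rw [hf] at f2 ⊢
      linarith
    · refine ⟨α, β, γ, by tauto, fun x y t h => ?_, fun ha hb hc => ?_⟩
      · apply (f3 (x, y, t)).1
        rw [hf]; linarith
      · refine ⟨-(f (0, 0, 0) + 1) / γ, div_neg_of_neg_of_pos (by linarith) hc, ?_⟩
        rw [← v0]
        apply (f3 _).2
        rw [hf, ha, hb]
        field_simp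
        linarith

end HM

namespace HM
open Set Filter Topology

variable {n : ℕ}

lemma cone_mem {E : Set (Vn n)} (hE : HeisConvex E) (hn : 1 ≤ n) {p : Vn n}
    {α β γ : Fin n → ℝ}
    (h : ∀ j, ∀ x y t : ℝ, 0 < α j * x + β j * y + γ j * t → sl p (Pi.single j 1) (x, y, t) ∈ E)
    {c : Fin n → ℂ} {t : ℝ}
    (hc : ∀ j, 0 < α j * (n * (c j).im) + β j * (n * (c j).re) + γ j * (t / 2)) :
    heisMul p (c, t) ∈ E := by
  set S : Set (Fin n → ℝ) := {r | heisMul p (fun j => (r j : ℂ) * c j, t) ∈ E} with hS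
  have hconv : Convex ℝ S := by
    intro r hr r' hr' a b ha hb hab
    have key : ∀ s : ℝ, heisMul (heisMul p (fun j => (r j : ℂ) * c j, t))
        (s • (fun j => ((r' j - r j : ℝ) : ℂ) * c j), 0) =
        heisMul p (fun j => ((r j + s * (r' j - r j) : ℝ) : ℂ) * c j, t) := by
      intro s
      rw [heisMul_assoc]
      congr 1
      rw [heisMul_eq]
      have : BB (fun j => (r j : ℂ) * c j) (s • (fun j => ((r' j - r j : ℝ) : ℂ) * c j)) = 0 := by
        rw [BB_smul_right, BB_def, Finset.sum_eq_zero, mul_zero]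
        intro j _
        simp
        ring
      simp only [this]
      refine Prod.ext ?_ ?_
      · ext j
        simp
        ring
      · simp
    have h1 := hE _ (fun j => ((r' j - r j : ℝ) : ℂ) * c j) hr (by
      have := key 1
      rw [one_smul] at this
      rw [this]
      convert hr' using 4
      ring_nf
      exact Iff.rfl) b hb (by linarith)
    rw [key] at h1
    show heisMul p _ ∈ E
    convert h1 using 5
    have : a = 1 - b := by linarith
    simp [this]; ring
  have hnn : (n : ℝ) ≠ 0 := by positivity
  have hmem : ∀ j : Fin n, (Pi.single j (n : ℝ) : Fin n → ℝ) ∈ S := by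
    intro j
    have := h j _ _ _ (hc j)
    show heisMul p _ ∈ E
    convert this using 1
    have NS1 : NS (Pi.single j 1 : Fin n → ℂ) = 1 := by
      unfold NS
      rw [Finset.sum_eq_single j] <;> simp +contextual
    rw [sl_eq, NS1]
    congr 1
    refine Prod.ext ?_ ?_
    · ext k
      by_cases hk : k = j
      · subst hk
        apply Complex.ext <;> simp [cc]
      · simp [hk]
    · simp; ring
  have h1 := hconv.sum_mem (t := Finset.univ) (w := fun _ => (n : ℝ)⁻¹)
    (z := fun j : Fin n => (Pi.single j (n : ℝ) : Fin n → ℝ)) (fun _ _ => by positivity)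
    (by simp [hnn]) (fun j _ => hmem j)
  have h2 : (∑ j : Fin n, (n : ℝ)⁻¹ • (Pi.single j (n : ℝ) : Fin n → ℝ)) = fun _ => 1 := by
    ext k
    simp [Finset.sum_apply, Pi.single_apply, hnn]
  rw [h2] at h1
  simpa [hS] using h1

lemma I_n {E : Set (Vn n)} (hE : HeisConvex E ∧ HeisConvex Eᶜ) (hn : 1 ≤ n) {p : Vn n}
    (hp : p ∈ E) : p ∈ closure (interior E) := by
  choose α β γ hne hin hout using fun j => slice_form hE hp j
  have hnn : (n : ℝ) ≠ 0 := by positivity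
  -- the open cone
  set K : Set (Vn n) := {w | ∀ j, 0 < α j * (n * (w.1 j).im) + β j * (n * (w.1 j).re) + γ j * (w.2 / 2)}
    with hK
  have hKo : IsOpen K := by
    rw [hK, setOf_forall]
    refine isOpen_iInter_of_finite fun j => isOpen_lt continuous_const ?_
    have h1 : Continuous (fun w : Vn n => w.1 j) := by fun_prop
    have h2 := Complex.continuous_re.comp h1
    have h3 := Complex.continuous_im.comp h1
    simp only [Function.comp_def] at h2 h3
    fun_prop
  have hKE : ∀ w ∈ K, heisMul p w ∈ interior E := by
    intro w hw
    have : {v | heisMul (-p) v ∈ K} ⊆ E := by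
      intro v hv
      have := cone_mem hE.1 hn hin (c := (heisMul (-p) v).1) (t := (heisMul (-p) v).2) hv
      rwa [Prod.mk.eta, heisMul_inv] at this
    refine interior_maximal this (hKo.preimage (heisMul_cont _)) ?_
    show heisMul (-p) (heisMul p w) ∈ K
    have h := heisMul_inv (-p) w
    rw [neg_neg] at h
    rwa [h]
  have hsig : ∃ σ : ℝ, ∀ j, α j = 0 → β j = 0 → 0 < γ j * σ := by
    by_cases hex : ∃ k, α k = 0 ∧ β k = 0 ∧ γ k < 0
    · obtain ⟨k, hk1, hk2, hk3⟩ := hex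
      refine ⟨-1, fun j ha hb => ?_⟩
      by_contra hcon
      have hg : 0 < γ j := by
        rcases hne j with h | h | h
        · exact (h ha).elim
        · exact (h hb).elim
        · exact lt_of_le_of_ne (by linarith) (Ne.symm h)
      obtain ⟨t, ht, hnot⟩ := hout j ha hb hg
      apply hnot
      have := hin k 0 0 t (by rw [hk1, hk2]; nlinarith)
      have NS1 : NS (Pi.single k 1 : Fin n → ℂ) = 1 := by
        unfold NS
        rw [Finset.sum_eq_single k] <;> simp +contextual
      have c0 : cc (0, 0, t) = 0 := by apply Complex.ext <;> simp [cc]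
      rw [sl_eq, NS1, c0] at this
      simpa using this
    · refine ⟨1, fun j ha hb => ?_⟩
      push Not at hex
      have := hex j ha hb
      rcases hne j with h | h | h
      · exact (h ha).elim
      · exact (h hb).elim
      · rw [mul_one]; exact lt_of_le_of_ne this (Ne.symm h)
  obtain ⟨σ, hσ⟩ := hsig
  have hc : ∀ j, ∃ c : ℂ, 0 < α j * c.im + β j * c.re + γ j * σ := by
    intro j
    by_cases hab : α j = 0 ∧ β j = 0
    · exact ⟨0, by simpa using hσ j hab.1 hab.2⟩
    · have hpos : 0 < α j ^ 2 + β j ^ 2 := by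
        rcases not_and_or.1 hab with h | h <;> positivity
      set R := (|γ j * σ| + 1) / (α j ^ 2 + β j ^ 2) with hR
      refine ⟨⟨R * β j, R * α j⟩, ?_⟩
      have : R * (α j ^ 2 + β j ^ 2) = |γ j * σ| + 1 := by rw [hR]; field_simp
      have h2 := neg_abs_le (γ j * σ)
      simp only
      nlinarith
  choose c hc using hc
  set w0 : Vn n := (fun j => (n : ℝ)⁻¹ • c j, 2 * σ) with hw0
  have hw : ∀ ε : ℝ, 0 < ε → ε • w0 ∈ K := by
    intro ε hε j
    have : 0 < ε * (α j * (c j).im + β j * (c j).re + γ j * σ) := mul_pos hε (hc j)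
    convert this using 1
    simp [hw0]
    field_simp
  have hlim : Tendsto (fun ε : ℝ => heisMul p (ε • w0)) (𝓝[>] 0) (𝓝 p) := by
    have hcont : Continuous (fun ε : ℝ => heisMul p (ε • w0)) :=
      (heisMul_cont p).comp (by fun_prop)
    have h0 : heisMul p ((0:ℝ) • w0) = p := by simp [heisMul_eq, BB_def]
    have := (hcont.tendsto 0).mono_left (nhdsWithin_le_nhds (s := Ioi 0))
    rwa [h0] at this
  refine mem_closure_of_tendsto hlim ?_
  filter_upwards [self_mem_nhdsWithin] with ε hε
  exact hKE _ (hw ε hε)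

lemma dual_form (f : Vn n →L[ℝ] ℝ) : ∃ ν : Vn n, ∀ v : Vn n,
    f v = (∑ j, (v.1 j * (starRingEnd ℂ) (ν.1 j)).re) + v.2 * ν.2 := by
  refine ⟨(fun j => ⟨f (Pi.single j 1, 0), f (Pi.single j Complex.I, 0)⟩, f (0, 1)), fun v => ?_⟩
  have hv : v = (∑ j, ((v.1 j).re • ((Pi.single j 1, 0) : Vn n) +
      (v.1 j).im • ((Pi.single j Complex.I, 0) : Vn n))) + v.2 • ((0, 1) : Vn n) := by
    refine Prod.ext ?_ ?_
    · ext k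
      simp only [Prod.fst_add, Prod.fst_sum, Prod.smul_fst, Pi.add_apply, Finset.sum_apply,
        Pi.smul_apply, Pi.single_apply, smul_zero, Pi.zero_apply, add_zero]
      rw [Finset.sum_eq_single k]
      · apply Complex.ext <;> simp
      · intro j _ hj; simp [Ne.symm hj]
      · simp
    · simp [Prod.snd_sum]
  conv_lhs => rw [hv]
  rw [map_add, map_sum]
  congr 1
  · refine Finset.sum_congr rfl fun j _ => ?_
    rw [map_add, map_smul, map_smul]
    simp [Complex.mul_re]
  · rw [map_smul]; simp

end HM

theorem monotone_heisenberg_halfspace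
    (n : ℕ) (hn : 1 ≤ n) (E : Set ((Fin n → ℂ) × ℝ))
    (hE : HeisConvex E ∧ HeisConvex Eᶜ)
    (h1 : E ≠ ∅) (h2 : E ≠ Set.univ) :
    ∃ ν : (Fin n → ℂ) × ℝ, ν ≠ 0 ∧ ∃ c : ℝ,
      {v : (Fin n → ℂ) × ℝ |
          c < (∑ j, (v.1 j * (starRingEnd ℂ) (ν.1 j)).re) + v.2 * ν.2} ⊆ E ∧
      E ⊆ closure {v : (Fin n → ℂ) × ℝ |
          c < (∑ j, (v.1 j * (starRingEnd ℂ) (ν.1 j)).re) + v.2 * ν.2} := by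
  have hE' : HeisConvex Eᶜ ∧ HeisConvex Eᶜᶜ := ⟨hE.2, by rw [compl_compl]; exact hE.1⟩
  obtain ⟨a, ha⟩ := Set.nonempty_iff_ne_empty.2 h1
  obtain ⟨b, hb⟩ : ∃ b, b ∈ Eᶜ := by
    by_contra! h
    apply h2; ext v; simpa using h v
  have disj : Disjoint (interior Eᶜ) (interior E) :=
    (Disjoint.mono interior_subset interior_subset disjoint_compl_left)
  obtain ⟨f, u, hf1, hf2⟩ := geometric_hahn_banach_open_open (HM.int_convex hE' hn) isOpen_interior
    (HM.int_convex hE hn) isOpen_interior disj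
  have hEu : ∀ v ∈ E, u ≤ f v := by
    intro v hv
    have h : closure (interior E) ⊆ {v | u ≤ f v} :=
      closure_minimal (fun w hw => (hf2 w hw).le) (isClosed_le continuous_const f.continuous)
    exact h (HM.I_n hE hn hv)
  have hEcu : ∀ v ∈ Eᶜ, f v ≤ u := by
    intro v hv
    have h : closure (interior Eᶜ) ⊆ {v | f v ≤ u} :=
      closure_minimal (fun w hw => (hf1 w hw).le) (isClosed_le f.continuous continuous_const)
    exact h (HM.I_n hE' hn hv)
  obtain ⟨a', ha'⟩ : (interior E).Nonempty := closure_nonempty_iff.1 ⟨a, HM.I_n hE hn ha⟩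
  obtain ⟨b', hb'⟩ : (interior Eᶜ).Nonempty := closure_nonempty_iff.1 ⟨b, HM.I_n hE' hn hb⟩
  have ha'' := hf2 _ ha'
  have hb'' := hf1 _ hb'
  obtain ⟨ν, hν⟩ := HM.dual_form f
  refine ⟨ν, ?_, u, ?_, ?_⟩
  · rintro rfl
    rw [hν] at ha'' hb''
    simp at ha'' hb''
    linarith
  · intro v hv
    by_contra hvE
    have := hEcu v hvE
    rw [hν] at this
    exact absurd hv (not_lt.2 this)
  · intro v hv
    simp only [← hν]
    have hlim : Filter.Tendsto (fun ε : ℝ => v + ε • (a' - v)) (nhdsWithin 0 (Set.Ioc 0 1)) (nhds v) := by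
      have hcont : Continuous (fun ε : ℝ => v + ε • (a' - v)) := by fun_prop
      have := (hcont.tendsto 0).mono_left (nhdsWithin_le_nhds (s := Set.Ioc 0 1))
      simpa using this
    haveI : (nhdsWithin (0:ℝ) (Set.Ioc 0 1)).NeBot := by
      rw [nhdsWithin_Ioc_eq_nhdsGT (by norm_num)]; infer_instance
    refine mem_closure_of_tendsto hlim ?_
    filter_upwards [self_mem_nhdsWithin] with ε hε
    have h3 := hEu v hv
    simp only [Set.mem_setOf_eq, map_add, map_smul, map_sub, smul_eq_mul]
    have := hε.1
    have := hε.2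
    nlinarith
end
end

section
/- Assume the Hörmander condition. Then there exist q ∈ ℕ and a constant c > 0 such that for every r > 0, the set {Σ_{k=1}^q Q(z_k,ζ_k) : z₁,ζ₁,…,z_q,ζ_q ∈ Z with Euclidean norm of the vector (z₁,ζ₁,…,z_q,ζ_q) ∈ Z^{2q} less than r} contains the Euclidean open ball in T centered at 0 of radius c r². -/
/- `Z = ℝ^m`, `T = ℝ^ℓ`, `Q : Z × Z → T` bilinear skew-symmetric satisfying the
Hörmander condition. The map `H_{2q}(z₁,ζ₁,…,z_q,ζ_q) = Σ_k Q(z_k,ζ_k)` is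
quadratically open at the origin. -/

noncomputable section

/-- **Quadratic openness at the origin of `H_{2q}`.** -/
theorem H2q_open_at_origin
    (m l : ℕ) (hm : 0 < m) (hl : 0 < l)
    (Q : ZS m →ₗ[ℝ] ZS m →ₗ[ℝ] TS l)
    (hskew : ∀ z ζ : ZS m, Q z ζ = - Q ζ z)
    (hHorm : Submodule.span ℝ (Set.range fun zz : ZS m × ZS m => Q zz.1 zz.2) = ⊤) :
    ∃ q : ℕ, ∃ c > (0 : ℝ), ∀ r : ℝ, 0 < r →
      ∀ t : TS l, ‖t‖ < c * r ^ 2 →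
        ∃ zv ζv : Fin q → ZS m,
          Real.sqrt (∑ k, (‖zv k‖ ^ 2 + ‖ζv k‖ ^ 2)) < r ∧
          ∑ k, Q (zv k) (ζv k) = t := by
  classical
  obtain ⟨f, hf, hspan, hli⟩ := Submodule.exists_fun_fin_finrank_span_eq ℝ
    (Set.range fun zz : ZS m × ZS m => Q zz.1 zz.2)
  generalize Module.finrank ℝ (Submodule.span ℝ
    (Set.range fun zz : ZS m × ZS m => Q zz.1 zz.2)) = n at f hf hspan hli
  choose p hp using hf
  rw [hHorm] at hspan
  let b : Module.Basis (Fin n) ℝ (TS l) := Module.Basis.mk hli hspan.ge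
  have hb : ∀ i, b i = Q (p i).1 (p i).2 := fun i => by
    simp [b, Module.Basis.mk_apply, ← hp i]
  let L : TS l →L[ℝ] (Fin n → ℝ) := LinearMap.toContinuousLinearMap b.equivFun.toLinearMap
  have hL : ∀ t i, |b.repr t i| ≤ ‖L‖ * ‖t‖ := fun t i =>
    (norm_le_pi_norm (L t) i).trans (L.le_opNorm t)
  set M : ℝ := ∑ i, (‖(p i).1‖ ^ 2 + ‖(p i).2‖ ^ 2) with hM
  have hM0 : 0 ≤ M := Finset.sum_nonneg fun i _ => by positivity
  have hK0 : 0 ≤ ‖L‖ * M := mul_nonneg (norm_nonneg _) hM0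
  refine ⟨n, 1 / (‖L‖ * M + 1), by positivity, fun r hr t ht => ?_⟩
  have hts : ‖L‖ * ‖t‖ * M < r ^ 2 := by
    have h1 : ‖t‖ * (‖L‖ * M + 1) < r ^ 2 := by
      rw [one_div, inv_mul_eq_div, lt_div_iff₀ (by positivity)] at ht
      exact ht
    nlinarith [norm_nonneg t]
  refine ⟨fun i => (SignType.sign (b.repr t i) * √|b.repr t i|) • (p i).1,
    fun i => √|b.repr t i| • (p i).2, ?_, ?_⟩
  · rw [Real.sqrt_lt' hr]
    refine lt_of_le_of_lt ?_ hts
    rw [hM, Finset.mul_sum]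
    refine Finset.sum_le_sum fun i _ => ?_
    have h2 : (√|b.repr t i|) ^ 2 = |b.repr t i| := Real.sq_sqrt (abs_nonneg _)
    have h3 : ((SignType.sign (b.repr t i) : SignType) : ℝ) ^ 2 ≤ 1 := by
      cases SignType.sign (b.repr t i) <;> simp
    rw [norm_smul, norm_smul, mul_pow, mul_pow, Real.norm_eq_abs, Real.norm_eq_abs,
      sq_abs, sq_abs, mul_pow, h2, mul_add]
    have h4 := hL t i
    have h5 : ((SignType.sign (b.repr t i) : SignType) : ℝ) ^ 2 * |b.repr t i| ≤ ‖L‖ * ‖t‖ :=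
      (mul_le_of_le_one_left (abs_nonneg _) h3).trans h4
    gcongr
  · conv_rhs => rw [← b.sum_repr t]
    refine Finset.sum_congr rfl fun i _ => ?_
    rw [hb, map_smul, map_smul, LinearMap.smul_apply, smul_smul]
    congr 1
    calc _ = ((SignType.sign (b.repr t i) : SignType) : ℝ) *
          (√|b.repr t i| * √|b.repr t i|) := by ring
      _ = _ := by rw [Real.mul_self_sqrt (abs_nonneg _), sign_mul_abs]
end
end
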